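/- Let (L,p) be a simple Brascamp–Lieb datum on ℝ^n, and let ε > 0. If B = (B_1,…,B_m) is a family of C² maps, defined on a neighbourhood of a point x₀ ∈ ℝ^n, each of which is a submersion at x₀ with dB_j(x₀) = L_j for 1 ≤ j ≤ m, then there exists a neighbourhood U of x₀ such that for all nonnegative integrable functions f_j : ℝ^{n_j} → [0,∞), ∫_U ∏_{j=1}^m (f_j ∘ B_j)^{p_j} ≤ (1+ε) · BL(L,p) · ∏_{j=1}^m (∫_{ℝ^{n_j}} f_j)^{p_j}. -/

import Mathlib

/-!
# The nonlinear Brascamp–Lieb inequality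

The proof is an induction on scales, driven by Gaussians that nearly extremise the linear inequality.

*Frames.* A `Frame` of linear maps `A_j` is a choice of linear changes of variables turning every
`A_j` into a coisometry `T_j`. Its defect is at most `η` if `∑ p_j T_j* T_j ≤ 1 + η`, and its value is
the product of determinants by which the Brascamp–Lieb quotient changes. Defect zero is the geometric
case, where the inequality holds with constant one (`geometric_BL`). This is proved by a
hypercontractivity argument: for Gaussian mollifications it becomes the estimate `GH` for mixtures of
exponentials at a scale `c`; rotating a pair of Gaussian variables reduces scale `c` to scale `c / √2`
at the cost of squaring the constant (`GH_split`), a Taylor expansion gives the constant `1 + O(c⁴)`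
(`GH_one`), and iteration gives the constant `1` (`GH_all`). A frame of defect `η` is completed to a
geometric datum by rank one maps, which costs only a power `O(η)` of the parameters of the inputs
(`near_geometric`, `frame_bound`).

*Uniform frames.* Squeezing a frame along a direction in which its defect is large increases its value
(`step`, `path`). Conversely the value cannot grow by more than `exp (C η)` when the defect is `η`
(`duality`): by Cauchy–Binet the Gram determinants are mixtures of exponentials, and these are bounded
below by Jensen's inequality, once the Cauchy–Binet weights, which nearly satisfy a system of linear
relations, are replaced by weights satisfying it exactly (`exists_relation`). Hence the defect can be
halved at a bounded cost in logarithmic length (`Frame.refine`). Starting from a nearly optimal frame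
of `L`, every datum close to `L` gets, for every large `s`, a frame with condition number at most
`exp s`, defect `O(s⁻²)`, and value at most `(1 + t) BL(L, p)` (`uniform_frames`).

*Scales.* Gaussian mollifications are log-quasiconvex (`LC`): their values are controlled by averages
over balls smaller than the mollification scale, so that on a small ball a map close to its affine
approximation can be replaced by it (`near_affine_scale`). On a ball of radius `exp (-16 s)`, a partition
into Gaussians at scale `exp (-24 s)` adapted to a frame of condition number `exp s` reduces the
inequality to balls of radius `exp (-22 s)` and an inequality for log-quasiconvex inputs (`scale_step`).
This loses a factor `exp (C / s)` and replaces `s` by `11/8 s`, so the losses form a geometric series,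
and the inequality holds with constant `(1 + t) exp (4 C / s) BL(L, p)` on a ball whose radius does not
depend on the mollification (`good_all`). Letting the mollification scale tend to zero (`approx`)
gives the theorem (`nonlinear_core`).
-/

open MeasureTheory ENNReal Real Metric Matrix

noncomputable section

abbrev Euc (n : ℕ) := EuclideanSpace ℝ (Fin n)

noncomputable def BLnum {m n : ℕ} (nn : Fin m → ℕ)
    (L : ∀ j, Euc n →L[ℝ] Euc (nn j)) (p : Fin m → ℝ)
    (f : ∀ j, Euc (nn j) → ℝ) : ℝ≥0∞ :=
  ∫⁻ x, ∏ j, (ENNReal.ofReal (f j (L j x))) ^ (p j)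

noncomputable def BLden {m : ℕ} (nn : Fin m → ℕ) (p : Fin m → ℝ)
    (f : ∀ j, Euc (nn j) → ℝ) : ℝ≥0∞ :=
  ∏ j, (ENNReal.ofReal (∫ y, f j y)) ^ (p j)

noncomputable def BLfun {m n : ℕ} (nn : Fin m → ℕ)
    (L : ∀ j, Euc n →L[ℝ] Euc (nn j)) (p : Fin m → ℝ)
    (f : ∀ j, Euc (nn j) → ℝ) : ℝ≥0∞ := BLnum nn L p f / BLden nn p f

def BLinput {m : ℕ} (nn : Fin m → ℕ) (f : ∀ j, Euc (nn j) → ℝ) : Prop :=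
  (∀ j, ∀ x, 0 ≤ f j x) ∧ (∀ j, Integrable (f j)) ∧ (∀ j, 0 < ∫ y, f j y)

noncomputable def BLconst {m n : ℕ} (nn : Fin m → ℕ)
    (L : ∀ j, Euc n →L[ℝ] Euc (nn j)) (p : Fin m → ℝ) : ℝ≥0∞ :=
  sInf {C : ℝ≥0∞ | ∀ f : ∀ j, Euc (nn j) → ℝ,
    (∀ j, ∀ x, 0 ≤ f j x) → (∀ j, Integrable (f j)) →
    BLnum nn L p f ≤ C * BLden nn p f}

noncomputable def BLsup {m n : ℕ} (nn : Fin m → ℕ)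
    (L : ∀ j, Euc n →L[ℝ] Euc (nn j)) (p : Fin m → ℝ) : ℝ≥0∞ :=
  ⨆ f ∈ {f | BLinput nn f}, BLfun nn L p f

def BLsimple {m n : ℕ} (nn : Fin m → ℕ)
    (L : ∀ j, Euc n →L[ℝ] Euc (nn j)) (p : Fin m → ℝ) : Prop :=
  (∀ j, p j ∈ Set.Icc (0:ℝ) 1) ∧
  ∃ hp : ∑ j, p j * (nn j : ℝ) = (n : ℝ),
    (⟨p, hp⟩ : {q : Fin m → ℝ // ∑ j, q j * (nn j : ℝ) = (n : ℝ)}) ∈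
      interior {q : {q : Fin m → ℝ // ∑ j, q j * (nn j : ℝ) = (n : ℝ)} |
        (∀ j, q.1 j ∈ Set.Icc (0:ℝ) 1) ∧ BLconst nn L q.1 < ⊤}

def KConstOn {k : ℕ} (κ μ : ℝ) (Ω : Set (Euc k)) (f : Euc k → ℝ) : Prop :=
  ∀ x ∈ Ω, ∀ y : Euc k, dist x y ≤ μ → f x ≤ κ * f y

def MemL1On {k : ℕ} (Ω : Set (Euc k)) (μ κ : ℝ) (f : Euc k → ℝ) : Prop :=
  (∀ x, 0 ≤ f x) ∧ Integrable f ∧ KConstOn κ μ Ω f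

noncomputable def Udelta {n : ℕ} (δ : ℝ) (y : Euc n) : Set (Euc n) :=
  Metric.closedBall y (δ * Real.log (1/δ))

noncomputable def nlBLconst {m n : ℕ} (nn : Fin m → ℕ)
    (B : ∀ j, Euc n → Euc (nn j)) (p : Fin m → ℝ)
    (u : Euc n) (δ μ κ : ℝ) : ℝ≥0∞ :=
  sInf {C : ℝ≥0∞ | ∀ f : ∀ j, Euc (nn j) → ℝ,
    (∀ j, MemL1On (B j '' Metric.closedBall u (2 * (δ * Real.log (1/δ)))) μ κ (f j)) →
    ∫⁻ y in Udelta δ u, ∏ j, (ENNReal.ofReal (f j (B j y))) ^ (p j) ≤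
      C * ∏ j, (ENNReal.ofReal (∫ z, f j z)) ^ (p j)}

noncomputable def gauss {k : ℕ} (A : Matrix (Fin k) (Fin k) ℝ) (x : Euc k) : ℝ :=
  Real.sqrt A.det * Real.exp (-Real.pi * (A.mulVec x ⬝ᵥ x))

noncomputable def gaussScaled {k : ℕ} (A : Matrix (Fin k) (Fin k) ℝ) (ρ : ℝ) (x : Euc k) : ℝ :=
  ρ ^ (-(k : ℝ)) * gauss A (ρ⁻¹ • x)

end

/-! ### Gaussians and mollification -/

namespace NBL
open Filter Topology
open scoped RealInnerProductSpace

/-- The normalised Gaussian `exp (-π ‖x‖²)`, as an extended nonnegative real. -/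
noncomputable def gE {k : ℕ} (x : Euc k) : ℝ≥0∞ := ENNReal.ofReal (Real.exp (-π * ‖x‖ ^ 2))

lemma measurable_gE {k : ℕ} : Measurable (gE : Euc k → ℝ≥0∞) := by
  unfold gE; fun_prop

lemma gE_ne_top {k : ℕ} (x : Euc k) : gE x ≠ ⊤ := ENNReal.ofReal_ne_top

lemma gE_ne_zero {k : ℕ} (x : Euc k) : gE x ≠ 0 := by
  unfold gE; simp [Real.exp_pos]

lemma lintegral_gE (k : ℕ) : ∫⁻ x : Euc k, gE x = 1 := by
  unfold gE
  have h := GaussianFourier.integral_rexp_neg_mul_sq_norm (V := Euc k) Real.pi_pos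
  rw [div_self Real.pi_ne_zero, Real.one_rpow] at h
  have hi : Integrable (fun v : Euc k => rexp (-π * ‖v‖ ^ 2)) := by
    by_contra hcon
    rw [integral_undef hcon] at h; norm_num at h
  rw [← ofReal_integral_eq_lintegral_ofReal hi (ae_of_all _ fun x => (Real.exp_pos _).le), h]
  simp

/-- Linear change of variables. -/
lemma lintegral_comp_equiv {k : ℕ} (g : Euc k ≃L[ℝ] Euc k) (f : Euc k → ℝ≥0∞) :
    ∫⁻ x, f x = ENNReal.ofReal |LinearMap.det (g : Euc k →ₗ[ℝ] Euc k)| * ∫⁻ x, f (g x) := by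
  have hdet : LinearMap.det (g : Euc k →ₗ[ℝ] Euc k) ≠ 0 := by
    have := g.toLinearEquiv.isUnit_det'
    exact this.ne_zero
  have h1 := Measure.map_linearMap_addHaar_eq_smul_addHaar (volume : Measure (Euc k)) hdet
  have h2 : ∫⁻ x, f (g x) = ∫⁻ y, f y ∂(Measure.map (g : Euc k →ₗ[ℝ] Euc k) volume) :=
    (lintegral_map_equiv f g.toHomeomorph.toMeasurableEquiv).symm
  rw [h2, h1, lintegral_smul_measure, smul_eq_mul, ← mul_assoc, ← ENNReal.ofReal_mul (abs_nonneg _),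
    ← abs_mul, mul_inv_cancel₀ hdet]
  simp

lemma lintegral_comp_smul {k : ℕ} (s : ℝ) (hs : 0 < s) (f : Euc k → ℝ≥0∞) :
    ∫⁻ x, f x = ENNReal.ofReal (s ^ k) * ∫⁻ x, f (s • x) := by
  have h := lintegral_comp_equiv (k := k) (ContinuousLinearEquiv.smulLeft (Units.mk0 s hs.ne')) f
  have hd : LinearMap.det ((ContinuousLinearEquiv.smulLeft (Units.mk0 s hs.ne') :
      Euc k ≃L[ℝ] Euc k) : Euc k →ₗ[ℝ] Euc k) = s ^ k := by
    have : ((ContinuousLinearEquiv.smulLeft (Units.mk0 s hs.ne') :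
      Euc k ≃L[ℝ] Euc k) : Euc k →ₗ[ℝ] Euc k) = s • LinearMap.id := by
      ext x : 1; rfl
    rw [this, LinearMap.det_smul]; simp
  rw [hd, abs_of_pos (by positivity)] at h
  exact h

/-- The Gaussian Laplace transform. -/
lemma lintegral_gE_exp {k : ℕ} (v : Euc k) :
    ∫⁻ x : Euc k, gE x * ENNReal.ofReal (rexp (2 * π * ⟪v, x⟫)) =
      ENNReal.ofReal (rexp (π * ‖v‖ ^ 2)) := by
  have h : ∀ x : Euc k, gE x * ENNReal.ofReal (rexp (2 * π * ⟪v, x⟫)) =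
      ENNReal.ofReal (rexp (π * ‖v‖ ^ 2)) * gE (x - v) := by
    intro x
    unfold gE
    rw [← ENNReal.ofReal_mul (Real.exp_pos _).le, ← ENNReal.ofReal_mul (Real.exp_pos _).le,
      ← Real.exp_add, ← Real.exp_add, @norm_sub_sq_real, real_inner_comm]
    congr 2; ring
  simp_rw [h]
  rw [lintegral_const_mul _ (by exact measurable_gE.comp (measurable_id.sub_const v)),
    lintegral_sub_right_eq_self (fun x => gE x) v, lintegral_gE, mul_one]

/-- Gaussian mollification of `h` at scale `s`. -/
noncomputable def smooth {k : ℕ} (s : ℝ) (h : Euc k → ℝ≥0∞) (z : Euc k) : ℝ≥0∞ :=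
  ∫⁻ w, h (z + s • w) * gE w

lemma measurable_smooth {k : ℕ} (s : ℝ) {h : Euc k → ℝ≥0∞} (hh : Measurable h) :
    Measurable (smooth s h) := by
  unfold smooth
  apply Measurable.lintegral_prod_right' (f := fun q : Euc k × Euc k => h (q.1 + s • q.2) * gE q.2)
  have := measurable_gE (k := k)
  fun_prop

lemma lintegral_smooth {k : ℕ} (s : ℝ) {h : Euc k → ℝ≥0∞} (hh : Measurable h) :
    ∫⁻ z, smooth s h z = ∫⁻ z, h z := by
  unfold smooth
  have hg := measurable_gE (k := k)
  rw [lintegral_lintegral_swap (by fun_prop)]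
  have : ∀ w : Euc k, ∫⁻ z, h (z + s • w) * gE w = (∫⁻ z, h z) * gE w := by
    intro w
    rw [lintegral_mul_const _ (by fun_prop), lintegral_add_right_eq_self h]
  simp_rw [this]
  rw [lintegral_const_mul _ hg, lintegral_gE, mul_one]

lemma smooth_eq {k : ℕ} {s : ℝ} (hs : 0 < s) (h : Euc k → ℝ≥0∞) (z : Euc k) :
    smooth s h z = ENNReal.ofReal ((s⁻¹) ^ k) * ∫⁻ w, h w * gE (s⁻¹ • (w - z)) := by
  rw [smooth, lintegral_comp_smul s⁻¹ (inv_pos.2 hs)]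
  congr 1
  rw [← lintegral_sub_right_eq_self _ z]
  congr 1 with w
  rw [smul_inv_smul₀ hs.ne']; simp

variable {ι : Type} [Fintype ι] {nn : ι → ℕ}

lemma prod_liminf_le {κ : Type*} (s : Finset κ) (u : κ → ℕ → ℝ≥0∞) :
    ∏ j ∈ s, liminf (u j) atTop ≤ liminf (fun i => ∏ j ∈ s, u j i) atTop := by
  classical
  induction s using Finset.induction_on with
  | empty => simp
  | insert a s ha ih =>
    simp_rw [Finset.prod_insert ha]
    exact (mul_le_mul_right ih _).trans (ENNReal.le_liminf_mul)

lemma rpow_liminf {p : ℝ} (hp : 0 < p) (u : ℕ → ℝ≥0∞) :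
    (liminf u atTop) ^ p = liminf (fun i => u i ^ p) atTop := by
  have := OrderIso.liminf_apply (f := (atTop : Filter ℕ)) (u := u) (ENNReal.orderIsoRpow p hp)
  simpa using this

lemma le_liminf_smooth {k : ℕ} {h : Euc k → ℝ≥0∞} (hl : LowerSemicontinuous h) (z : Euc k) :
    h z ≤ liminf (fun i : ℕ => smooth ((i : ℝ) + 1)⁻¹
      ((closedBall (0 : Euc k) i).indicator h) z) atTop := by
  have hm : Measurable h := hl.measurable
  have hg := measurable_gE (k := k)
  have h1 : ∀ w : Euc k, h z ≤ liminf (fun i : ℕ =>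
      (closedBall (0 : Euc k) i).indicator h (z + ((i : ℝ) + 1)⁻¹ • w)) atTop := by
    intro w
    refine le_of_forall_lt fun c hc => ?_
    obtain ⟨c', hc1, hc2⟩ := exists_between hc
    refine hc1.trans_le (le_liminf_of_le (by isBoundedDefault) ?_)
    have ht : Tendsto (fun i : ℕ => z + ((i : ℝ) + 1)⁻¹ • w) atTop (𝓝 z) := by
      have : Tendsto (fun i : ℕ => ((i : ℝ) + 1)⁻¹) atTop (𝓝 0) := by
        simpa using tendsto_one_div_add_atTop_nhds_zero_nat (𝕜 := ℝ)
      simpa using (this.smul_const w).const_add z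
    have hev := ht.eventually (hl z c' hc2)
    obtain ⟨N, hN⟩ := exists_nat_ge (‖z‖ + ‖w‖)
    filter_upwards [hev, eventually_ge_atTop N] with i hi hiN
    rw [Set.indicator_of_mem]
    · exact hi.le
    · rw [mem_closedBall_zero_iff]
      have hiN' : (N : ℝ) ≤ i := by exact_mod_cast hiN
      calc ‖z + ((i : ℝ) + 1)⁻¹ • w‖ ≤ ‖z‖ + ‖((i : ℝ) + 1)⁻¹ • w‖ := norm_add_le _ _
        _ ≤ ‖z‖ + ‖w‖ := by
          gcongr
          rw [norm_smul, Real.norm_of_nonneg (by positivity)]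
          refine mul_le_of_le_one_left (norm_nonneg _) (inv_le_one_of_one_le₀ ?_)
          have : (0 : ℝ) ≤ i := by positivity
          linarith
        _ ≤ i := by linarith
  calc h z = ∫⁻ w : Euc k, h z * gE w := by
        rw [lintegral_const_mul _ hg, lintegral_gE, mul_one]
    _ ≤ ∫⁻ w : Euc k, liminf (fun i : ℕ =>
        (closedBall (0 : Euc k) i).indicator h (z + ((i : ℝ) + 1)⁻¹ • w) * gE w) atTop := by
        refine lintegral_mono fun w => ?_
        calc h z * gE w ≤ liminf (fun i : ℕ =>
            (closedBall (0 : Euc k) i).indicator h (z + ((i : ℝ) + 1)⁻¹ • w)) atTop *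
              liminf (fun _ : ℕ => gE w) atTop := by
              rw [liminf_const]; exact mul_le_mul_left (h1 w) _
          _ ≤ _ := ENNReal.le_liminf_mul
    _ ≤ _ := by
        unfold smooth
        apply lintegral_liminf_le
        intro i
        have : Measurable ((closedBall (0 : Euc k) (i:ℝ)).indicator h) :=
          hm.indicator measurableSet_closedBall
        fun_prop

/-- Multilinear inequalities need only be verified for Gaussian mollifications of compactly
supported functions. -/
theorem approx {X : Type} [MeasurableSpace X] (ν : Measure X) (φ : ∀ j, X → Euc (nn j))
    (hφ : ∀ j, Measurable (φ j)) (p : ι → ℝ) (hp : ∀ j, 0 < p j) (K : ℝ≥0∞) (hK : K ≠ ⊤)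
    (H : ∀ s : ℝ, 0 < s → ∀ h : ∀ j, Euc (nn j) → ℝ≥0∞, (∀ j, Measurable (h j)) →
      (∀ j, ∃ R : ℝ, ∀ z, R < ‖z‖ → h j z = 0) → (∀ j, ∫⁻ z, h j z ≠ ⊤) →
      ∫⁻ x, ∏ j, (smooth s (h j) (φ j x)) ^ p j ∂ν ≤ K * ∏ j, (∫⁻ z, h j z) ^ p j)
    (f : ∀ j, Euc (nn j) → ℝ≥0∞) (hf : ∀ j, Measurable (f j)) (hfi : ∀ j, ∫⁻ z, f j z ≠ ⊤) :
    ∫⁻ x, ∏ j, (f j (φ j x)) ^ p j ∂ν ≤ K * ∏ j, (∫⁻ z, f j z) ^ p j := by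
  have key : ∀ e : ℝ≥0∞, e ≠ 0 → e ≠ ⊤ → ∫⁻ x, ∏ j, (f j (φ j x)) ^ p j ∂ν ≤
      K * ∏ j, ((∫⁻ z, f j z) + e) ^ p j := by
    intro e he _
    choose h hfh hlsc hIntg using fun j =>
      exists_le_lowerSemicontinuous_lintegral_ge (μ := volume) (f j) (hf j) he
    have hm : ∀ j, Measurable (h j) := fun j => (hlsc j).measurable
    have hfin : ∀ (i : ℕ) (j : ι),
        ∫⁻ z, (closedBall (0 : Euc (nn j)) (i : ℝ)).indicator (h j) z ≤ (∫⁻ z, f j z) + e :=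
      fun i j => (lintegral_mono (fun z => Set.indicator_le_self _ _ _)).trans (hIntg j)
    calc ∫⁻ x, ∏ j, (f j (φ j x)) ^ p j ∂ν
        ≤ ∫⁻ x, liminf (fun i : ℕ => ∏ j, (smooth ((i : ℝ) + 1)⁻¹
          ((closedBall (0 : Euc (nn j)) i).indicator (h j)) (φ j x)) ^ p j) atTop ∂ν := by
          refine lintegral_mono fun x => ?_
          refine le_trans ?_ (prod_liminf_le _ _)
          refine Finset.prod_le_prod' fun j _ => ?_
          rw [← rpow_liminf (hp j)]
          exact ENNReal.rpow_le_rpow ((hfh j _).trans (le_liminf_smooth (hlsc j) _)) (hp j).le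
      _ ≤ liminf (fun i : ℕ => ∫⁻ x, ∏ j, (smooth ((i : ℝ) + 1)⁻¹
          ((closedBall (0 : Euc (nn j)) i).indicator (h j)) (φ j x)) ^ p j ∂ν) atTop := by
          refine lintegral_liminf_le fun i => ?_
          refine Finset.measurable_fun_prod _ fun j _ => ?_
          exact ((measurable_smooth _ ((hm j).indicator measurableSet_closedBall)).comp
            (hφ j)).pow_const _
      _ ≤ liminf (fun _ : ℕ => K * ∏ j, ((∫⁻ z, f j z) + e) ^ p j) atTop := by
          refine liminf_le_liminf (Eventually.of_forall fun i => ?_)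
          refine (H _ (by positivity) _ (fun j => (hm j).indicator measurableSet_closedBall)
            (fun j => ⟨i, fun z hz => ?_⟩) (fun j => ?_)).trans ?_
          · rw [Set.indicator_of_notMem]; simpa using hz
          · exact ((hfin i j).trans_lt (by simp [hfi j, lt_top_iff_ne_top, *])).ne
          · gcongr with j _
            · exact (hp j).le
            · exact hfin i j
      _ = _ := liminf_const _
  have ht : Tendsto (fun i : ℕ => K * ∏ j, ((∫⁻ z, f j z) + ((i : ℝ≥0∞) + 1)⁻¹) ^ p j) atTop
      (𝓝 (K * ∏ j, (∫⁻ z, f j z) ^ p j)) := by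
    refine ENNReal.Tendsto.const_mul ?_ (Or.inr hK)
    refine ENNReal.tendsto_finsetProd_of_ne_top _ (fun j _ => ?_) (fun j _ => ?_)
    · refine (ENNReal.continuous_rpow_const.tendsto _).comp ?_
      have h0 : Tendsto (fun i : ℕ => ((i : ℝ≥0∞) + 1)⁻¹) atTop (𝓝 0) := by
        have := ENNReal.tendsto_inv_nat_nhds_zero.comp (tendsto_add_atTop_nat 1)
        refine this.congr fun i => ?_
        simp
      simpa using h0.const_add (∫⁻ z, f j z)
    · exact ENNReal.rpow_ne_top_of_nonneg (hp j).le (hfi j)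
  exact ge_of_tendsto' ht fun i => key _ (by simp) (by simp)
end NBL

namespace NBL
open Filter Topology
open scoped RealInnerProductSpace
variable {ι : Type} [Fintype ι] {nn : ι → ℕ} {n : ℕ}

/-! ### Hypercontractivity for exponential mixtures -/

/-- Invariance of the Gaussian measure on pairs under rotation by `π/4`. -/
lemma gauss_rot {k : ℕ} (F : Euc k → ℝ≥0∞) (hF : Measurable F) :
    ∫⁻ x, gE x * F x =
      ∫⁻ b : Euc k, ∫⁻ a : Euc k, gE a * gE b * F ((√2)⁻¹ • (a + b)) := by
  have hg := measurable_gE (k := k)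
  have h2 : (0 : ℝ) < √2 := by positivity
  have h1 : ∀ b : Euc k, ∫⁻ a : Euc k, gE a * gE b * F ((√2)⁻¹ • (a + b)) =
      ∫⁻ x : Euc k, ENNReal.ofReal (√2 ^ k) * (gE (√2 • b - x) * (gE x * F x)) := by
    intro b
    rw [← lintegral_sub_right_eq_self _ b, lintegral_comp_smul (√2) h2,
      ← lintegral_const_mul _ (by fun_prop)]
    congr 1 with x
    congr 1
    have e1 : (√2)⁻¹ • (√2 • x - b + b) = x := by
      rw [sub_add_cancel, inv_smul_smul₀ h2.ne']
    rw [e1, ← mul_assoc]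
    congr 1
    unfold gE
    rw [← ENNReal.ofReal_mul (Real.exp_pos _).le, ← ENNReal.ofReal_mul (Real.exp_pos _).le,
      ← Real.exp_add, ← Real.exp_add, @norm_sub_sq_real, @norm_sub_sq_real, norm_smul, norm_smul,
      mul_pow, mul_pow, Real.norm_of_nonneg h2.le, Real.sq_sqrt (by norm_num), inner_smul_left,
      inner_smul_left, real_inner_comm x b]
    congr 2
    simp only [conj_trivial]
    ring
  simp_rw [h1]
  rw [lintegral_lintegral_swap (by fun_prop)]
  congr 1 with x
  have h3 : ∀ b : Euc k, ENNReal.ofReal (√2 ^ k) * (gE (√2 • b - x) * (gE x * F x)) =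
      (ENNReal.ofReal (√2 ^ k) * (gE x * F x)) * gE (√2 • b - x) := fun b => by ring
  simp_rw [h3]
  rw [lintegral_const_mul _ (by fun_prop), mul_comm (ENNReal.ofReal (√2 ^ k)), mul_assoc,
    ← lintegral_comp_smul (√2) h2 (fun b => gE (b - x)), lintegral_sub_right_eq_self (fun x => gE x) x,
    lintegral_gE, mul_one]

/-- The estimate `∫ γ ∏ E_j(T_j x)^{p_j} ≤ C ∏ (∫ e^{π c² |ξ|²} dμ_j)^{p_j}` for all exponential
mixtures `E_j(y) = ∫ e^{2 π c ⟨ξ, y⟩} dμ_j(ξ)` with `μ_j` carried by the unit ball. -/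
def GH (T : ∀ j, Euc n →L[ℝ] Euc (nn j)) (p : ι → ℝ) (c : ℝ) (C : ℝ≥0∞) : Prop :=
  ∀ μ : ∀ j, Measure (Euc (nn j)), (∀ j, IsFiniteMeasure (μ j)) →
    (∀ j, ∀ᵐ ξ ∂μ j, ‖ξ‖ ≤ 1) →
    ∫⁻ x, gE x * ∏ j, (∫⁻ ξ, ENNReal.ofReal (rexp (2 * π * c * ⟪ξ, T j x⟫)) ∂μ j) ^ p j ≤
      C * ∏ j, (∫⁻ ξ, ENNReal.ofReal (rexp (π * c ^ 2 * ‖ξ‖ ^ 2)) ∂μ j) ^ p j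

lemma isFinite_tilt {k : ℕ} (μ : Measure (Euc k)) [IsFiniteMeasure μ]
    (hμ : ∀ᵐ ξ ∂μ, ‖ξ‖ ≤ 1) (φ : Euc k → ℝ) (hφ : Continuous φ) :
    IsFiniteMeasure (μ.withDensity fun ξ => ENNReal.ofReal (φ ξ)) := by
  obtain ⟨M, hM⟩ := (isCompact_closedBall (0 : Euc k) 1).exists_bound_of_continuousOn hφ.continuousOn
  refine isFiniteMeasure_withDensity ?_
  refine ne_of_lt (lt_of_le_of_lt (lintegral_mono_ae (g := fun _ => ENNReal.ofReal M) ?_) ?_)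
  · filter_upwards [hμ] with ξ hξ
    exact ENNReal.ofReal_le_ofReal ((le_abs_self _).trans (hM ξ (by simpa using hξ)))
  · simp [ENNReal.mul_lt_top, measure_lt_top]

lemma measurable_mix {k : ℕ} (μ : Measure (Euc k)) [IsFiniteMeasure μ] (c : ℝ)
    (T : Euc n →L[ℝ] Euc k) :
    Measurable fun x => ∫⁻ ξ, ENNReal.ofReal (rexp (2 * π * c * ⟪ξ, T x⟫)) ∂μ := by
  apply Measurable.lintegral_prod_right'
    (f := fun q : Euc n × Euc k => ENNReal.ofReal (rexp (2 * π * c * ⟪q.2, T q.1⟫)))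
  have : Continuous fun q : Euc n × Euc k => rexp (2 * π * c * ⟪q.2, T q.1⟫) := by fun_prop
  exact this.measurable.ennreal_ofReal

lemma measurable_gmix (μ : ∀ j, Measure (Euc (nn j))) (hfin : ∀ j, IsFiniteMeasure (μ j)) (c : ℝ)
    (T : ∀ j, Euc n →L[ℝ] Euc (nn j)) (p : ι → ℝ) : Measurable fun x => gE x *
      ∏ j, (∫⁻ ξ, ENNReal.ofReal (rexp (2 * π * c * ⟪ξ, T j x⟫)) ∂μ j) ^ p j :=
  measurable_gE.mul (Finset.measurable_fun_prod _ fun j _ => (measurable_mix (μ j) c (T j)).pow_const _)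

/-- A standard Gaussian variable is written as `(a + b) / √2` with `a`, `b` independent; for
fixed `b` the exponential `e^{2π c ⟨ξ, T b⟩ / √2}` is absorbed into the mixing measures, and the estimate
at scale `c / √2` is applied first in `a`, then in `b`. -/
lemma GH_split (T : ∀ j, Euc n →L[ℝ] Euc (nn j)) (p : ι → ℝ)
    (c : ℝ) (C : ℝ≥0∞) (h : GH T p (c / √2) C) : GH T p c (C * C) := by
  intro μ hfin hsupp
  have hg := measurable_gE (k := n)
  have h2 : (0 : ℝ) < √2 := by positivity
  set c' := c / √2 with hc'
  have hcc : c' ^ 2 + c' ^ 2 = c ^ 2 := by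
    rw [hc', div_pow, Real.sq_sqrt (by norm_num)]; ring
  have hmeas : Measurable fun x => ∏ j,
      (∫⁻ ξ, ENNReal.ofReal (rexp (2 * π * c * ⟪ξ, T j x⟫)) ∂μ j) ^ p j :=
    Finset.measurable_fun_prod _ fun j _ => (measurable_mix (μ j) c (T j)).pow_const _
  rw [gauss_rot _ hmeas]
  -- tilting by `e^{2πc'⟨ξ, T b⟩}`
  let tb : ∀ j, Euc n → Measure (Euc (nn j)) := fun j b =>
    (μ j).withDensity fun ξ => ENNReal.ofReal (rexp (2 * π * c' * ⟪ξ, T j b⟫))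
  have hin : ∀ b, ∫⁻ a, gE a * gE b * ∏ j, (∫⁻ ξ, ENNReal.ofReal
      (rexp (2 * π * c * ⟪ξ, T j ((√2)⁻¹ • (a + b))⟫)) ∂μ j) ^ p j ≤
      gE b * (C * ∏ j, (∫⁻ ξ, ENNReal.ofReal (rexp (π * c' ^ 2 * ‖ξ‖ ^ 2)) *
        ENNReal.ofReal (rexp (2 * π * c' * ⟪ξ, T j b⟫)) ∂μ j) ^ p j) := by
    intro b
    have h1 := h (fun j => tb j b)
      (fun j => isFinite_tilt (μ j) (hsupp j) _ (by fun_prop))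
      (fun j => (withDensity_absolutelyContinuous _ _).ae_le (hsupp j))
    have e1 : ∀ a, gE a * gE b * ∏ j, (∫⁻ ξ, ENNReal.ofReal
      (rexp (2 * π * c * ⟪ξ, T j ((√2)⁻¹ • (a + b))⟫)) ∂μ j) ^ p j =
        gE b * (gE a * ∏ j, (∫⁻ ξ, ENNReal.ofReal (rexp (2 * π * c' * ⟪ξ, T j a⟫)) ∂(tb j b)) ^ p j) := by
      intro a
      rw [mul_comm (gE a), mul_assoc]
      congr 3 with j
      congr 1
      rw [lintegral_withDensity_eq_lintegral_mul _ (by fun_prop) (by fun_prop)]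
      congr 1 with ξ
      simp only [Pi.mul_apply]
      rw [← ENNReal.ofReal_mul (Real.exp_pos _).le, ← Real.exp_add, map_smul, inner_smul_right,
        map_add, inner_add_right, hc']
      congr 2
      field_simp
      ring
    simp_rw [e1]
    have hft : ∀ j, IsFiniteMeasure (tb j b) := fun j =>
      isFinite_tilt (μ j) (hsupp j) (fun ξ => rexp (2 * π * c' * ⟪ξ, T j b⟫)) (by fun_prop)
    rw [lintegral_const_mul _ (measurable_gmix _ hft c' T p)]
    · refine mul_le_mul_right (h1.trans (le_of_eq ?_)) _
      congr 2 with j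
      congr 1
      rw [lintegral_withDensity_eq_lintegral_mul _ (by fun_prop) (by fun_prop)]
      congr 1 with ξ
      simp only [Pi.mul_apply]
      rw [mul_comm]
  refine (lintegral_mono hin).trans ?_
  have h1 := h (fun j => (μ j).withDensity fun ξ => ENNReal.ofReal (rexp (π * c' ^ 2 * ‖ξ‖ ^ 2)))
      (fun j => isFinite_tilt (μ j) (hsupp j) _ (by fun_prop))
      (fun j => (withDensity_absolutelyContinuous _ _).ae_le (hsupp j))
  have e2 : ∀ b, gE b * (C * ∏ j, (∫⁻ ξ, ENNReal.ofReal (rexp (π * c' ^ 2 * ‖ξ‖ ^ 2)) *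
        ENNReal.ofReal (rexp (2 * π * c' * ⟪ξ, T j b⟫)) ∂μ j) ^ p j) =
      C * (gE b * ∏ j, (∫⁻ ξ, ENNReal.ofReal (rexp (2 * π * c' * ⟪ξ, T j b⟫))
        ∂((μ j).withDensity fun ξ => ENNReal.ofReal (rexp (π * c' ^ 2 * ‖ξ‖ ^ 2)))) ^ p j) := by
    intro b
    rw [mul_left_comm]
    congr 3 with j
    rw [lintegral_withDensity_eq_lintegral_mul _ (by fun_prop) (by fun_prop)]
    rfl
  simp_rw [e2]
  have hft : ∀ j, IsFiniteMeasure ((μ j).withDensity fun ξ =>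
      ENNReal.ofReal (rexp (π * c' ^ 2 * ‖ξ‖ ^ 2))) := fun j =>
    isFinite_tilt (μ j) (hsupp j) (fun ξ => rexp (π * c' ^ 2 * ‖ξ‖ ^ 2)) (by fun_prop)
  rw [lintegral_const_mul _ (measurable_gmix _ hft c' T p), mul_assoc C C]
  · refine mul_le_mul_right (h1.trans (le_of_eq ?_)) _
    congr 2 with j
    rw [lintegral_withDensity_eq_lintegral_mul _ (by fun_prop) (by fun_prop)]
    congr 2 with ξ
    simp only [Pi.mul_apply]
    rw [← ENNReal.ofReal_mul (Real.exp_pos _).le, ← Real.exp_add, ← hcc]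
    congr 2; ring

end NBL

/-! ### First order estimates for mixtures -/

namespace NBL
open Filter Topology
open scoped RealInnerProductSpace
variable {ι : Type} [Fintype ι] {nn : ι → ℕ} {n : ℕ}

lemma integrable_supp {k : ℕ} {F : Type} [NormedAddCommGroup F] (μ : Measure (Euc k))
    [IsFiniteMeasure μ] (hμ : ∀ᵐ ξ ∂μ, ‖ξ‖ ≤ 1) (φ : Euc k → F) (hφ : Continuous φ) :
    Integrable φ μ := by
  have h1 : μ.restrict (closedBall 0 1) = μ :=
    Measure.restrict_eq_self_of_ae_mem (by filter_upwards [hμ] with ξ hξ; simpa using hξ)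
  rw [← h1]
  exact hφ.continuousOn.integrableOn_compact (isCompact_closedBall _ _)

lemma lintegral_gE_exp_norm_lt_top (k : ℕ) (A : ℝ) :
    ∫⁻ x : Euc k, gE x * ENNReal.ofReal (rexp (A * ‖x‖)) < ⊤ := by
  have hb : ∀ x : Euc k, gE x * ENNReal.ofReal (rexp (A * ‖x‖)) ≤
      ENNReal.ofReal (rexp (A ^ 2 / (2 * π))) * gE ((√2)⁻¹ • x) := by
    intro x
    unfold gE
    rw [← ENNReal.ofReal_mul (Real.exp_pos _).le, ← ENNReal.ofReal_mul (Real.exp_pos _).le,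
      ← Real.exp_add, ← Real.exp_add]
    refine ENNReal.ofReal_le_ofReal (Real.exp_le_exp.2 ?_)
    rw [norm_smul, mul_pow, norm_inv, inv_pow, Real.norm_of_nonneg (by positivity),
      Real.sq_sqrt (by norm_num)]
    have : A ^ 2 / (2 * π) - A * ‖x‖ + π / 2 * ‖x‖ ^ 2 = (A - π * ‖x‖) ^ 2 / (2 * π) := by
      field_simp; ring
    have h2 : 0 ≤ (A - π * ‖x‖) ^ 2 / (2 * π) := by positivity
    linarith
  have hg := measurable_gE (k := k)
  have h3 := lintegral_comp_smul (k := k) (√2)⁻¹ (by positivity) gE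
  rw [lintegral_gE] at h3
  refine (lintegral_mono hb).trans_lt ?_
  rw [lintegral_const_mul _ (by fun_prop)]
  refine ENNReal.mul_lt_top ENNReal.ofReal_lt_top ?_
  rw [lt_top_iff_ne_top]
  intro htop
  rw [htop, ENNReal.mul_top] at h3
  · simp at h3
  · simp

lemma lintegral_gE_poly_exp_lt_top (k : ℕ) (a b A : ℝ) (ha : 0 ≤ a) (hb : 0 ≤ b) :
    ∫⁻ x : Euc k, gE x * ENNReal.ofReal ((a * (‖x‖ + b)) ^ 4 * rexp (A * (a * (‖x‖ + b)))) < ⊤ := by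
  have hle : ∀ x : Euc k, gE x * ENNReal.ofReal ((a * (‖x‖ + b)) ^ 4 * rexp (A * (a * (‖x‖ + b)))) ≤
      ENNReal.ofReal (24 * rexp ((1 + A) * a * b)) *
        (gE x * ENNReal.ofReal (rexp (((1 + A) * a) * ‖x‖))) := by
    intro x
    rw [mul_left_comm (ENNReal.ofReal _)]
    refine mul_le_mul_right ?_ _
    rw [← ENNReal.ofReal_mul (by positivity)]
    refine ENNReal.ofReal_le_ofReal ?_
    have h1 := Real.pow_div_factorial_le_exp (a * (‖x‖ + b)) (by positivity) 4
    have h2 : (a * (‖x‖ + b)) ^ 4 ≤ 24 * rexp (a * (‖x‖ + b)) := by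
      have : ((4 : ℕ).factorial : ℝ) = 24 := by norm_num [Nat.factorial]
      rw [this, div_le_iff₀ (by norm_num)] at h1
      linarith
    calc _ ≤ 24 * rexp (a * (‖x‖ + b)) * rexp (A * (a * (‖x‖ + b))) := by gcongr
      _ = _ := by
        rw [mul_assoc, mul_assoc, ← Real.exp_add, ← Real.exp_add]; congr 2; ring
  refine (lintegral_mono hle).trans_lt ?_
  have hg := measurable_gE (k := k)
  rw [lintegral_const_mul _ (by fun_prop)]
  exact ENNReal.mul_lt_top ENNReal.ofReal_lt_top (lintegral_gE_exp_norm_lt_top k _)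

lemma exp_le_quad {s : ℝ} (hs : |s| ≤ 1) : rexp s ≤ 1 + s + s ^ 2 := by
  have := Real.abs_exp_sub_one_sub_id_le hs
  have := (abs_le.1 this).2
  linarith

lemma exp_sub_le {t τ : ℝ} (ht : |t| ≤ τ) : rexp t ≤ 1 + t + τ ^ 2 * rexp τ := by
  have h1 : rexp t - 1 - t ≤ t ^ 2 * rexp |t| := by
    have ha : rexp t * (1 - t) ≤ 1 := by
      have := Real.add_one_le_exp (-t)
      calc rexp t * (1 - t) ≤ rexp t * rexp (-t) := by gcongr; linarith
        _ = 1 := by rw [← Real.exp_add]; simp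
    rcases le_total 0 t with h0 | h0
    · rw [abs_of_nonneg h0]
      nlinarith
    · have hb := Real.add_one_le_exp t
      have hc : 1 ≤ rexp |t| := Real.one_le_exp (abs_nonneg _)
      nlinarith [sq_nonneg t]
  have h2 : t ^ 2 * rexp |t| ≤ τ ^ 2 * rexp τ := by
    have : t ^ 2 ≤ τ ^ 2 := sq_le_sq' (by linarith [neg_abs_le t]) ((le_abs_self t).trans ht)
    gcongr
  linarith

/-- A product of powers of numbers `≥ 1`, expanded to first order with a quadratic error. -/
lemma prod_rpow_le (p G : ι → ℝ) (hp : ∀ j, 0 ≤ p j) (hG : ∀ j, 1 ≤ G j) {δ σ : ℝ}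
    (h1 : ∀ j, G j ≤ 1 + δ) (h2 : ∀ j, G j ≤ rexp σ) :
    ∏ j, G j ^ p j ≤ 1 + ∑ j, p j * (G j - 1) +
      ((∑ j, p j) * δ) ^ 2 * rexp ((∑ j, p j) * σ) := by
  set v := ∑ j, p j * Real.log (G j) with hv
  have hpos : ∀ j, 0 < G j := fun j => lt_of_lt_of_le one_pos (hG j)
  have e1 : ∏ j, G j ^ p j = rexp v := by
    rw [hv, Real.exp_sum]
    refine Finset.prod_congr rfl fun j _ => ?_
    rw [Real.rpow_def_of_pos (hpos j), mul_comm]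
  have hv0 : 0 ≤ v := Finset.sum_nonneg fun j _ => mul_nonneg (hp j) (Real.log_nonneg (hG j))
  have hvw : v ≤ ∑ j, p j * (G j - 1) :=
    Finset.sum_le_sum fun j _ => mul_le_mul_of_nonneg_left (Real.log_le_sub_one_of_pos (hpos j)) (hp j)
  have hvd : v ≤ (∑ j, p j) * δ := by
    rw [Finset.sum_mul]
    refine hvw.trans (Finset.sum_le_sum fun j _ => mul_le_mul_of_nonneg_left ?_ (hp j))
    linarith [h1 j]
  have hvs : v ≤ (∑ j, p j) * σ := by
    rw [Finset.sum_mul]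
    refine (Finset.sum_le_sum fun j _ => mul_le_mul_of_nonneg_left ?_ (hp j))
    rw [← Real.log_exp σ]
    exact Real.log_le_log (hpos j) (h2 j)
  have h3 := exp_sub_le (t := v) (τ := v) (by rw [abs_of_nonneg hv0])
  have h4 : v ^ 2 * rexp v ≤ ((∑ j, p j) * δ) ^ 2 * rexp ((∑ j, p j) * σ) := by gcongr
  rw [e1]; linarith

/-- Jensen's inequality for `exp` along `‖ξ‖²`, with the mean and the variance separated. -/
lemma jensen_sq {k : ℕ} (μ : Measure (Euc k)) [IsProbabilityMeasure μ] (hμ : ∀ᵐ ξ ∂μ, ‖ξ‖ ≤ 1)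
    (a : ℝ) :
    rexp (a * (‖∫ ξ, ξ ∂μ‖ ^ 2 + ∫ ξ, ‖ξ - ∫ ξ, ξ ∂μ‖ ^ 2 ∂μ)) ≤ ∫ ξ, rexp (a * ‖ξ‖ ^ 2) ∂μ := by
  set m := ∫ ξ, ξ ∂μ with hm
  have hV : ∫ ξ, ‖ξ - m‖ ^ 2 ∂μ = ∫ ξ, ‖ξ‖ ^ 2 ∂μ - ‖m‖ ^ 2 := by
    have : ∀ ξ : Euc k, ‖ξ - m‖ ^ 2 = ‖ξ‖ ^ 2 - 2 * ⟪m, ξ⟫ + ‖m‖ ^ 2 := fun ξ => by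
      rw [@norm_sub_sq_real, real_inner_comm]
    simp_rw [this]
    rw [integral_add, integral_sub, integral_const_mul, integral_inner, ← hm]
    · simp; ring
    all_goals exact integrable_supp μ hμ _ (by fun_prop)
  set t0 := a * (‖m‖ ^ 2 + ∫ ξ, ‖ξ - m‖ ^ 2 ∂μ) with ht0
  have ht0' : t0 = a * ∫ ξ, ‖ξ‖ ^ 2 ∂μ := by rw [ht0, hV]; ring
  have h1 : ∀ ξ : Euc k, rexp t0 * (1 + (a * ‖ξ‖ ^ 2 - t0)) ≤ rexp (a * ‖ξ‖ ^ 2) := by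
    intro ξ
    have h := Real.add_one_le_exp (a * ‖ξ‖ ^ 2 - t0)
    calc _ ≤ rexp t0 * rexp (a * ‖ξ‖ ^ 2 - t0) := by gcongr; linarith
      _ = _ := by rw [← Real.exp_add]; congr 1; ring
  have h2 : ∫ ξ, rexp t0 * (1 + (a * ‖ξ‖ ^ 2 - t0)) ∂μ = rexp t0 := by
    rw [integral_const_mul, integral_add, integral_sub, integral_const_mul, ht0']
    · simp
    all_goals exact integrable_supp μ hμ _ (by fun_prop)
  rw [← h2]
  exact integral_mono (integrable_supp μ hμ _ (by fun_prop)) (integrable_supp μ hμ _ (by fun_prop)) h1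

/-- First order bound for the Gaussian average of a centred exponential mixture. -/
lemma centred_gauss {k : ℕ} (μ : Measure (Euc k)) [IsProbabilityMeasure μ] (hμ : ∀ᵐ ξ ∂μ, ‖ξ‖ ≤ 1)
    (T : Euc n →L[ℝ] Euc k) (hT : ∀ ζ, ‖ContinuousLinearMap.adjoint T ζ‖ ≤ ‖ζ‖)
    (hT' : ∀ x, ‖T x‖ ≤ ‖x‖) (c : ℝ) (hc : 0 ≤ c) (a : Euc n) (P : ℝ) (hP : 0 ≤ P)
    (ha : ‖a‖ ≤ c * (1 + P)) (hcs : 4 * π * c ^ 2 * (2 + P) ≤ 1) :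
    ∫⁻ x, gE x * ENNReal.ofReal (∫ ξ, rexp (2 * π * c * ⟪ξ - ∫ ξ, ξ ∂μ, T (x + a)⟫) ∂μ) ≤
      ENNReal.ofReal (1 + π * c ^ 2 * ∫ ξ, ‖ξ - ∫ ξ, ξ ∂μ‖ ^ 2 ∂μ + (4 * π * (2 + P)) ^ 2 * c ^ 4) := by
  set m := ∫ ξ, ξ ∂μ with hm
  have hmn : ‖m‖ ≤ 1 := by
    have := norm_integral_le_of_norm_le_const hμ
    simpa using this
  have hg := measurable_gE (k := n)
  set s : Euc k → ℝ := fun ξ => π * c ^ 2 * ‖ξ - m‖ ^ 2 + 2 * π * c * ⟪ξ - m, T a⟫ with hs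
  have hsb : ∀ ξ : Euc k, ‖ξ‖ ≤ 1 → |s ξ| ≤ 4 * π * c ^ 2 * (2 + P) := by
    intro ξ hξ
    have h1 : ‖ξ - m‖ ≤ 2 := (norm_sub_le _ _).trans (by linarith)
    have h2 : |⟪ξ - m, T a⟫| ≤ 2 * (c * (1 + P)) :=
      (abs_real_inner_le_norm _ _).trans
        (mul_le_mul h1 ((hT' a).trans ha) (norm_nonneg _) (by norm_num))
    have h3 : ‖ξ - m‖ ^ 2 ≤ 4 := by nlinarith [norm_nonneg (ξ - m)]
    calc |s ξ| ≤ |π * c ^ 2 * ‖ξ - m‖ ^ 2| + |2 * π * c * ⟪ξ - m, T a⟫| := abs_add_le _ _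
      _ = π * c ^ 2 * ‖ξ - m‖ ^ 2 + 2 * π * c * |⟪ξ - m, T a⟫| := by
        rw [abs_of_nonneg (by positivity), abs_mul (2 * π * c), abs_of_nonneg (a := 2 * π * c) (by positivity)]
      _ ≤ π * c ^ 2 * 4 + 2 * π * c * (2 * (c * (1 + P))) := by gcongr
      _ = _ := by ring
  have hcont : Continuous s := by fun_prop
  have h1 : ∀ x, gE x * ENNReal.ofReal (∫ ξ, rexp (2 * π * c * ⟪ξ - m, T (x + a)⟫) ∂μ) =
      ∫⁻ ξ, gE x * ENNReal.ofReal (rexp (2 * π * c * ⟪ξ - m, T (x + a)⟫)) ∂μ := by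
    intro x
    rw [lintegral_const_mul _ (by fun_prop), ofReal_integral_eq_lintegral_ofReal
      (integrable_supp μ hμ _ (by fun_prop)) (ae_of_all _ fun _ => (Real.exp_pos _).le)]
  simp_rw [h1]
  rw [lintegral_lintegral_swap]
  swap
  · have : Continuous fun q : Euc n × Euc k => rexp (2 * π * c * ⟪q.2 - m, T (q.1 + a)⟫) := by fun_prop
    exact ((hg.comp measurable_fst).mul this.measurable.ennreal_ofReal).aemeasurable
  have h2 : ∀ ξ, ∫⁻ x, gE x * ENNReal.ofReal (rexp (2 * π * c * ⟪ξ - m, T (x + a)⟫)) ≤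
      ENNReal.ofReal (rexp (s ξ)) := by
    intro ξ
    have e : ∀ x, gE x * ENNReal.ofReal (rexp (2 * π * c * ⟪ξ - m, T (x + a)⟫)) =
        ENNReal.ofReal (rexp (2 * π * c * ⟪ξ - m, T a⟫)) * (gE x * ENNReal.ofReal
          (rexp (2 * π * ⟪c • ContinuousLinearMap.adjoint T (ξ - m), x⟫))) := by
      intro x
      rw [mul_left_comm, ← ENNReal.ofReal_mul (Real.exp_pos _).le, ← Real.exp_add,
        inner_smul_left, ContinuousLinearMap.adjoint_inner_left, map_add, inner_add_right]
      congr 3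
      simp only [conj_trivial]; ring
    simp_rw [e]
    rw [lintegral_const_mul _ (by fun_prop), lintegral_gE_exp,
      ← ENNReal.ofReal_mul (Real.exp_pos _).le, ← Real.exp_add]
    refine ENNReal.ofReal_le_ofReal (Real.exp_le_exp.2 ?_)
    rw [norm_smul, mul_pow, Real.norm_of_nonneg hc, hs]
    have := hT (ξ - m)
    have h3 : ‖ContinuousLinearMap.adjoint T (ξ - m)‖ ^ 2 ≤ ‖ξ - m‖ ^ 2 := by gcongr
    have h4 : π * (c ^ 2 * ‖ContinuousLinearMap.adjoint T (ξ - m)‖ ^ 2) ≤ π * (c ^ 2 * ‖ξ - m‖ ^ 2) := by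
      gcongr
    simp only; linarith
  refine (lintegral_mono h2).trans ?_
  rw [← ofReal_integral_eq_lintegral_ofReal (integrable_supp μ hμ _ (by fun_prop))
    (ae_of_all _ fun _ => (Real.exp_pos _).le)]
  refine ENNReal.ofReal_le_ofReal ?_
  have h5 : ∫ ξ, rexp (s ξ) ∂μ ≤ ∫ ξ, (1 + s ξ + (4 * π * (2 + P)) ^ 2 * c ^ 4) ∂μ := by
    refine integral_mono_ae (integrable_supp μ hμ _ (by fun_prop))
      (integrable_supp μ hμ _ (by fun_prop)) ?_
    filter_upwards [hμ] with ξ hξ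
    have h6 := exp_le_quad ((hsb ξ hξ).trans hcs)
    have h7 : s ξ ^ 2 ≤ (4 * π * c ^ 2 * (2 + P)) ^ 2 := by
      rw [← sq_abs]; gcongr; exact hsb ξ hξ
    have h8 : (4 * π * c ^ 2 * (2 + P)) ^ 2 = (4 * π * (2 + P)) ^ 2 * c ^ 4 := by ring
    linarith
  refine h5.trans (le_of_eq ?_)
  have h9 : ∫ ξ, s ξ ∂μ = π * c ^ 2 * ∫ ξ, ‖ξ - m‖ ^ 2 ∂μ := by
    rw [hs, integral_add, integral_const_mul, integral_const_mul]
    · have : ∫ ξ, ⟪ξ - m, T a⟫ ∂μ = 0 := by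
        have e : ∀ ξ, ⟪ξ - m, T a⟫ = ⟪T a, ξ - m⟫ := fun ξ => real_inner_comm _ _
        simp_rw [e]
        rw [integral_inner (integrable_supp μ hμ _ (by fun_prop)), integral_sub
          (integrable_supp μ hμ _ (by fun_prop)) (integrable_supp μ hμ _ (by fun_prop)), ← hm]
        simp
      rw [this]; ring
    all_goals exact integrable_supp μ hμ _ (by fun_prop)
  rw [integral_add, integral_add, h9]
  · simp
  all_goals exact integrable_supp μ hμ _ (by fun_prop)

end NBL

/-! ### The geometric Brascamp–Lieb inequality -/

namespace NBL
open Filter Topology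
open scoped RealInnerProductSpace
variable {ι : Type} [Fintype ι] {nn : ι → ℕ} {n : ℕ}

/-- `T` is a coisometry: `T T* = 1`. -/
def Coiso {n k : ℕ} (T : Euc n →L[ℝ] Euc k) : Prop :=
  ∀ ζ, T (ContinuousLinearMap.adjoint T ζ) = ζ

lemma Coiso.norm_adjoint {k : ℕ} {T : Euc n →L[ℝ] Euc k} (hT : Coiso T) (ζ : Euc k) :
    ‖ContinuousLinearMap.adjoint T ζ‖ = ‖ζ‖ := by
  have : ‖ContinuousLinearMap.adjoint T ζ‖ ^ 2 = ‖ζ‖ ^ 2 := by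
    rw [← real_inner_self_eq_norm_sq, ContinuousLinearMap.adjoint_inner_left, hT ζ,
      real_inner_self_eq_norm_sq]
  exact (sq_eq_sq₀ (norm_nonneg _) (norm_nonneg _)).1 this

lemma Coiso.norm_le {k : ℕ} {T : Euc n →L[ℝ] Euc k} (hT : Coiso T) (x : Euc n) :
    ‖T x‖ ≤ ‖x‖ := by
  have h1 : ‖T x‖ ^ 2 ≤ ‖T x‖ * ‖x‖ := by
    rw [← real_inner_self_eq_norm_sq, ← ContinuousLinearMap.adjoint_inner_left]
    calc _ ≤ ‖ContinuousLinearMap.adjoint T (T x)‖ * ‖x‖ := real_inner_le_norm _ _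
      _ = _ := by rw [hT.norm_adjoint]
  rcases (norm_nonneg (T x)).eq_or_lt with h | h
  · rw [← h]; exact norm_nonneg _
  · rw [sq] at h1; exact le_of_mul_le_mul_left h1 h

/-- One step of the hypercontractive estimate: for mixtures at small scale `c` the constant is
`1 + O(c⁴)`. -/
lemma GH_one_prob (T : ∀ j, Euc n →L[ℝ] Euc (nn j)) (hT : ∀ j, Coiso (T j)) (p : ι → ℝ)
    (hp : ∀ j, 0 < p j) (hgeo : ∀ x, ∑ j, p j * ‖T j x‖ ^ 2 ≤ ‖x‖ ^ 2) :
    ∃ C c₀ : ℝ, 0 ≤ C ∧ 0 < c₀ ∧ ∀ c, 0 ≤ c → c ≤ c₀ →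
    ∀ μ : ∀ j, Measure (Euc (nn j)), (∀ j, IsProbabilityMeasure (μ j)) →
    (∀ j, ∀ᵐ ξ ∂μ j, ‖ξ‖ ≤ 1) →
    ∫⁻ x, gE x * ∏ j, (∫⁻ ξ, ENNReal.ofReal (rexp (2 * π * c * ⟪ξ, T j x⟫)) ∂μ j) ^ p j ≤
      ENNReal.ofReal (1 + C * c ^ 4) *
        ∏ j, (∫⁻ ξ, ENNReal.ofReal (rexp (π * c ^ 2 * ‖ξ‖ ^ 2)) ∂μ j) ^ p j := by
  set P := ∑ j, p j with hP
  have hP0 : 0 ≤ P := Finset.sum_nonneg fun j _ => (hp j).le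
  set I4 := ∫⁻ x : Euc n, gE x * ENNReal.ofReal
    ((4 * π * (‖x‖ + (1 + P))) ^ 4 * rexp ((P + 2) * (4 * π * (‖x‖ + (1 + P))))) with hI4
  have hI4t : I4 < ⊤ := lintegral_gE_poly_exp_lt_top n _ _ _ (by positivity) (by positivity)
  set C2 : ℝ := (4 * π * (2 + P)) ^ 2 with hC2
  have hg := measurable_gE (k := n)
  refine ⟨P * C2 + P ^ 2 * I4.toReal, min 1 (1 / (4 * π * (2 + P))), by positivity,
    by positivity, ?_⟩
  intro c hc hcc μ hμ hsupp
  have hc1 : c ≤ 1 := hcc.trans (min_le_left _ _)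
  have hcs : 4 * π * c ^ 2 * (2 + P) ≤ 1 := by
    have h1 := hcc.trans (min_le_right _ _)
    rw [le_div_iff₀ (by positivity)] at h1
    calc 4 * π * c ^ 2 * (2 + P) = c * (c * (4 * π * (2 + P))) := by ring
      _ ≤ 1 * 1 := by gcongr
      _ = 1 := one_mul _
  set m : ∀ j, Euc (nn j) := fun j => ∫ ξ, ξ ∂μ j with hm
  have hmn : ∀ j, ‖m j‖ ≤ 1 := fun j => by
    have := norm_integral_le_of_norm_le_const (hsupp j)
    simpa using this
  set V : ι → ℝ := fun j => ∫ ξ, ‖ξ - m j‖ ^ 2 ∂μ j with hV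
  have hV0 : ∀ j, 0 ≤ V j := fun j => integral_nonneg fun _ => by positivity
  set a : Euc n := ∑ j, (c * p j) • ContinuousLinearMap.adjoint (T j) (m j) with ha
  have hinner : ∀ x, ⟪a, x⟫ = c * ∑ j, p j * ⟪m j, T j x⟫ := by
    intro x
    rw [ha, sum_inner, Finset.mul_sum]
    refine Finset.sum_congr rfl fun j _ => ?_
    rw [inner_smul_left, ContinuousLinearMap.adjoint_inner_left]
    simp only [conj_trivial]; ring
  have ha2 : ‖a‖ ^ 2 ≤ c ^ 2 * ∑ j, p j * ‖m j‖ ^ 2 := by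
    have h1 : ‖a‖ ^ 2 = ∑ j, p j * (c * ⟪m j, T j a⟫) := by
      rw [← real_inner_self_eq_norm_sq, hinner, Finset.mul_sum]
      exact Finset.sum_congr rfl fun j _ => by ring
    have h2 : ∑ j, p j * (c * ⟪m j, T j a⟫) ≤
        ∑ j, p j * ((c ^ 2 * ‖m j‖ ^ 2 + ‖T j a‖ ^ 2) / 2) := by
      refine Finset.sum_le_sum fun j _ => mul_le_mul_of_nonneg_left ?_ (hp j).le
      have h3 := real_inner_le_norm (m j) (T j a)
      have h4 := mul_le_mul_of_nonneg_left h3 hc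
      nlinarith [sq_nonneg (c * ‖m j‖ - ‖T j a‖)]
    have h5 : ∑ j, p j * ((c ^ 2 * ‖m j‖ ^ 2 + ‖T j a‖ ^ 2) / 2) =
        (c ^ 2 * ∑ j, p j * ‖m j‖ ^ 2) / 2 + (∑ j, p j * ‖T j a‖ ^ 2) / 2 := by
      rw [Finset.mul_sum, Finset.sum_div, Finset.sum_div, ← Finset.sum_add_distrib]
      exact Finset.sum_congr rfl fun j _ => by ring
    have := hgeo a
    linarith
  have hal : ‖a‖ ≤ c * (1 + P) := by
    refine abs_le_of_sq_le_sq' ?_ (by positivity) |>.2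
    refine ha2.trans ?_
    have h1 : ∑ j, p j * ‖m j‖ ^ 2 ≤ P := Finset.sum_le_sum fun j _ => by
      have : ‖m j‖ ^ 2 ≤ 1 := pow_le_one₀ (norm_nonneg _) (hmn j)
      nlinarith [hp j]
    rw [mul_pow]; gcongr; nlinarith
  set G : ι → Euc n → ℝ := fun j x => ∫ ξ, rexp (2 * π * c * ⟪ξ - m j, T j (x + a)⟫) ∂μ j with hG
  have hIntg : ∀ j (y : Euc (nn j)), Integrable (fun ξ => rexp (2 * π * c * ⟪ξ - m j, y⟫)) (μ j) :=
    fun j y => integrable_supp (μ j) (hsupp j) _ (by fun_prop)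
  have hlin : ∀ j (y : Euc (nn j)), ∫ ξ, 2 * π * c * ⟪ξ - m j, y⟫ ∂μ j = 0 := by
    intro j y
    rw [integral_const_mul]
    have e : ∀ ξ, ⟪ξ - m j, y⟫ = ⟪y, ξ - m j⟫ := fun ξ => real_inner_comm _ _
    simp_rw [e]
    rw [integral_inner (integrable_supp (μ j) (hsupp j) _ (by fun_prop)), integral_sub
      (integrable_supp (μ j) (hsupp j) _ (by fun_prop))
      (integrable_supp (μ j) (hsupp j) _ (by fun_prop))]
    simp [hm]
  have hG1 : ∀ j x, 1 ≤ G j x := by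
    intro j x
    have h1 : ∫ ξ, (1 + 2 * π * c * ⟪ξ - m j, T j (x + a)⟫) ∂μ j = 1 := by
      rw [integral_add (integrable_const _) (integrable_supp (μ j) (hsupp j) _ (by fun_prop)), hlin]
      simp
    rw [← h1]
    refine integral_mono (integrable_supp (μ j) (hsupp j) _ (by fun_prop)) (hIntg j _) fun ξ => ?_
    have := Real.add_one_le_exp (2 * π * c * ⟪ξ - m j, T j (x + a)⟫)
    simp only; linarith
  set τ : Euc n → ℝ := fun x => 4 * π * c * (‖x‖ + (1 + P)) with hτ
  have hτ0 : ∀ x, 0 ≤ τ x := fun x => by positivity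
  have htb : ∀ j x, ∀ ξ : Euc (nn j), ‖ξ‖ ≤ 1 → |2 * π * c * ⟪ξ - m j, T j (x + a)⟫| ≤ τ x := by
    intro j x ξ hξ
    have h1 : ‖ξ - m j‖ ≤ 2 := (norm_sub_le _ _).trans (by linarith [hmn j])
    have h2 : ‖T j (x + a)‖ ≤ ‖x‖ + (1 + P) := by
      refine ((hT j).norm_le _).trans ((norm_add_le _ _).trans ?_)
      have : c * (1 + P) ≤ 1 * (1 + P) := by gcongr
      linarith
    have h3 := (abs_real_inner_le_norm (ξ - m j) (T j (x + a))).trans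
        (mul_le_mul h1 h2 (norm_nonneg _) (by norm_num))
    rw [abs_mul, abs_of_nonneg (by positivity : 0 ≤ 2 * π * c), hτ]
    calc _ ≤ 2 * π * c * (2 * (‖x‖ + (1 + P))) := by gcongr
      _ = _ := by ring
  have hG2 : ∀ j x, G j x ≤ 1 + τ x ^ 2 * rexp (τ x) := by
    intro j x
    have h1 : ∫ ξ, (1 + 2 * π * c * ⟪ξ - m j, T j (x + a)⟫ + τ x ^ 2 * rexp (τ x)) ∂μ j =
        1 + τ x ^ 2 * rexp (τ x) := by
      rw [integral_add (integrable_supp (μ j) (hsupp j) _ (by fun_prop)) (integrable_const _),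
        integral_add (integrable_const _) (integrable_supp (μ j) (hsupp j) _ (by fun_prop)), hlin]
      simp
    rw [← h1]
    refine integral_mono_ae (hIntg j _) (integrable_supp (μ j) (hsupp j) _ (by fun_prop)) ?_
    filter_upwards [hsupp j] with ξ hξ
    exact exp_sub_le (htb j x ξ hξ)
  have hG3 : ∀ j x, G j x ≤ rexp (τ x) := by
    intro j x
    have h1 : ∫ ξ, rexp (τ x) ∂μ j = rexp (τ x) := by simp
    rw [← h1]
    refine integral_mono_ae (hIntg j _) (integrable_const _) ?_
    filter_upwards [hsupp j] with ξ hξ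
    exact Real.exp_le_exp.2 ((le_abs_self _).trans (htb j x ξ hξ))
  have hGm : ∀ j, Measurable fun x => ENNReal.ofReal (G j x) := by
    intro j
    have : ∀ x, ENNReal.ofReal (G j x) =
        ∫⁻ ξ, ENNReal.ofReal (rexp (2 * π * c * ⟪ξ - m j, T j (x + a)⟫)) ∂μ j := fun x =>
      ofReal_integral_eq_lintegral_ofReal (hIntg j _) (ae_of_all _ fun _ => (Real.exp_pos _).le)
    simp_rw [this]
    apply Measurable.lintegral_prod_right' (f := fun q : Euc n × Euc (nn j) =>
      ENNReal.ofReal (rexp (2 * π * c * ⟪q.2 - m j, T j (q.1 + a)⟫)))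
    have : Continuous fun q : Euc n × Euc (nn j) =>
      rexp (2 * π * c * ⟪q.2 - m j, T j (q.1 + a)⟫) := by fun_prop
    exact this.measurable.ennreal_ofReal
  -- after translation by `a`, the linear parts of the exponents cancel
  have hshift : ∀ x, gE (x + a) * ∏ j, (∫⁻ ξ, ENNReal.ofReal
      (rexp (2 * π * c * ⟪ξ, T j (x + a)⟫)) ∂μ j) ^ p j =
      ENNReal.ofReal (rexp (π * ‖a‖ ^ 2)) * (gE x * ENNReal.ofReal (∏ j, G j x ^ p j)) := by
    intro x
    have h1 : ∀ j, (∫⁻ ξ, ENNReal.ofReal (rexp (2 * π * c * ⟪ξ, T j (x + a)⟫)) ∂μ j) ^ p j =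
        ENNReal.ofReal (rexp (p j * (2 * π * c * ⟪m j, T j (x + a)⟫)) * G j x ^ p j) := by
      intro j
      rw [← ofReal_integral_eq_lintegral_ofReal (integrable_supp (μ j) (hsupp j) _ (by fun_prop))
        (ae_of_all _ fun _ => (Real.exp_pos _).le), ENNReal.ofReal_rpow_of_nonneg
        (integral_nonneg fun _ => (Real.exp_pos _).le) (hp j).le]
      congr 1
      have e : ∀ ξ : Euc (nn j), rexp (2 * π * c * ⟪ξ, T j (x + a)⟫) =
          rexp (2 * π * c * ⟪m j, T j (x + a)⟫) * rexp (2 * π * c * ⟪ξ - m j, T j (x + a)⟫) := by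
        intro ξ
        rw [← Real.exp_add, inner_sub_left]; congr 1; ring
      rw [integral_congr_ae (ae_of_all _ e), integral_const_mul, Real.mul_rpow (Real.exp_pos _).le
        (zero_le_one.trans (hG1 j x)), ← Real.exp_mul, mul_comm (p j)]
    simp_rw [h1]
    rw [← ENNReal.ofReal_prod_of_nonneg (fun j _ => mul_nonneg (Real.exp_pos _).le
      (Real.rpow_nonneg (zero_le_one.trans (hG1 j x)) _)), Finset.prod_mul_distrib, ← Real.exp_sum]
    have h2 : ∑ j, p j * (2 * π * c * ⟪m j, T j (x + a)⟫) = 2 * π * ⟪a, x + a⟫ := by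
      rw [hinner, Finset.mul_sum, Finset.mul_sum]
      exact Finset.sum_congr rfl fun j _ => by ring
    have hpr : 0 ≤ ∏ j, G j x ^ p j := Finset.prod_nonneg fun j _ =>
      Real.rpow_nonneg (zero_le_one.trans (hG1 j x)) _
    unfold gE
    rw [h2, ← ENNReal.ofReal_mul (Real.exp_pos _).le, ← ENNReal.ofReal_mul (Real.exp_pos _).le,
      ← ENNReal.ofReal_mul (Real.exp_pos _).le, ← mul_assoc, ← mul_assoc, ← Real.exp_add,
      ← Real.exp_add, @norm_add_sq_real, inner_add_right, real_inner_self_eq_norm_sq,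
      real_inner_comm a x]
    congr 3; ring
  rw [← lintegral_add_right_eq_self _ a]
  simp_rw [hshift]
  have hprodm : Measurable fun x => ENNReal.ofReal (∏ j, G j x ^ p j) := by
    have : ∀ x, ENNReal.ofReal (∏ j, G j x ^ p j) = ∏ j, (ENNReal.ofReal (G j x)) ^ p j := by
      intro x
      rw [ENNReal.ofReal_prod_of_nonneg (fun j _ => Real.rpow_nonneg (zero_le_one.trans (hG1 j x)) _)]
      exact Finset.prod_congr rfl fun j _ => (ENNReal.ofReal_rpow_of_nonneg
        (zero_le_one.trans (hG1 j x)) (hp j).le).symm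
    simp_rw [this]
    exact Finset.measurable_fun_prod _ fun j _ => (hGm j).pow_const _
  have hgprod : Measurable fun x => gE x * ENNReal.ofReal (∏ j, G j x ^ p j) := hg.mul hprodm
  rw [lintegral_const_mul _ hgprod]
  have hw0 : ∀ x, 0 ≤ ∑ j, p j * (G j x - 1) := fun x => Finset.sum_nonneg fun j _ =>
    mul_nonneg (hp j).le (by linarith [hG1 j x])
  have hGr : ∀ j, Measurable (G j) := by
    intro j
    have := (hGm j).ennreal_toReal
    simpa only [ENNReal.toReal_ofReal (zero_le_one.trans (hG1 j _))] using this
  have hwm : Measurable fun x => ∑ j, p j * (G j x - 1) :=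
    Finset.measurable_fun_sum _ fun j _ => ((hGr j).sub_const 1).const_mul _
  have hgwm : Measurable fun x => gE x * ENNReal.ofReal (∑ j, p j * (G j x - 1)) :=
    hg.mul hwm.ennreal_ofReal
  have hw : ∫⁻ x, gE x * ENNReal.ofReal (∑ j, p j * (G j x - 1)) ≤
      ENNReal.ofReal (∑ j, p j * (π * c ^ 2 * V j + C2 * c ^ 4)) := by
    have hVC : ∀ j, 0 ≤ π * c ^ 2 * V j + C2 * c ^ 4 := fun j => by
      have := hV0 j; positivity
    have hPi : ∫⁻ x : Euc n, gE x * ENNReal.ofReal P = ENNReal.ofReal P := by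
      rw [lintegral_mul_const _ hg, lintegral_gE, one_mul]
    refine (ENNReal.add_le_add_iff_right (ENNReal.ofReal_ne_top (r := P))).1 ?_
    nth_rewrite 1 [← hPi]
    rw [← lintegral_add_left hgwm, ← ENNReal.ofReal_add
      (Finset.sum_nonneg fun j _ => mul_nonneg (hp j).le (hVC j)) hP0]
    have e1 : ∀ x, gE x * ENNReal.ofReal (∑ j, p j * (G j x - 1)) + gE x * ENNReal.ofReal P =
        ∑ j, ENNReal.ofReal (p j) * (gE x * ENNReal.ofReal (G j x)) := by
      intro x
      rw [← mul_add, ← ENNReal.ofReal_add (hw0 x) hP0, hP, ← Finset.sum_add_distrib,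
        ENNReal.ofReal_sum_of_nonneg, Finset.mul_sum]
      · refine Finset.sum_congr rfl fun j _ => ?_
        rw [mul_left_comm, ← ENNReal.ofReal_mul (hp j).le]
        congr 2; ring
      · intro j _
        have := mul_nonneg (hp j).le (zero_le_one.trans (hG1 j x))
        linarith
    simp_rw [e1]
    have hm1 : ∀ j, Measurable fun x => gE x * ENNReal.ofReal (G j x) := fun j => hg.mul (hGm j)
    rw [lintegral_finsetSum _ (fun j _ => (hm1 j).const_mul _)]
    have e2 : ∑ j, p j * (π * c ^ 2 * V j + C2 * c ^ 4) + P =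
        ∑ j, p j * (1 + π * c ^ 2 * V j + C2 * c ^ 4) := by
      rw [hP, ← Finset.sum_add_distrib]
      exact Finset.sum_congr rfl fun j _ => by ring
    rw [e2, ENNReal.ofReal_sum_of_nonneg (fun j _ => mul_nonneg (hp j).le (by linarith [hVC j]))]
    refine Finset.sum_le_sum fun j _ => ?_
    rw [lintegral_const_mul _ (hm1 j), ENNReal.ofReal_mul (hp j).le]
    have := hμ j
    exact mul_le_mul_right (centred_gauss (μ j) (hsupp j) (T j) (fun ζ => ((hT j).norm_adjoint ζ).le)
      (hT j).norm_le c hc a P hP0 hal hcs) _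
  have hrem : ∫⁻ x, gE x * ENNReal.ofReal ((P * (τ x ^ 2 * rexp (τ x))) ^ 2 * rexp (P * τ x)) ≤
      ENNReal.ofReal (P ^ 2 * I4.toReal * c ^ 4) := by
    have e1 : ∀ x, gE x * ENNReal.ofReal ((P * (τ x ^ 2 * rexp (τ x))) ^ 2 * rexp (P * τ x)) ≤
        ENNReal.ofReal (P ^ 2 * c ^ 4) * (gE x * ENNReal.ofReal
          ((4 * π * (‖x‖ + (1 + P))) ^ 4 * rexp ((P + 2) * (4 * π * (‖x‖ + (1 + P)))))) := by
      intro x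
      rw [mul_left_comm (ENNReal.ofReal (P ^ 2 * c ^ 4)), ← ENNReal.ofReal_mul (by positivity)]
      refine mul_le_mul_right (ENNReal.ofReal_le_ofReal ?_) _
      have h1 : (P * (τ x ^ 2 * rexp (τ x))) ^ 2 * rexp (P * τ x) =
          P ^ 2 * (τ x ^ 4 * rexp ((P + 2) * τ x)) := by
        rw [show (P + 2) * τ x = τ x + τ x + P * τ x by ring, Real.exp_add, Real.exp_add]; ring
      have h2 : τ x = c * (4 * π * (‖x‖ + (1 + P))) := by rw [hτ]; ring
      have h3 : τ x ≤ 4 * π * (‖x‖ + (1 + P)) := by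
        rw [h2]; exact mul_le_of_le_one_left (by positivity) hc1
      rw [h1, mul_assoc (P ^ 2)]
      refine mul_le_mul_of_nonneg_left ?_ (by positivity)
      calc _ ≤ τ x ^ 4 * rexp ((P + 2) * (4 * π * (‖x‖ + (1 + P)))) := by gcongr
        _ = _ := by rw [h2]; ring
    refine (lintegral_mono e1).trans ?_
    rw [lintegral_const_mul _ (by fun_prop), ← hI4, mul_right_comm (P ^ 2),
      ENNReal.ofReal_mul (p := P ^ 2 * c ^ 4) (by positivity), ENNReal.ofReal_toReal hI4t.ne]
  have hVC : 0 ≤ ∑ j, p j * (π * c ^ 2 * V j + C2 * c ^ 4) :=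
    Finset.sum_nonneg fun j _ => mul_nonneg (hp j).le (by have := hV0 j; positivity)
  have hmain : ∫⁻ x, gE x * ENNReal.ofReal (∏ j, G j x ^ p j) ≤ ENNReal.ofReal
      (1 + ∑ j, p j * (π * c ^ 2 * V j + C2 * c ^ 4) + P ^ 2 * I4.toReal * c ^ 4) := by
    have e1 : ∀ x, gE x * ENNReal.ofReal (∏ j, G j x ^ p j) ≤
        gE x + gE x * ENNReal.ofReal (∑ j, p j * (G j x - 1)) +
        gE x * ENNReal.ofReal ((P * (τ x ^ 2 * rexp (τ x))) ^ 2 * rexp (P * τ x)) := by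
      intro x
      have h1 := prod_rpow_le p (fun j => G j x) (fun j => (hp j).le) (fun j => hG1 j x)
        (fun j => hG2 j x) (fun j => hG3 j x)
      nth_rewrite 2 [← mul_one (gE x)]
      rw [← mul_add, ← mul_add, ← ENNReal.ofReal_one, ← ENNReal.ofReal_add zero_le_one (hw0 x),
        ← ENNReal.ofReal_add (by linarith [hw0 x]) (by positivity)]
      exact mul_le_mul_right (ENNReal.ofReal_le_ofReal h1) _
    refine (lintegral_mono e1).trans ?_
    have hgs : Measurable fun x => gE x + gE x * ENNReal.ofReal (∑ j, p j * (G j x - 1)) :=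
      hg.add hgwm
    rw [lintegral_add_left hgs, lintegral_add_left hg, lintegral_gE,
      ENNReal.ofReal_add (by linarith) (by positivity), ENNReal.ofReal_add zero_le_one hVC,
      ENNReal.ofReal_one]
    gcongr
  refine (mul_le_mul_right hmain _).trans ?_
  set X := π * c ^ 2 * ∑ j, p j * V j with hX
  set Y := (P * C2 + P ^ 2 * I4.toReal) * c ^ 4 with hY
  have hX0 : 0 ≤ X := mul_nonneg (by positivity)
    (Finset.sum_nonneg fun j _ => mul_nonneg (hp j).le (hV0 j))
  have hY0 : 0 ≤ Y := by positivity
  have e3 : 1 + ∑ j, p j * (π * c ^ 2 * V j + C2 * c ^ 4) + P ^ 2 * I4.toReal * c ^ 4 =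
      1 + X + Y := by
    have : ∑ j, p j * (π * c ^ 2 * V j + C2 * c ^ 4) = X + P * (C2 * c ^ 4) := by
      rw [hX, hP, Finset.mul_sum, Finset.sum_mul, ← Finset.sum_add_distrib]
      exact Finset.sum_congr rfl fun j _ => by ring
    rw [this, hY]; ring
  have e4 : 1 + X + Y ≤ rexp X * (1 + Y) := by
    have := Real.add_one_le_exp X
    nlinarith
  rw [e3]
  have hfin : ENNReal.ofReal (rexp (π * ‖a‖ ^ 2) * rexp X) ≤
      ∏ j, (∫⁻ ξ, ENNReal.ofReal (rexp (π * c ^ 2 * ‖ξ‖ ^ 2)) ∂μ j) ^ p j := by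
    have h1 : rexp (π * ‖a‖ ^ 2) * rexp X ≤
        ∏ j, rexp (π * c ^ 2 * (‖m j‖ ^ 2 + V j)) ^ p j := by
      simp_rw [← Real.exp_mul]
      rw [← Real.exp_add, ← Real.exp_sum]
      refine Real.exp_le_exp.2 ?_
      have : ∑ j, π * c ^ 2 * (‖m j‖ ^ 2 + V j) * p j =
          π * (c ^ 2 * ∑ j, p j * ‖m j‖ ^ 2) + X := by
        rw [hX, Finset.mul_sum, Finset.mul_sum, Finset.mul_sum, ← Finset.sum_add_distrib]
        exact Finset.sum_congr rfl fun j _ => by ring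
      rw [this]
      have := mul_le_mul_of_nonneg_left ha2 Real.pi_pos.le
      linarith
    refine (ENNReal.ofReal_le_ofReal h1).trans ?_
    rw [ENNReal.ofReal_prod_of_nonneg (fun j _ => by positivity)]
    refine Finset.prod_le_prod' fun j _ => ?_
    rw [← ENNReal.ofReal_rpow_of_nonneg (by positivity) (hp j).le]
    refine ENNReal.rpow_le_rpow ?_ (hp j).le
    rw [← ofReal_integral_eq_lintegral_ofReal (integrable_supp (μ j) (hsupp j) _ (by fun_prop))
        (ae_of_all _ fun _ => (Real.exp_pos _).le)]
    have := hμ j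
    exact ENNReal.ofReal_le_ofReal (jensen_sq (μ j) (hsupp j) (π * c ^ 2))
  calc _ ≤ ENNReal.ofReal (rexp (π * ‖a‖ ^ 2)) * ENNReal.ofReal (rexp X * (1 + Y)) := by gcongr
    _ = ENNReal.ofReal (1 + Y) * ENNReal.ofReal (rexp (π * ‖a‖ ^ 2) * rexp X) := by
      rw [← ENNReal.ofReal_mul (Real.exp_pos _).le, ← ENNReal.ofReal_mul (by positivity)]
      congr 1; ring
    _ ≤ _ := mul_le_mul_right hfin _

end NBL

namespace NBL
open Filter Topology
open scoped RealInnerProductSpace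
variable {ι : Type} [Fintype ι] {nn : ι → ℕ} {n : ℕ}

/-- `GH_one_prob` for mixing measures of arbitrary finite mass, by homogeneity. -/
lemma GH_one (T : ∀ j, Euc n →L[ℝ] Euc (nn j)) (hT : ∀ j, Coiso (T j)) (p : ι → ℝ)
    (hp : ∀ j, 0 < p j) (hgeo : ∀ x, ∑ j, p j * ‖T j x‖ ^ 2 ≤ ‖x‖ ^ 2) :
    ∃ C c₀ : ℝ, 0 ≤ C ∧ 0 < c₀ ∧ ∀ c, 0 ≤ c → c ≤ c₀ →
      GH T p c (ENNReal.ofReal (1 + C * c ^ 4)) := by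
  obtain ⟨C, c₀, hC, hc₀, H⟩ := GH_one_prob T hT p hp hgeo
  refine ⟨C, c₀, hC, hc₀, fun c hc hcc μ hfin hsupp => ?_⟩
  by_cases h0 : ∃ j, μ j = 0
  · obtain ⟨j, hj⟩ := h0
    have : ∀ x : Euc n, gE x * ∏ j, (∫⁻ ξ, ENNReal.ofReal (rexp (2 * π * c * ⟪ξ, T j x⟫)) ∂μ j) ^ p j
        = 0 := by
      intro x
      rw [Finset.prod_eq_zero (Finset.mem_univ j), mul_zero]
      rw [hj, lintegral_zero_measure, ENNReal.zero_rpow_of_pos (hp j)]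
    simp_rw [this]; simp
  push Not at h0
  have hM0 : ∀ j, μ j Set.univ ≠ 0 := fun j => by simpa using h0 j
  have hMt : ∀ j, μ j Set.univ ≠ ⊤ := fun j => measure_ne_top _ _
  set μ' : ∀ j, Measure (Euc (nn j)) := fun j => (μ j Set.univ)⁻¹ • μ j with hμ'
  have hprob : ∀ j, IsProbabilityMeasure (μ' j) := fun j => ⟨by
    simp only [hμ', Measure.smul_apply, smul_eq_mul]
    exact ENNReal.inv_mul_cancel (hM0 j) (hMt j)⟩
  have hback : ∀ j, μ j = (μ j Set.univ) • μ' j := fun j => by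
    simp only [hμ', smul_smul, ENNReal.mul_inv_cancel (hM0 j) (hMt j), one_smul]
  have hsupp' : ∀ j, ∀ᵐ ξ ∂μ' j, ‖ξ‖ ≤ 1 := fun j => Measure.ae_smul_measure (hsupp j) _
  have key := H c hc hcc μ' hprob hsupp'
  set Q := ∏ j, (μ j Set.univ) ^ p j with hQ
  have e1 : ∀ φ : ∀ j, Euc (nn j) → ℝ≥0∞, ∏ j, (∫⁻ ξ, φ j ξ ∂μ j) ^ p j =
      Q * ∏ j, (∫⁻ ξ, φ j ξ ∂μ' j) ^ p j := by
    intro φ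
    rw [hQ, ← Finset.prod_mul_distrib]
    refine Finset.prod_congr rfl fun j _ => ?_
    rw [← ENNReal.mul_rpow_of_nonneg _ _ (hp j).le]
    congr 1
    conv_lhs => rw [hback j]
    rw [lintegral_smul_measure, smul_eq_mul]
  rw [e1 (fun j ξ => ENNReal.ofReal (rexp (π * c ^ 2 * ‖ξ‖ ^ 2)))]
  have e2 : ∀ x, gE x * ∏ j, (∫⁻ ξ, ENNReal.ofReal (rexp (2 * π * c * ⟪ξ, T j x⟫)) ∂μ j) ^ p j =
      Q * (gE x * ∏ j, (∫⁻ ξ, ENNReal.ofReal (rexp (2 * π * c * ⟪ξ, T j x⟫)) ∂μ' j) ^ p j) := by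
    intro x
    rw [e1 (fun j ξ => ENNReal.ofReal (rexp (2 * π * c * ⟪ξ, T j x⟫))), mul_left_comm]
  simp_rw [e2]
  rw [lintegral_const_mul _ (measurable_gmix μ' (fun j => inferInstance) c T p), mul_left_comm]
  exact mul_le_mul_right key _

lemma GH_iter (T : ∀ j, Euc n →L[ℝ] Euc (nn j)) (p : ι → ℝ) (C : ℝ≥0∞) (k : ℕ) :
    ∀ c : ℝ, GH T p (c / √2 ^ k) C → GH T p c (C ^ 2 ^ k) := by
  induction k with
  | zero => intro c h; simpa using h
  | succ k ih =>
    intro c h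
    have h1 := ih (c / √2) (by rwa [div_div, ← pow_succ'])
    have h2 := GH_split T p c _ h1
    rwa [← pow_add, ← two_mul, ← pow_succ'] at h2

/-- Iterating the splitting drives the constant to `1`. -/
lemma GH_all (T : ∀ j, Euc n →L[ℝ] Euc (nn j)) (hT : ∀ j, Coiso (T j)) (p : ι → ℝ)
    (hp : ∀ j, 0 < p j) (hgeo : ∀ x, ∑ j, p j * ‖T j x‖ ^ 2 ≤ ‖x‖ ^ 2) (c : ℝ) (hc : 0 ≤ c) :
    GH T p c 1 := by
  obtain ⟨C, c₀, hC, hc₀, H⟩ := GH_one T hT p hp hgeo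
  intro μ hfin hsupp
  have h2 : (1 : ℝ) < √2 := by
    rw [Real.lt_sqrt zero_le_one]; norm_num
  have ht1 : Tendsto (fun k : ℕ => c / √2 ^ k) atTop (𝓝 0) :=
    tendsto_const_nhds.div_atTop (tendsto_pow_atTop_atTop_of_one_lt h2)
  have hev : ∀ᶠ k : ℕ in atTop, c / √2 ^ k ≤ c₀ := (ht1.eventually_lt_const hc₀).mono fun _ h => h.le
  have ht2 : Tendsto (fun k : ℕ => ENNReal.ofReal (rexp (C * c ^ 4 / 2 ^ k))) atTop (𝓝 1) := by
    rw [← ENNReal.ofReal_one, ← Real.exp_zero]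
    refine ENNReal.tendsto_ofReal ((Real.continuous_exp.tendsto _).comp ?_)
    exact tendsto_const_nhds.div_atTop (tendsto_pow_atTop_atTop_of_one_lt (by norm_num))
  have ht3 := ENNReal.Tendsto.mul_const (b := ∏ j, (∫⁻ ξ, ENNReal.ofReal
    (rexp (π * c ^ 2 * ‖ξ‖ ^ 2)) ∂μ j) ^ p j) ht2 (Or.inl one_ne_zero)
  refine ge_of_tendsto ht3 ?_
  filter_upwards [hev] with k hk
  refine (GH_iter T p _ k c (H _ (by positivity) hk) μ hfin hsupp).trans ?_
  refine mul_le_mul_left ?_ _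
  rw [← ENNReal.ofReal_pow (by positivity)]
  refine ENNReal.ofReal_le_ofReal ?_
  have h4 : (c / √2 ^ k) ^ 4 = c ^ 4 / (2 ^ k * 2 ^ k) := by
    rw [div_pow]; congr 1
    rw [← pow_mul, mul_comm k, pow_mul, ← mul_pow]
    congr 1
    calc √2 ^ 4 = (√2 ^ 2) ^ 2 := by ring
      _ = 2 * 2 := by rw [Real.sq_sqrt (by norm_num)]; norm_num
  calc _ ≤ rexp (C * (c / √2 ^ k) ^ 4) ^ 2 ^ k := by
        gcongr
        have := Real.add_one_le_exp (C * (c / √2 ^ k) ^ 4)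
        linarith
    _ = _ := by
        rw [← Real.exp_nat_mul, h4]
        congr 1; push_cast; field_simp

/-- The geometric Brascamp–Lieb inequality (Ball, Barthe). -/
theorem geometric_BL (T : ∀ j, Euc n →L[ℝ] Euc (nn j)) (hT : ∀ j, Coiso (T j)) (p : ι → ℝ)
    (hp : ∀ j, 0 < p j) (hgeo : ∀ x, ∑ j, p j * ‖T j x‖ ^ 2 = ‖x‖ ^ 2)
    (hdim : ∑ j, p j * (nn j : ℝ) = n)
    (f : ∀ j, Euc (nn j) → ℝ≥0∞) (hf : ∀ j, Measurable (f j)) (hfi : ∀ j, ∫⁻ z, f j z ≠ ⊤) :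
    ∫⁻ x, ∏ j, (f j (T j x)) ^ p j ≤ ∏ j, (∫⁻ z, f j z) ^ p j := by
  have := approx (volume : Measure (Euc n)) (fun j => T j) (fun j => (T j).continuous.measurable) p hp
    1 ENNReal.one_ne_top ?_ f hf hfi
  · rwa [one_mul] at this
  intro s hs h hh hsup hhi
  choose R₀ hR₀ using hsup
  obtain ⟨R, hR, hRR⟩ : ∃ R : ℝ, 0 < R ∧ ∀ j, R₀ j ≤ R := by
    refine ⟨1 + ∑ j, |R₀ j|, by positivity, fun j => ?_⟩
    have := Finset.single_le_sum (f := fun j => |R₀ j|) (fun j _ => abs_nonneg _) (Finset.mem_univ j)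
    have h2 := le_abs_self (R₀ j)
    linarith
  set μ : ∀ j, Measure (Euc (nn j)) := fun j =>
    ((volume : Measure (Euc (nn j))).withDensity (fun w => h j w * gE (s⁻¹ • w))).map
      (fun w => R⁻¹ • w) with hμ
  have hgm : ∀ j, Measurable fun w : Euc (nn j) => h j w * gE (s⁻¹ • w) := fun j =>
    (hh j).mul (measurable_gE.comp (by fun_prop))
  have hlint : ∀ j (φ : Euc (nn j) → ℝ≥0∞), Measurable φ → ∫⁻ ξ, φ ξ ∂μ j =
      ∫⁻ w, h j w * gE (s⁻¹ • w) * φ (R⁻¹ • w) := by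
    intro j φ hφ
    have hφR : Measurable fun w : Euc (nn j) => φ (R⁻¹ • w) := hφ.comp (by fun_prop)
    rw [hμ, lintegral_map hφ (by fun_prop), lintegral_withDensity_eq_lintegral_mul _ (hgm j) hφR]
    rfl
  have hgle : ∀ {k : ℕ} (x : Euc k), gE x ≤ 1 := fun x => by
    unfold gE; rw [← ENNReal.ofReal_one]
    refine ENNReal.ofReal_le_ofReal ?_
    rw [← Real.exp_zero]; refine Real.exp_le_exp.2 ?_
    have := Real.pi_pos
    nlinarith [sq_nonneg ‖x‖]
  have hfin : ∀ j, IsFiniteMeasure (μ j) := fun j => by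
    have : IsFiniteMeasure ((volume : Measure (Euc (nn j))).withDensity
        (fun w => h j w * gE (s⁻¹ • w))) := by
      refine isFiniteMeasure_withDensity (ne_top_of_le_ne_top (hhi j) (lintegral_mono fun w => ?_))
      calc _ ≤ h j w * 1 := mul_le_mul_right (hgle _) _
        _ = _ := mul_one _
    exact Measure.isFiniteMeasure_map _ _
  have hsupp : ∀ j, ∀ᵐ ξ ∂μ j, ‖ξ‖ ≤ 1 := by
    intro j
    rw [hμ, ae_map_iff (by fun_prop) (measurableSet_le (by fun_prop) (by fun_prop)),
      ae_withDensity_iff (hgm j)]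
    refine ae_of_all _ fun w hw => ?_
    have hw1 : ‖w‖ ≤ R := by
      by_contra hcon
      exact hw (by rw [hR₀ j w (lt_of_le_of_lt (hRR j) (not_le.1 hcon)), zero_mul])
    rw [norm_smul, norm_inv, Real.norm_of_nonneg hR.le]
    exact (inv_mul_le_one₀ hR).2 hw1
  have key := GH_all T hT p hp (fun x => (hgeo x).le) (R / s) (by positivity) μ hfin hsupp
  have eR : ∀ j, ∫⁻ ξ, ENNReal.ofReal (rexp (π * (R / s) ^ 2 * ‖ξ‖ ^ 2)) ∂μ j = ∫⁻ z, h j z := by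
    intro j
    rw [hlint j _ (by fun_prop)]
    congr 1 with w
    unfold gE
    rw [mul_assoc, ← ENNReal.ofReal_mul (Real.exp_pos _).le, ← Real.exp_add]
    have : -π * ‖s⁻¹ • w‖ ^ 2 + π * (R / s) ^ 2 * ‖R⁻¹ • w‖ ^ 2 = 0 := by
      rw [norm_smul, norm_smul, norm_inv, norm_inv, Real.norm_of_nonneg hR.le,
        Real.norm_of_nonneg hs.le]
      field_simp; ring
    rw [this]; simp
  have eL : ∀ j x, smooth s (h j) (T j (s • x)) = ENNReal.ofReal (s⁻¹ ^ nn j) * (gE (T j x) *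
      ∫⁻ ξ, ENNReal.ofReal (rexp (2 * π * (R / s) * ⟪ξ, T j x⟫)) ∂μ j) := by
    intro j x
    have hm : Measurable fun ξ : Euc (nn j) =>
      ENNReal.ofReal (rexp (2 * π * (R / s) * ⟪ξ, T j x⟫)) := by
      have : Continuous fun ξ : Euc (nn j) => rexp (2 * π * (R / s) * ⟪ξ, T j x⟫) := by fun_prop
      exact this.measurable.ennreal_ofReal
    rw [smooth_eq hs, hlint j _ hm, ← lintegral_const_mul' _ _ (gE_ne_top _)]
    congr 2 with w
    unfold gE
    rw [mul_left_comm, mul_assoc, ← ENNReal.ofReal_mul (Real.exp_pos _).le,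
      ← ENNReal.ofReal_mul (Real.exp_pos _).le, ← Real.exp_add, ← Real.exp_add]
    congr 3
    have e : s⁻¹ • (w - T j (s • x)) = s⁻¹ • w - T j x := by
      rw [smul_sub, map_smul, smul_smul, inv_mul_cancel₀ hs.ne', one_smul]
    rw [e, @norm_sub_sq_real, inner_smul_left, inner_smul_left]
    simp only [conj_trivial]
    field_simp; ring
  rw [lintegral_comp_smul s hs]
  have eP : ∀ x, ∏ j, (smooth s (h j) (T j (s • x))) ^ p j = ENNReal.ofReal (s⁻¹ ^ n) * (gE x *
      ∏ j, (∫⁻ ξ, ENNReal.ofReal (rexp (2 * π * (R / s) * ⟪ξ, T j x⟫)) ∂μ j) ^ p j) := by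
    intro x
    simp_rw [eL]
    have : ∀ j, (ENNReal.ofReal (s⁻¹ ^ nn j) * (gE (T j x) *
      ∫⁻ ξ, ENNReal.ofReal (rexp (2 * π * (R / s) * ⟪ξ, T j x⟫)) ∂μ j)) ^ p j =
      ENNReal.ofReal (s⁻¹ ^ (p j * (nn j : ℝ))) * (ENNReal.ofReal (rexp (-π * (p j * ‖T j x‖ ^ 2))) *
      (∫⁻ ξ, ENNReal.ofReal (rexp (2 * π * (R / s) * ⟪ξ, T j x⟫)) ∂μ j) ^ p j) := by
      intro j
      rw [ENNReal.mul_rpow_of_nonneg _ _ (hp j).le, ENNReal.mul_rpow_of_nonneg _ _ (hp j).le]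
      unfold gE
      rw [ENNReal.ofReal_rpow_of_nonneg (by positivity) (hp j).le,
        ENNReal.ofReal_rpow_of_nonneg (by positivity) (hp j).le, ← Real.exp_mul,
        ← Real.rpow_natCast, ← Real.rpow_mul (by positivity), mul_comm (p j) (nn j : ℝ),
        mul_comm (p j) (_ ^ 2), mul_assoc]
    simp_rw [this]
    rw [Finset.prod_mul_distrib, Finset.prod_mul_distrib,
      ← ENNReal.ofReal_prod_of_nonneg (fun _ _ => by positivity),
      ← ENNReal.ofReal_prod_of_nonneg (fun _ _ => by positivity), ← Real.exp_sum, ← Finset.mul_sum,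
      hgeo, ← Real.rpow_sum_of_pos (by positivity), hdim, Real.rpow_natCast]
    rfl
  simp_rw [eP]
  rw [lintegral_const_mul _ (measurable_gmix μ hfin _ T p), ← mul_assoc,
    ← ENNReal.ofReal_mul (by positivity), ← mul_pow, mul_inv_cancel₀ hs.ne', one_pow,
    ENNReal.ofReal_one, one_mul]
  refine key.trans (le_of_eq ?_)
  congr 1
  exact Finset.prod_congr rfl fun j _ => by rw [eR]

end NBL

/-! ### Near-geometric data and frames -/

namespace NBL
open Filter Topology
open scoped RealInnerProductSpace
variable {ι : Type} [Fintype ι] {nn : ι → ℕ} {n : ℕ}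

/-- Absolute value of the determinant. -/
noncomputable def dt {k : ℕ} (g : Euc k ≃L[ℝ] Euc k) : ℝ := |LinearMap.det (g : Euc k →ₗ[ℝ] Euc k)|

lemma dt_pos {k : ℕ} (g : Euc k ≃L[ℝ] Euc k) : 0 < dt g :=
  abs_pos.2 (g.toLinearEquiv.isUnit_det').ne_zero

lemma dt_trans {k : ℕ} (g h : Euc k ≃L[ℝ] Euc k) : dt (g.trans h) = dt h * dt g := by
  unfold dt
  rw [← abs_mul, ← LinearMap.det_comp]
  rfl

lemma dt_refl {k : ℕ} : dt (ContinuousLinearEquiv.refl ℝ (Euc k)) = 1 := by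
  unfold dt
  have : ((ContinuousLinearEquiv.refl ℝ (Euc k) : Euc k ≃L[ℝ] Euc k) : Euc k →ₗ[ℝ] Euc k) =
    LinearMap.id := rfl
  rw [this, LinearMap.det_id, abs_one]

lemma dt_symm {k : ℕ} (g : Euc k ≃L[ℝ] Euc k) : dt g.symm = (dt g)⁻¹ := by
  have := dt_trans g g.symm
  rw [ContinuousLinearEquiv.self_trans_symm, dt_refl] at this
  exact eq_inv_of_mul_eq_one_left this.symm

lemma dt_le {k : ℕ} (g : Euc k ≃L[ℝ] Euc k) : dt g ≤ ‖(g : Euc k →L[ℝ] Euc k)‖ ^ k := by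
  have h1 := Measure.addHaar_image_continuousLinearMap (volume : Measure (Euc k))
    (g : Euc k →L[ℝ] Euc k) (closedBall 0 1)
  have h2 : (g : Euc k →L[ℝ] Euc k) '' closedBall 0 1 ⊆ closedBall 0 ‖(g : Euc k →L[ℝ] Euc k)‖ := by
    rintro _ ⟨x, hx, rfl⟩
    rw [mem_closedBall_zero_iff] at hx ⊢
    exact ContinuousLinearMap.unit_le_opNorm _ _ hx
  have h3 := measure_mono (μ := (volume : Measure (Euc k))) h2
  rw [h1, Measure.addHaar_closedBall _ _ (norm_nonneg _), finrank_euclideanSpace_fin,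
    Measure.addHaar_closedBall _ _ zero_le_one] at h3
  simp only [one_pow, ENNReal.ofReal_one, one_mul] at h3
  have h4 := (ENNReal.mul_le_mul_iff_left (measure_ball_pos volume (0 : Euc k) one_pos).ne'
    measure_ball_lt_top.ne).1 h3
  exact (ENNReal.ofReal_le_ofReal_iff (by positivity)).1 h4

lemma Coiso.sum_sq {k : ℕ} {T : Euc n →L[ℝ] Euc k} (hT : Coiso T)
    (b : OrthonormalBasis (Fin n) ℝ (Euc n)) : ∑ i, ‖T (b i)‖ ^ 2 = k := by
  set e := EuclideanSpace.basisFun (Fin k) ℝ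
  have h1 : ∀ i, ‖T (b i)‖ ^ 2 = ∑ l, ⟪b i, ContinuousLinearMap.adjoint T (e l)⟫ ^ 2 := by
    intro i
    rw [← e.sum_sq_norm_inner_left (T (b i))]
    refine Finset.sum_congr rfl fun l _ => ?_
    rw [Real.norm_eq_abs, sq_abs, ContinuousLinearMap.adjoint_inner_right]
  simp_rw [h1]
  rw [Finset.sum_comm]
  have h2 : ∀ l, ∑ i, ⟪b i, ContinuousLinearMap.adjoint T (e l)⟫ ^ 2 = 1 := by
    intro l
    have := b.sum_sq_norm_inner_right (ContinuousLinearMap.adjoint T (e l))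
    simp only [Real.norm_eq_abs, sq_abs] at this
    rw [this, hT.norm_adjoint]
    simp [e]
  simp [h2]

/-- Coordinate functional along `b`, with values in `ℝ¹`. -/
noncomputable def coord (b : Euc n) : Euc n →L[ℝ] Euc 1 :=
  (innerSL ℝ b).smulRight (EuclideanSpace.single 0 1)

lemma norm_coord (b x : Euc n) : ‖coord b x‖ = |⟪b, x⟫| := by
  simp [coord, norm_smul]

lemma coiso_coord (b : Euc n) (hb : ‖b‖ = 1) : Coiso (coord b) := by
  intro ζ
  have h1 : ContinuousLinearMap.adjoint (coord b) ζ = ζ 0 • b := by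
    refine ext_inner_right ℝ fun x => ?_
    rw [ContinuousLinearMap.adjoint_inner_left, inner_smul_left]
    have : ⟪ζ, EuclideanSpace.single 0 1⟫ = ζ 0 := by
      rw [EuclideanSpace.inner_single_right]; simp
    simp only [coord, ContinuousLinearMap.smulRight_apply, innerSL_apply_apply, inner_smul_right, this,
      conj_trivial]
    ring
  rw [h1, map_smul]
  have h2 : coord b b = EuclideanSpace.single 0 1 := by
    simp [coord, hb]
  rw [h2]
  ext i
  fin_cases i
  simp

/-- A near-geometric datum is completed to a geometric one by rank one pieces: its deficiency
`(1 + 2η) - ∑ p_j T_j* T_j` is diagonalised. -/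
lemma exists_completion (T : ∀ j, Euc n →L[ℝ] Euc (nn j)) (hT : ∀ j, Coiso (T j)) (p : ι → ℝ)
    (hdim : ∑ j, p j * (nn j : ℝ) = n) (η : ℝ) (hη : 0 < η)
    (hdef : ∀ v, ∑ j, p j * ‖T j v‖ ^ 2 ≤ (1 + η) * ‖v‖ ^ 2) :
    ∃ (b : OrthonormalBasis (Fin n) ℝ (Euc n)) (q : Fin n → ℝ), (∀ i, 0 < q i) ∧
      ∑ i, q i = n * (2 * η) ∧
      ∀ v, ∑ j, p j * ‖T j v‖ ^ 2 + ∑ i, q i * ⟪b i, v⟫ ^ 2 = (1 + 2 * η) * ‖v‖ ^ 2 := by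
  set Q : Euc n →L[ℝ] Euc n := (1 + 2 * η) • ContinuousLinearMap.id ℝ (Euc n) -
    ∑ j, p j • (ContinuousLinearMap.adjoint (T j) ∘L T j) with hQ
  have hQi : ∀ u v, ⟪Q u, v⟫ = (1 + 2 * η) * ⟪u, v⟫ - ∑ j, p j * ⟪T j u, T j v⟫ := by
    intro u v
    simp only [hQ, _root_.sub_apply, _root_.smul_apply,
      ContinuousLinearMap.id_apply, inner_sub_left, inner_smul_left, conj_trivial,
      _root_.sum_apply, sum_inner, ContinuousLinearMap.comp_apply,
      ContinuousLinearMap.adjoint_inner_left]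
  have hsym : (Q : Euc n →ₗ[ℝ] Euc n).IsSymmetric := by
    intro u v
    have h1 := hQi u v
    have h2 := hQi v u
    rw [ContinuousLinearMap.coe_coe, h1, real_inner_comm (Q v), h2, real_inner_comm]
    congr 1
    exact Finset.sum_congr rfl fun j _ => by rw [real_inner_comm]
  have hn : Module.finrank ℝ (Euc n) = n := finrank_euclideanSpace_fin
  set b := hsym.eigenvectorBasis hn with hb
  set q := hsym.eigenvalues hn with hq
  have hQb : ∀ i, Q (b i) = q i • b i := fun i => hsym.apply_eigenvectorBasis hn i
  have hQq : ∀ v, ⟪Q v, v⟫ = ∑ i, q i * ⟪b i, v⟫ ^ 2 := by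
    intro v
    rw [← b.sum_inner_mul_inner (Q v) v]
    refine Finset.sum_congr rfl fun i _ => ?_
    have : ⟪Q v, b i⟫ = q i * ⟪b i, v⟫ := by
      have h := hsym v (b i)
      simp only [ContinuousLinearMap.coe_coe] at h
      rw [h, hQb, inner_smul_right, real_inner_comm]
    rw [this]; ring
  have hqi : ∀ i, q i = (1 + 2 * η) - ∑ j, p j * ‖T j (b i)‖ ^ 2 := by
    intro i
    have h1 := hQi (b i) (b i)
    rw [hQb, inner_smul_left, real_inner_self_eq_norm_sq, b.norm_eq_one i] at h1
    simp only [conj_trivial, one_pow, mul_one, real_inner_self_eq_norm_sq] at h1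
    exact h1
  refine ⟨b, q, fun i => ?_, ?_, fun v => ?_⟩
  · have := hdef (b i)
    rw [b.norm_eq_one i] at this
    rw [hqi]; linarith
  · simp_rw [hqi]
    rw [Finset.sum_sub_distrib, Finset.sum_comm]
    simp_rw [← Finset.mul_sum, (hT _).sum_sq b]
    rw [hdim]; simp only [Finset.sum_const, Finset.card_univ, Fintype.card_fin, nsmul_eq_mul]; ring
  · rw [← hQq, hQi]
    simp only [real_inner_self_eq_norm_sq]; ring

/-- Localised near-geometric inequality for bounded inputs: the rank one pieces of
`exists_completion` receive Gaussians of width `ρ` as inputs, and the excess of the exponents is paid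
for by the bounds `M j`. -/
theorem near_geometric (T : ∀ j, Euc n →L[ℝ] Euc (nn j)) (hT : ∀ j, Coiso (T j)) (p : ι → ℝ)
    (hp : ∀ j, 0 < p j) (hdim : ∑ j, p j * (nn j : ℝ) = n) (η : ℝ) (hη : 0 < η)
    (hdef : ∀ v, ∑ j, p j * ‖T j v‖ ^ 2 ≤ (1 + η) * ‖v‖ ^ 2)
    (f : ∀ j, Euc (nn j) → ℝ≥0∞) (hf : ∀ j, Measurable (f j)) (hfi : ∀ j, ∫⁻ z, f j z ≠ ⊤)
    (M : ι → ℝ) (hM : ∀ j, 0 < M j) (hfM : ∀ j z, f j z ≤ ENNReal.ofReal (M j) * ∫⁻ z, f j z)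
    (ρ : ℝ) (hρ : 0 < ρ) :
    ∫⁻ x in closedBall 0 ρ, ∏ j, (f j (T j x)) ^ p j ≤
      ENNReal.ofReal (rexp (2 * π * n * η) *
        (ρ ^ n * ∏ j, M j ^ p j) ^ (2 * η / (1 + 2 * η))) * ∏ j, (∫⁻ z, f j z) ^ p j := by
  obtain ⟨b, q, hq, hqs, hgeo⟩ := exists_completion T hT p hdim η hη hdef
  set e := 1 + 2 * η with he
  have he0 : 0 < e := by positivity
  have he1 : 1 ≤ e := by linarith
  set nn' : ι ⊕ Fin n → ℕ := Sum.elim nn (fun _ => 1) with hnn'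
  let T' : ∀ k, Euc n →L[ℝ] Euc (nn' k) := fun k => match k with
    | Sum.inl j => T j
    | Sum.inr i => coord (b i)
  let F' : ∀ k, Euc (nn' k) → ℝ≥0∞ := fun k => match k with
    | Sum.inl j => fun z => f j z ^ e
    | Sum.inr _ => fun z => gE (ρ⁻¹ • z)
  set p' : ι ⊕ Fin n → ℝ := Sum.elim (fun j => p j / e) (fun i => q i / e) with hp'
  have hfle : ∀ j, ∫⁻ z, f j z ^ e ≤
      (ENNReal.ofReal (M j) * ∫⁻ z, f j z) ^ (2 * η) * ∫⁻ z, f j z := by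
    intro j
    rw [← lintegral_const_mul _ (hf j)]
    refine lintegral_mono fun z => ?_
    have : f j z ^ e = f j z ^ (2 * η) * f j z := by
      rw [he, add_comm, ENNReal.rpow_add_of_nonneg _ _ (by positivity) zero_le_one, ENNReal.rpow_one]
    rw [this]
    gcongr
    exact hfM j z
  have hgi : ∫⁻ z : Euc 1, gE (ρ⁻¹ • z) = ENNReal.ofReal ρ := by
    rw [lintegral_comp_smul ρ hρ, pow_one]
    simp_rw [smul_smul, inv_mul_cancel₀ hρ.ne', one_smul]
    rw [lintegral_gE, mul_one]
  have key : ∫⁻ x, ∏ k, (F' k (T' k x)) ^ p' k ≤ ∏ k, (∫⁻ z, F' k z) ^ p' k := by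
    refine geometric_BL T' ?_ p' ?_ ?_ ?_ F' ?_ ?_
    · rintro (j | i)
      · exact hT j
      · exact coiso_coord _ (b.norm_eq_one i)
    · rintro (j | i)
      · exact div_pos (hp j) he0
      · exact div_pos (hq i) he0
    · intro x
      rw [Fintype.sum_sum_type]
      have h1 := hgeo x
      have h2 : ∑ i, q i * ⟪b i, x⟫ ^ 2 = ∑ i, q i * ‖coord (b i) x‖ ^ 2 :=
        Finset.sum_congr rfl fun i _ => by rw [norm_coord, sq_abs]
      simp only [T', p', Sum.elim_inl, Sum.elim_inr, div_mul_eq_mul_div]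
      rw [h2] at h1
      rw [← Finset.sum_div, ← Finset.sum_div, ← add_div]
      refine (div_eq_iff he0.ne').2 ?_
      rw [mul_comm]; exact h1
    · rw [Fintype.sum_sum_type]
      simp only [p', Sum.elim_inl, Sum.elim_inr, hnn', div_mul_eq_mul_div]
      rw [← Finset.sum_div, ← Finset.sum_div, ← add_div, hdim]
      simp only [Nat.cast_one, mul_one]
      rw [hqs, he]; field_simp
    · rintro (j | i)
      · exact (hf j).pow_const _
      · exact measurable_gE.comp (by fun_prop)
    · rintro (j | i)
      · refine ne_top_of_le_ne_top ?_ (hfle j)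
        exact ENNReal.mul_ne_top (ENNReal.rpow_ne_top_of_nonneg (by positivity)
          (ENNReal.mul_ne_top ENNReal.ofReal_ne_top (hfi j))) (hfi j)
      · change ∫⁻ z : Euc 1, gE (ρ⁻¹ • z) ≠ ⊤
        rw [hgi]; exact ENNReal.ofReal_ne_top
  have hpow : ∀ j (y : ℝ≥0∞), (y ^ e) ^ (p j / e) = y ^ p j := fun j y => by
    rw [← ENNReal.rpow_mul, mul_div_cancel₀ _ he0.ne']
  have hL : ENNReal.ofReal (rexp (-(2 * π * n * η))) *
      ∫⁻ x in closedBall 0 ρ, ∏ j, (f j (T j x)) ^ p j ≤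
      ∫⁻ x, ∏ k, (F' k (T' k x)) ^ p' k := by
    rw [← lintegral_const_mul' _ _ ENNReal.ofReal_ne_top]
    refine le_trans (setLIntegral_mono' measurableSet_closedBall fun x hx => ?_)
      (setLIntegral_le_lintegral (closedBall 0 ρ) _)
    rw [Fintype.prod_sum_type, mul_comm]
    simp only [T', F', p', Sum.elim_inl, Sum.elim_inr, hpow]
    refine mul_le_mul_right ?_ _
    change _ ≤ ∏ i, ENNReal.ofReal (rexp (-π * ‖ρ⁻¹ • coord (b i) x‖ ^ 2)) ^ (q i / e)
    have : ∀ i, ENNReal.ofReal (rexp (-π * ‖ρ⁻¹ • coord (b i) x‖ ^ 2)) ^ (q i / e) =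
        ENNReal.ofReal (rexp ((-π * ‖ρ⁻¹ • coord (b i) x‖ ^ 2) * (q i / e))) := fun i => by
      rw [ENNReal.ofReal_rpow_of_nonneg (Real.exp_pos _).le (div_pos (hq i) he0).le,
        ← Real.exp_mul]
    simp_rw [this]
    rw [← ENNReal.ofReal_prod_of_nonneg (fun _ _ => (Real.exp_pos _).le), ← Real.exp_sum]
    refine ENNReal.ofReal_le_ofReal (Real.exp_le_exp.2 ?_)
    have hx' : ‖x‖ ≤ ρ := by simpa using hx
    have h1 : ∀ i, -(π * q i) ≤ -π * ‖ρ⁻¹ • coord (b i) x‖ ^ 2 * (q i / e) := by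
      intro i
      have h2 : ‖ρ⁻¹ • coord (b i) x‖ ≤ 1 := by
        rw [norm_smul, norm_inv, Real.norm_of_nonneg hρ.le, norm_coord, inv_mul_le_one₀ hρ]
        refine (abs_real_inner_le_norm _ _).trans ?_
        rw [b.norm_eq_one, one_mul]; exact hx'
      have h3 : ‖ρ⁻¹ • coord (b i) x‖ ^ 2 ≤ 1 := pow_le_one₀ (norm_nonneg _) h2
      have h4 : q i / e ≤ q i := div_le_self (hq i).le he1
      have h5 : ‖ρ⁻¹ • coord (b i) x‖ ^ 2 * (q i / e) ≤ 1 * q i := by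
        have := (div_pos (hq i) he0).le
        gcongr
      have := mul_le_mul_of_nonneg_left h5 Real.pi_pos.le
      linarith
    calc -(2 * π * n * η) = ∑ i, -(π * q i) := by
          rw [Finset.sum_neg_distrib, ← Finset.mul_sum, hqs]; ring
      _ ≤ _ := Finset.sum_le_sum fun i _ => h1 i
  have hR : ∏ k, (∫⁻ z, F' k z) ^ p' k ≤
      ENNReal.ofReal ((ρ ^ n * ∏ j, M j ^ p j) ^ (2 * η / e)) * ∏ j, (∫⁻ z, f j z) ^ p j := by
    rw [Fintype.prod_sum_type]
    have h1 : ∀ j, (∫⁻ z, f j z ^ e) ^ (p j / e) ≤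
        ENNReal.ofReal ((M j ^ p j) ^ (2 * η / e)) * (∫⁻ z, f j z) ^ p j := by
      intro j
      have hpe : 0 ≤ p j / e := (div_pos (hp j) he0).le
      refine (ENNReal.rpow_le_rpow (hfle j) hpe).trans (le_of_eq ?_)
      rw [ENNReal.mul_rpow_of_nonneg _ _ (by positivity : 0 ≤ 2 * η), mul_assoc,
        ENNReal.mul_rpow_of_nonneg _ _ hpe]
      congr 1
      · rw [ENNReal.ofReal_rpow_of_pos (hM j), ENNReal.ofReal_rpow_of_pos (by have := hM j; positivity),
          ← Real.rpow_mul (hM j).le, ← Real.rpow_mul (hM j).le]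
        congr 2; field_simp
      · have : ∀ y : ℝ≥0∞, y ^ (2 * η) * y = y ^ e := fun y => by
          rw [he, add_comm, ENNReal.rpow_add_of_nonneg _ _ (by positivity) zero_le_one,
            ENNReal.rpow_one]
        rw [this, hpow]
    have h2 : ∏ i : Fin n, (∫⁻ z : Euc 1, gE (ρ⁻¹ • z)) ^ (q i / e) =
        ENNReal.ofReal ((ρ ^ n) ^ (2 * η / e)) := by
      rw [hgi]
      simp_rw [ENNReal.ofReal_rpow_of_pos hρ]
      rw [← ENNReal.ofReal_prod_of_nonneg (fun _ _ => by positivity),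
        ← Real.rpow_sum_of_pos hρ, ← Finset.sum_div, hqs, ← Real.rpow_natCast, ← Real.rpow_mul hρ.le,
        mul_div_assoc]
    have hMp : ∀ j ∈ Finset.univ, 0 ≤ M j ^ p j := fun j _ => by have := hM j; positivity
    calc _ ≤ (∏ j, (ENNReal.ofReal ((M j ^ p j) ^ (2 * η / e)) * (∫⁻ z, f j z) ^ p j)) *
          ∏ i : Fin n, (∫⁻ z : Euc 1, gE (ρ⁻¹ • z)) ^ (q i / e) :=
          mul_le_mul_left (Finset.prod_le_prod' fun j _ => h1 j) _
      _ = _ := by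
          rw [h2, Finset.prod_mul_distrib, Real.mul_rpow (by positivity) (Finset.prod_nonneg hMp),
            ENNReal.ofReal_mul (by positivity), ← ENNReal.ofReal_prod_of_nonneg
            (fun j hj => Real.rpow_nonneg (hMp j hj) _), Real.finsetProd_rpow _ _ hMp]
          ring
  have hfin := hL.trans (key.trans hR)
  calc _ = ENNReal.ofReal (rexp (2 * π * n * η)) * (ENNReal.ofReal (rexp (-(2 * π * n * η))) *
        ∫⁻ x in closedBall 0 ρ, ∏ j, (f j (T j x)) ^ p j) := by
        rw [← mul_assoc, ← ENNReal.ofReal_mul (Real.exp_pos _).le, ← Real.exp_add]; simp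
    _ ≤ _ := by
        rw [ENNReal.ofReal_mul (Real.exp_pos _).le, mul_assoc (ENNReal.ofReal _)]
        exact mul_le_mul_right hfin _

/-- A frame of `A`: linear changes of variables turning every `A j` into a coisometry. -/
structure Frame (A : ∀ j, Euc n →L[ℝ] Euc (nn j)) where
  /-- change of variables in the source -/
  g : Euc n ≃L[ℝ] Euc n
  /-- changes of variables in the targets -/
  H : ∀ j, Euc (nn j) ≃L[ℝ] Euc (nn j)
  coiso : ∀ j, Coiso ((H j : Euc (nn j) →L[ℝ] Euc (nn j)) ∘L A j ∘L (g : Euc n →L[ℝ] Euc n))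

/-- The value `|det g| ∏ |det H_j|^{p_j}` of a frame. For a frame of defect zero it is the
Brascamp–Lieb quotient of the Gaussians `exp (-π ‖H_j z‖²)`. -/
noncomputable def Frame.val {A : ∀ j, Euc n →L[ℝ] Euc (nn j)} (F : Frame A) (p : ι → ℝ) : ℝ :=
  dt F.g * ∏ j, dt (F.H j) ^ p j

/-- The defect of a frame is at most `η`: `∑ p_j T_j* T_j ≤ 1 + η`. -/
def Frame.Defect {A : ∀ j, Euc n →L[ℝ] Euc (nn j)} (F : Frame A) (p : ι → ℝ) (η : ℝ) : Prop :=
  ∀ v, ∑ j, p j * ‖F.H j (A j (F.g v))‖ ^ 2 ≤ (1 + η) * ‖v‖ ^ 2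

lemma Frame.val_pos {A : ∀ j, Euc n →L[ℝ] Euc (nn j)} (F : Frame A) (p : ι → ℝ) : 0 < F.val p :=
  mul_pos (dt_pos _) (Finset.prod_pos fun j _ => Real.rpow_pos_of_pos (dt_pos _) _)

lemma lintegral_equiv {k : ℕ} (g : Euc k ≃L[ℝ] Euc k) (f : Euc k → ℝ≥0∞) :
    ∫⁻ x, f x = ENNReal.ofReal (dt g) * ∫⁻ x, f (g x) := lintegral_comp_equiv g f

/-- Localised inequality in a frame of small defect, for bounded inputs. -/
theorem frame_bound {A : ∀ j, Euc n →L[ℝ] Euc (nn j)} (F : Frame A) (p : ι → ℝ)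
    (hp : ∀ j, 0 < p j) (hdim : ∑ j, p j * (nn j : ℝ) = n) (η : ℝ) (hη : 0 < η)
    (hdef : F.Defect p η)
    (f : ∀ j, Euc (nn j) → ℝ≥0∞) (hf : ∀ j, Measurable (f j)) (hfi : ∀ j, ∫⁻ z, f j z ≠ ⊤)
    (M : ι → ℝ) (hM : ∀ j, 0 < M j) (hfM : ∀ j z, f j z ≤ ENNReal.ofReal (M j) * ∫⁻ z, f j z)
    (ρ : ℝ) (hρ : 0 < ρ) (S : Set (Euc n)) (hS : ∀ x ∈ S, ‖F.g.symm x‖ ≤ ρ) :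
    ∫⁻ x in S, ∏ j, (f j (A j x)) ^ p j ≤
      ENNReal.ofReal (F.val p * (rexp (2 * π * n * η) *
        (ρ ^ n * ∏ j, (M j / dt (F.H j)) ^ p j) ^ (2 * η / (1 + 2 * η)))) *
        ∏ j, (∫⁻ z, f j z) ^ p j := by
  set f' : ∀ j, Euc (nn j) → ℝ≥0∞ := fun j z => f j ((F.H j).symm z) with hf'
  have hIntg : ∀ j, ∫⁻ z, f' j z = ENNReal.ofReal (dt (F.H j)) * ∫⁻ z, f j z := by
    intro j
    rw [lintegral_equiv (F.H j)]
    simp [hf']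
  have hd : ∀ j, 0 < dt (F.H j) := fun j => dt_pos _
  have key := near_geometric (fun j => (F.H j : Euc (nn j) →L[ℝ] Euc (nn j)) ∘L A j ∘L
    (F.g : Euc n →L[ℝ] Euc n)) F.coiso p hp hdim η hη hdef f'
    (fun j => (hf j).comp (F.H j).symm.continuous.measurable)
    (fun j => by rw [hIntg]; exact ENNReal.mul_ne_top ENNReal.ofReal_ne_top (hfi j))
    (fun j => M j / dt (F.H j)) (fun j => div_pos (hM j) (hd j))
    (fun j z => by
      rw [hIntg, ← mul_assoc, ← ENNReal.ofReal_mul (div_pos (hM j) (hd j)).le,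
        div_mul_cancel₀ _ (hd j).ne']
      exact hfM j _) ρ hρ
  have e1 : ∫⁻ x in S, ∏ j, (f j (A j x)) ^ p j ≤ ENNReal.ofReal (dt F.g) *
      ∫⁻ x in closedBall 0 ρ, ∏ j, (f' j (F.H j (A j (F.g x)))) ^ p j := by
    have hsub : S ⊆ F.g.symm ⁻¹' closedBall 0 ρ := fun x hx => by
      simpa using hS x hx
    have hms : MeasurableSet (F.g.symm ⁻¹' closedBall (0 : Euc n) ρ) :=
      F.g.symm.continuous.measurable measurableSet_closedBall
    refine (lintegral_mono_set hsub).trans ?_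
    rw [← lintegral_indicator hms, ← lintegral_indicator measurableSet_closedBall,
      lintegral_equiv F.g]
    refine mul_le_mul_right (lintegral_mono fun x => ?_) _
    by_cases hx : x ∈ closedBall (0 : Euc n) ρ
    · rw [Set.indicator_of_mem hx, Set.indicator_of_mem (by simpa using hx)]
      simp [hf']
    · rw [Set.indicator_of_notMem (by simpa using hx)]; simp
  refine e1.trans ((mul_le_mul_right key _).trans (le_of_eq ?_))
  have e2 : ∏ j, (∫⁻ z, f' j z) ^ p j =
      ENNReal.ofReal (∏ j, dt (F.H j) ^ p j) * ∏ j, (∫⁻ z, f j z) ^ p j := by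
    rw [ENNReal.ofReal_prod_of_nonneg (fun j _ => by have := hd j; positivity),
      ← Finset.prod_mul_distrib]
    refine Finset.prod_congr rfl fun j _ => ?_
    rw [hIntg, ENNReal.mul_rpow_of_nonneg _ _ (hp j).le, ENNReal.ofReal_rpow_of_pos (hd j)]
  have hpr : 0 ≤ ∏ j, dt (F.H j) ^ p j := Finset.prod_nonneg fun j _ => by
    have := hd j; positivity
  rw [e2, Frame.val, ENNReal.ofReal_mul (mul_nonneg (dt_pos _).le hpr),
    ENNReal.ofReal_mul (dt_pos _).le]
  ring

end NBL

/-! ### Comparing and improving frames -/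

namespace NBL
open Filter Topology
open scoped RealInnerProductSpace
variable {ι : Type} [Fintype ι] {nn : ι → ℕ} {n : ℕ}

/-- A surjective map becomes a coisometry after a change of variables in the target: the
orthogonal complement of its kernel is identified isometrically with the target. -/
lemma exists_coiso {k : ℕ} (A : Euc n →L[ℝ] Euc k) (hA : Function.Surjective A) :
    ∃ H : Euc k ≃L[ℝ] Euc k, Coiso ((H : Euc k →L[ℝ] Euc k) ∘L A) := by
  set W : Submodule ℝ (Euc n) := (LinearMap.ker (A : Euc n →ₗ[ℝ] Euc k))ᗮ with hW
  have hinj : Function.Injective ((A : Euc n →ₗ[ℝ] Euc k).domRestrict W) := by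
    rw [← LinearMap.ker_eq_bot, LinearMap.ker_eq_bot']
    intro x hx
    have h1 : (x : Euc n) ∈ LinearMap.ker (A : Euc n →ₗ[ℝ] Euc k) := hx
    have h2 := Submodule.inner_right_of_mem_orthogonal h1 x.2
    have h3 : (x : Euc n) = 0 := inner_self_eq_zero.1 h2
    exact Subtype.ext h3
  have hproj : ∀ x : Euc n, A (W.starProjection x) = A x := by
    intro x
    have h1 : x - W.starProjection x ∈ Wᗮ := Submodule.sub_starProjection_mem_orthogonal x
    have h1' : x - W.starProjection x ∈ (LinearMap.ker (A : Euc n →ₗ[ℝ] Euc k))ᗮᗮ := h1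
    rw [Submodule.orthogonal_orthogonal] at h1'
    have h2 : A (x - W.starProjection x) = 0 := h1'
    rw [map_sub, sub_eq_zero] at h2
    exact h2.symm
  have hsur : Function.Surjective ((A : Euc n →ₗ[ℝ] Euc k).domRestrict W) := by
    intro y
    obtain ⟨x, rfl⟩ := hA y
    refine ⟨⟨W.starProjection x, Submodule.starProjection_apply_mem _ _⟩, ?_⟩
    exact hproj x
  set e : W ≃ₗ[ℝ] Euc k := LinearEquiv.ofBijective _ ⟨hinj, hsur⟩ with he
  have hdim : Module.finrank ℝ W = k := by
    rw [e.finrank_eq]; simp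
  set φ : W ≃ₗᵢ[ℝ] Euc k := ((stdOrthonormalBasis ℝ W).reindex (finCongr hdim)).repr with hφ
  set H : Euc k ≃L[ℝ] Euc k := (e.symm.trans φ.toLinearEquiv).toContinuousLinearEquiv with hH
  have hHA : ∀ x : Euc n, H (A x) = φ ⟨W.starProjection x, Submodule.starProjection_apply_mem _ _⟩ := by
    intro x
    have : A x = e ⟨W.starProjection x, Submodule.starProjection_apply_mem _ _⟩ := (hproj x).symm
    rw [this]
    simp [hH]
  refine ⟨H, fun ζ => ?_⟩
  have hadj : ContinuousLinearMap.adjoint ((H : Euc k →L[ℝ] Euc k) ∘L A) ζ = (φ.symm ζ : Euc n) := by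
    refine ext_inner_right ℝ fun x => ?_
    rw [ContinuousLinearMap.adjoint_inner_left]
    change ⟪ζ, H (A x)⟫ = _
    rw [hHA]
    have h1 : ⟪ζ, φ ⟨W.starProjection x, Submodule.starProjection_apply_mem _ _⟩⟫ =
      ⟪φ.symm ζ, (⟨W.starProjection x, Submodule.starProjection_apply_mem _ _⟩ : W)⟫ := by
      conv_lhs => rw [← φ.apply_symm_apply ζ]
      rw [φ.inner_map_map]
    rw [h1]
    change ⟪(φ.symm ζ : Euc n), W.starProjection x⟫ = _
    rw [← Submodule.inner_starProjection_left_eq_right, Submodule.starProjection_eq_self_iff.2 (φ.symm ζ).2]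
  rw [hadj]
  change H (A _) = ζ
  rw [hHA]
  have : (⟨W.starProjection (φ.symm ζ : Euc n), Submodule.starProjection_apply_mem _ _⟩ : W) = φ.symm ζ :=
    Subtype.ext (Submodule.starProjection_eq_self_iff.2 (φ.symm ζ).2)
  rw [this, φ.apply_symm_apply]

/-- The Gram determinant `det (T T*)`. -/
noncomputable def gr {k : ℕ} (T : Euc n →L[ℝ] Euc k) : ℝ :=
  LinearMap.det ((T ∘L ContinuousLinearMap.adjoint T : Euc k →L[ℝ] Euc k) : Euc k →ₗ[ℝ] Euc k)

lemma det_adjoint {k : ℕ} (K : Euc k →L[ℝ] Euc k) :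
    LinearMap.det ((ContinuousLinearMap.adjoint K : Euc k →L[ℝ] Euc k) : Euc k →ₗ[ℝ] Euc k) =
      LinearMap.det (K : Euc k →ₗ[ℝ] Euc k) := by
  have h := LinearMap.toMatrix_adjoint (EuclideanSpace.basisFun (Fin k) ℝ)
    (EuclideanSpace.basisFun (Fin k) ℝ) (K : Euc k →ₗ[ℝ] Euc k)
  rw [← LinearMap.det_toMatrix (EuclideanSpace.basisFun (Fin k) ℝ).toBasis,
    ← LinearMap.det_toMatrix (EuclideanSpace.basisFun (Fin k) ℝ).toBasis (K : Euc k →ₗ[ℝ] Euc k)]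
  have e : ((ContinuousLinearMap.adjoint K : Euc k →L[ℝ] Euc k) : Euc k →ₗ[ℝ] Euc k) =
    LinearMap.adjoint (K : Euc k →ₗ[ℝ] Euc k) := rfl
  rw [e, h, Matrix.det_conjTranspose]
  simp

lemma coiso_gr {k : ℕ} (T : Euc n →L[ℝ] Euc k) (K : Euc k ≃L[ℝ] Euc k)
    (h : Coiso ((K : Euc k →L[ℝ] Euc k) ∘L T)) : dt K ^ 2 * gr T = 1 := by
  have h1 : ((K : Euc k →L[ℝ] Euc k) : Euc k →ₗ[ℝ] Euc k) ∘ₗ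
      ((T ∘L ContinuousLinearMap.adjoint T : Euc k →L[ℝ] Euc k) : Euc k →ₗ[ℝ] Euc k) ∘ₗ
      ((ContinuousLinearMap.adjoint (K : Euc k →L[ℝ] Euc k) : Euc k →L[ℝ] Euc k) :
        Euc k →ₗ[ℝ] Euc k) = LinearMap.id := by
    ext1 ζ
    have := h ζ
    rw [ContinuousLinearMap.adjoint_comp] at this
    exact this
  have h2 := congrArg LinearMap.det h1
  rw [LinearMap.det_comp, LinearMap.det_comp, det_adjoint, LinearMap.det_id] at h2
  have hd : dt K = |LinearMap.det ((K : Euc k →L[ℝ] Euc k) : Euc k →ₗ[ℝ] Euc k)| := rfl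
  rw [hd, sq_abs, gr, ← h2]
  ring

lemma gr_pos {k : ℕ} (T : Euc n →L[ℝ] Euc k) (hT : Function.Surjective T) : 0 < gr T := by
  obtain ⟨H, hH⟩ := exists_coiso T hT
  have := coiso_gr T H hH
  have h2 : 0 < dt H ^ 2 := by have := dt_pos H; positivity
  by_contra h
  push Not at h
  nlinarith

/-- The target change of variables making `T` a coisometry has a determinant depending only
on `T`. -/
lemma dt_eq_gr {k : ℕ} (T : Euc n →L[ℝ] Euc k) (K : Euc k ≃L[ℝ] Euc k)
    (h : Coiso ((K : Euc k →L[ℝ] Euc k) ∘L T)) (p : ℝ) : dt K ^ p = gr T ^ (-(p / 2)) := by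
  have h1 := coiso_gr T K h
  have h2 := dt_pos K
  have h3 : gr T = (dt K ^ 2)⁻¹ := eq_inv_of_mul_eq_one_right h1
  rw [h3, Real.inv_rpow (by positivity), Real.rpow_neg (by positivity), inv_inv, ← Real.rpow_natCast,
    ← Real.rpow_mul h2.le]
  congr 1; push_cast; ring

/-- The maps of a datum in the coordinates of a frame. -/
noncomputable def Frame.T {A : ∀ j, Euc n →L[ℝ] Euc (nn j)} (F : Frame A) (j : ι) :
    Euc n →L[ℝ] Euc (nn j) :=
  (F.H j : Euc (nn j) →L[ℝ] Euc (nn j)) ∘L A j ∘L (F.g : Euc n →L[ℝ] Euc n)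

lemma Frame.T_apply {A : ∀ j, Euc n →L[ℝ] Euc (nn j)} (F : Frame A) (j : ι) (x : Euc n) :
    F.T j x = F.H j (A j (F.g x)) := rfl

/-- The factor by which the value of a frame with maps `T` changes when its source change of
variables is composed with `h`. -/
noncomputable def ratio (T : ∀ j, Euc n →L[ℝ] Euc (nn j)) (p : ι → ℝ) (h : Euc n ≃L[ℝ] Euc n) : ℝ :=
  dt h * ∏ j, gr (T j ∘L (h : Euc n →L[ℝ] Euc n)) ^ (-(p j / 2))

/-- The values of two frames of the same datum compare through the change of variables
between their source coordinates only. -/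
lemma Frame.val_eq {A : ∀ j, Euc n →L[ℝ] Euc (nn j)} (F F' : Frame A) (p : ι → ℝ) :
    F'.val p = F.val p * ratio F.T p (F'.g.trans F.g.symm) := by
  have h1 : ∀ j, dt (F'.H j) ^ p j = dt (F.H j) ^ p j *
      gr (F.T j ∘L ((F'.g.trans F.g.symm : Euc n ≃L[ℝ] Euc n) : Euc n →L[ℝ] Euc n)) ^ (-(p j / 2)) := by
    intro j
    rw [← dt_eq_gr _ ((F.H j).symm.trans (F'.H j)), dt_trans, dt_symm,
      Real.mul_rpow (dt_pos _).le (inv_pos.2 (dt_pos _)).le, Real.inv_rpow (dt_pos _).le]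
    · have := Real.rpow_pos_of_pos (dt_pos (F.H j)) (p j)
      field_simp
    · convert F'.coiso j using 1
      ext1 x
      simp [Frame.T]
  unfold Frame.val ratio
  rw [Finset.prod_congr rfl fun j _ => h1 j, Finset.prod_mul_distrib, dt_trans, dt_symm]
  have := dt_pos F.g
  field_simp

/-- The source change of variables of a frame can be prescribed. -/
lemma Frame.exists_move {A : ∀ j, Euc n →L[ℝ] Euc (nn j)} (hA : ∀ j, Function.Surjective (A j))
    (g : Euc n ≃L[ℝ] Euc n) : ∃ F : Frame A, F.g = g := by
  have : ∀ j, ∃ H : Euc (nn j) ≃L[ℝ] Euc (nn j), Coiso ((H : Euc (nn j) →L[ℝ] Euc (nn j)) ∘L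
      (A j ∘L (g : Euc n →L[ℝ] Euc n))) := fun j =>
    exists_coiso _ ((hA j).comp g.surjective)
  choose H hH using this
  exact ⟨⟨g, H, hH⟩, rfl⟩

end NBL

namespace NBL
open Filter Topology
open scoped RealInnerProductSpace
variable {ι : Type} [Fintype ι] {nn : ι → ℕ} {n : ℕ}

/-- The map `x ↦ x + a ⟨v, x⟩ v`. -/
noncomputable def rk1 {k : ℕ} (a : ℝ) (v : Euc k) : Euc k →L[ℝ] Euc k :=
  ContinuousLinearMap.id ℝ _ + a • (innerSL ℝ v).smulRight v

lemma rk1_apply {k : ℕ} (a : ℝ) (v x : Euc k) : rk1 a v x = x + (a * ⟪v, x⟫) • v := by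
  simp [rk1, smul_smul]

lemma det_rk1 {k : ℕ} (a : ℝ) (v : Euc k) :
    LinearMap.det ((rk1 a v : Euc k →L[ℝ] Euc k) : Euc k →ₗ[ℝ] Euc k) = 1 + a * ‖v‖ ^ 2 := by
  have h := LinearMap.transvection.det (a • (innerSL ℝ v : Euc k →ₗ[ℝ] ℝ)) v
  have e : ((rk1 a v : Euc k →L[ℝ] Euc k) : Euc k →ₗ[ℝ] Euc k) =
      LinearMap.transvection (a • (innerSL ℝ v : Euc k →ₗ[ℝ] ℝ)) v := by
    ext1 x
    simp [rk1_apply, LinearMap.transvection.apply]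
  rw [e, h]
  simp

lemma rk1_adjoint {k : ℕ} (a : ℝ) (v : Euc k) : ContinuousLinearMap.adjoint (rk1 a v) = rk1 a v := by
  symm
  rw [ContinuousLinearMap.eq_adjoint_iff]
  intro x y
  rw [rk1_apply, rk1_apply, inner_add_left, inner_add_right, inner_smul_left, inner_smul_right,
    real_inner_comm x v]
  simp only [conj_trivial]
  ring

lemma rk1_comp {k : ℕ} (a b : ℝ) (v : Euc k) (hv : ‖v‖ = 1) (x : Euc k) :
    rk1 a v (rk1 b v x) = rk1 (a + b + a * b) v x := by
  simp only [rk1_apply]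
  rw [inner_add_right, inner_smul_right, real_inner_self_eq_norm_sq, hv, add_assoc, ← add_smul]
  congr 2; ring

lemma rk1_norm {k : ℕ} (a : ℝ) (v : Euc k) (hv : ‖v‖ = 1) (x : Euc k) :
    ‖rk1 a v x‖ ^ 2 = ‖x‖ ^ 2 + (2 * a + a ^ 2) * ⟪v, x⟫ ^ 2 := by
  rw [rk1_apply, norm_add_sq_real, inner_smul_right, norm_smul, hv, Real.norm_eq_abs, mul_one,
    sq_abs, real_inner_comm x v]
  ring

/-- Squeezing by `l^{-1/2}` along a unit vector `v` with `∑ p_j ‖T_j v‖² = l > 1` multiplies the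
value of a frame by at least `exp ((l - 1 - log l) / 2)`. -/
lemma step (T : ∀ j, Euc n →L[ℝ] Euc (nn j)) (hT : ∀ j, Coiso (T j)) (p : ι → ℝ)
    (hp : ∀ j, 0 ≤ p j) (v : Euc n) (hv : ‖v‖ = 1) (l : ℝ) (hl : l = ∑ j, p j * ‖T j v‖ ^ 2)
    (hl1 : 1 < l) :
    ∃ c : Euc n ≃L[ℝ] Euc n, (∀ x, ‖c x‖ ≤ ‖x‖) ∧ (∀ x, ‖c.symm x‖ ≤ √l * ‖x‖) ∧
      rexp ((l - 1 - Real.log l) / 2) ≤ ratio T p c := by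
  have hs1 : 1 < √l := by rw [Real.lt_sqrt (by norm_num)]; linarith
  have hs0 : 0 < √l := by linarith
  have hsq : √l ^ 2 = l := Real.sq_sqrt (by linarith)
  set q : ℝ := (√l)⁻¹ with hq
  have hq0 : 0 < q := by positivity
  have hq1 : q < 1 := inv_lt_one_of_one_lt₀ hs1
  have hqs : q * √l = 1 := inv_mul_cancel₀ hs0.ne'
  have hq2 : q ^ 2 = l⁻¹ := by rw [hq, inv_pow, hsq]
  have rk0 : ∀ x, rk1 0 v x = x := fun x => by simp [rk1_apply]
  set c : Euc n ≃L[ℝ] Euc n := ContinuousLinearEquiv.equivOfInverse (rk1 (q - 1) v) (rk1 (√l - 1) v)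
    (fun x => by
      rw [rk1_comp _ _ _ hv]
      have : √l - 1 + (q - 1) + (√l - 1) * (q - 1) = 0 := by linear_combination hqs
      rw [this, rk0])
    (fun x => by
      rw [rk1_comp _ _ _ hv]
      have : q - 1 + (√l - 1) + (q - 1) * (√l - 1) = 0 := by linear_combination hqs
      rw [this, rk0]) with hc
  have hcc : (c : Euc n →L[ℝ] Euc n) = rk1 (q - 1) v := rfl
  refine ⟨c, fun x => ?_, fun x => ?_, ?_⟩
  · change ‖rk1 (q - 1) v x‖ ≤ _
    rw [← sq_le_sq₀ (norm_nonneg _) (norm_nonneg _), rk1_norm _ _ hv]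
    have : (2 * (q - 1) + (q - 1) ^ 2) ≤ 0 := by nlinarith
    nlinarith [sq_nonneg ⟪v, x⟫]
  · change ‖rk1 (√l - 1) v x‖ ≤ _
    rw [← sq_le_sq₀ (norm_nonneg _) (by positivity), rk1_norm _ _ hv, mul_pow, hsq]
    have h1 : (2 * (√l - 1) + (√l - 1) ^ 2) = l - 1 := by nlinarith
    have h2 : ⟪v, x⟫ ^ 2 ≤ ‖x‖ ^ 2 := by
      have := abs_real_inner_le_norm v x
      rw [hv, one_mul] at this
      rw [← sq_abs]
      exact pow_le_pow_left₀ (abs_nonneg _) this 2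
    rw [h1]
    nlinarith
  · have hdt : dt c = q := by
      have : dt c = |LinearMap.det ((rk1 (q - 1) v : Euc n →L[ℝ] Euc n) : Euc n →ₗ[ℝ] Euc n)| := rfl
      rw [this, det_rk1, hv]
      rw [abs_of_pos] <;> linarith
    have hgr : ∀ j, gr (T j ∘L (c : Euc n →L[ℝ] Euc n)) = 1 - (1 - l⁻¹) * ‖T j v‖ ^ 2 := by
      intro j
      have : (T j ∘L (c : Euc n →L[ℝ] Euc n)) ∘L ContinuousLinearMap.adjoint
          (T j ∘L (c : Euc n →L[ℝ] Euc n)) = rk1 (l⁻¹ - 1) (T j v) := by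
        ext1 ζ
        rw [ContinuousLinearMap.adjoint_comp, hcc, rk1_adjoint]
        change T j (rk1 (q - 1) v (rk1 (q - 1) v (ContinuousLinearMap.adjoint (T j) ζ))) = _
        rw [rk1_comp _ _ _ hv, rk1_apply, rk1_apply, map_add, hT j, map_smul,
          ContinuousLinearMap.adjoint_inner_right]
        congr 3
        rw [← hq2]; ring
      rw [gr, this, det_rk1]
      ring
    have hpos : ∀ j, 0 < gr (T j ∘L (c : Euc n →L[ℝ] Euc n)) := by
      intro j
      rw [hgr]
      have h1 : ‖T j v‖ ≤ 1 := by simpa [hv] using (hT j).norm_le v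
      have h2 : ‖T j v‖ ^ 2 ≤ 1 := pow_le_one₀ (norm_nonneg _) h1
      have h3 : 0 < l⁻¹ := by positivity
      have h4 : l⁻¹ < 1 := inv_lt_one_of_one_lt₀ hl1
      nlinarith
    have hterm : ∀ j, rexp ((1 - l⁻¹) * ‖T j v‖ ^ 2 * (p j / 2)) ≤
        gr (T j ∘L (c : Euc n →L[ℝ] Euc n)) ^ (-(p j / 2)) := by
      intro j
      rw [Real.rpow_def_of_pos (hpos j), Real.exp_le_exp]
      have := Real.log_le_sub_one_of_pos (hpos j)
      rw [hgr] at this ⊢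
      have h5 := hp j
      nlinarith
    have hl0 : 0 < l := by linarith
    unfold ratio
    calc rexp ((l - 1 - Real.log l) / 2) = q * ∏ j, rexp ((1 - l⁻¹) * ‖T j v‖ ^ 2 * (p j / 2)) := by
          rw [← Real.exp_sum]
          have e1 : ∑ j, (1 - l⁻¹) * ‖T j v‖ ^ 2 * (p j / 2) = (l - 1) / 2 := by
            have : ∀ j, (1 - l⁻¹) * ‖T j v‖ ^ 2 * (p j / 2) = (1 - l⁻¹) / 2 * (p j * ‖T j v‖ ^ 2) :=
              fun j => by ring
            rw [Finset.sum_congr rfl fun j _ => this j, ← Finset.mul_sum, ← hl]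
            field_simp
          have e2 : q = rexp (- (Real.log l / 2)) := by
            rw [Real.exp_neg, hq, Real.sqrt_eq_rpow, Real.rpow_def_of_pos hl0]
            congr 2; ring
          rw [e1, e2, ← Real.exp_add]
          congr 1; ring
      _ ≤ _ := by
          rw [hdt]
          exact mul_le_mul_of_nonneg_left (Finset.prod_le_prod (fun _ _ => (Real.exp_pos _).le)
            fun j _ => hterm j) hq0.le

end NBL

namespace NBL
open Filter Topology
open scoped RealInnerProductSpace
variable {ι : Type} [Fintype ι] {nn : ι → ℕ} {n : ℕ}

lemma log_gap {l P : ℝ} (hl : 1 ≤ l) (hP : l ≤ P) :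
    1 / (√P + 1) ^ 2 * (l - 1) ^ 2 ≤ l - 1 - Real.log l := by
  have h0 : 0 < √l := Real.sqrt_pos.2 (by linarith)
  have hsq : √l ^ 2 = l := Real.sq_sqrt (by linarith)
  have h1 : Real.log l ≤ 2 * (√l - 1) := by
    have := Real.log_le_sub_one_of_pos h0
    rw [Real.log_sqrt (by linarith)] at this
    linarith
  have h2 : √l ≤ √P := Real.sqrt_le_sqrt hP
  have h3 : (√l - 1) ^ 2 ≤ l - 1 - Real.log l := by nlinarith
  refine le_trans ?_ h3
  rw [div_mul_eq_mul_div, one_mul, div_le_iff₀ (by positivity), ← mul_pow]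
  have h4 : 1 ≤ √l := by rw [Real.le_sqrt' (by norm_num)]; linarith
  refine pow_le_pow_left₀ (by linarith) ?_ 2
  nlinarith

lemma Frame.defect_sum {A : ∀ j, Euc n →L[ℝ] Euc (nn j)} (F : Frame A) (p : ι → ℝ)
    (hp : ∀ j, 0 ≤ p j) (v : Euc n) : ∑ j, p j * ‖F.T j v‖ ^ 2 ≤ (∑ j, p j) * ‖v‖ ^ 2 := by
  rw [Finset.sum_mul]
  exact Finset.sum_le_sum fun j _ => mul_le_mul_of_nonneg_left
    (pow_le_pow_left₀ (norm_nonneg _) (Coiso.norm_le (F.coiso j) v) 2) (hp j)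

/-- Greedy improvement: as long as the defect exceeds `η`, squeezing the frame along a bad direction
increases its value at a definite rate per unit of (logarithmic) length, so a frame of defect `η` is
met within the length allowed by an upper bound `S` of all values. -/
lemma path {A : ∀ j, Euc n →L[ℝ] Euc (nn j)} (hA : ∀ j, Function.Surjective (A j)) (p : ι → ℝ)
    (hp : ∀ j, 0 ≤ p j) (S : ℝ) (hS : ∀ F : Frame A, F.val p ≤ S) (F₀ : Frame A) (η : ℝ) (hη : 0 < η)
    (a : ℝ) (ha : a = 1 / (√(∑ j, p j) + 1) ^ 2) (ℓ : ℝ) (hℓ : Real.log (S / F₀.val p) ≤ a / 2 * η * ℓ) :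
    ∃ (F : Frame A) (c : Euc n ≃L[ℝ] Euc n), F.g = c.trans F₀.g ∧ (∀ x, ‖c x‖ ≤ ‖x‖) ∧
      (∀ x, ‖c.symm x‖ ≤ rexp ℓ * ‖x‖) ∧ F₀.val p ≤ F.val p ∧ F.Defect p η := by
  by_contra hcon
  push Not at hcon
  have ha0 : 0 < a := by rw [ha]; positivity
  have key : ∀ k : ℕ, ∃ (F : Frame A) (c : Euc n ≃L[ℝ] Euc n) (l : ℝ), F.g = c.trans F₀.g ∧
      (∀ x, ‖c x‖ ≤ ‖x‖) ∧ (∀ x, ‖c.symm x‖ ≤ rexp l * ‖x‖) ∧ k * (η / 2) ≤ l ∧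
      F₀.val p * rexp (a * η * l) ≤ F.val p := by
    intro k
    induction k with
    | zero =>
      refine ⟨F₀, ContinuousLinearEquiv.refl ℝ _, 0, ?_, ?_, ?_, ?_, ?_⟩ <;> simp
      ext1; rfl
    | succ k ih =>
      obtain ⟨F, c, l, hg, hc1, hc2, hk, hval⟩ := ih
      have hl0 : 0 ≤ l := le_trans (by positivity) hk
      have hlℓ : l ≤ ℓ := by
        have h1 := hval.trans (hS F)
        have h2 : rexp (a * η * l) ≤ S / F₀.val p := by
          rw [le_div_iff₀ (F₀.val_pos p)]; linarith
        have h3 := (Real.le_log_iff_exp_le (lt_of_lt_of_le (Real.exp_pos _) h2)).2 h2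
        have h4 : a * η * l ≤ a / 2 * η * ℓ := h3.trans hℓ
        have h5 : 0 < a * η := by positivity
        nlinarith
      have hnd := hcon F c hg hc1 (fun x => (hc2 x).trans (mul_le_mul_of_nonneg_right
        (Real.exp_le_exp.2 hlℓ) (norm_nonneg _))) (le_trans (le_mul_of_one_le_right (F₀.val_pos p).le
          (Real.one_le_exp (by positivity))) hval)
      unfold Frame.Defect at hnd
      push Not at hnd
      obtain ⟨v, hv⟩ := hnd
      have hv0 : v ≠ 0 := by
        rintro rfl
        simp at hv
      have hvn : 0 < ‖v‖ := norm_pos_iff.2 hv0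
      set w : Euc n := ‖v‖⁻¹ • v with hw
      have hw1 : ‖w‖ = 1 := by
        rw [hw, norm_smul, norm_inv, norm_norm, inv_mul_cancel₀ hvn.ne']
      set lam : ℝ := ∑ j, p j * ‖F.T j w‖ ^ 2 with hlam
      have hlam2 : lam = (∑ j, p j * ‖F.T j v‖ ^ 2) / ‖v‖ ^ 2 := by
        rw [hlam, Finset.sum_div]
        refine Finset.sum_congr rfl fun j _ => ?_
        rw [hw, map_smul, norm_smul, norm_inv, norm_norm]
        field_simp
      have hlam1 : 1 + η < lam := by
        rw [hlam2, lt_div_iff₀ (by positivity)]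
        exact hv
      have hlamP : lam ≤ ∑ j, p j := by
        have := F.defect_sum p hp w
        rw [hw1] at this
        linarith
      obtain ⟨c', hc1', hc2', hr⟩ := step F.T F.coiso p hp w hw1 lam rfl (by linarith)
      obtain ⟨F', hF'⟩ := Frame.exists_move hA (c'.trans F.g)
      refine ⟨F', c'.trans c, l + (lam - 1) / 2, ?_, fun x => ?_, fun x => ?_, ?_, ?_⟩
      · rw [hF', hg]; ext1; rfl
      · exact (hc1 _).trans (hc1' x)
      · change ‖c'.symm (c.symm x)‖ ≤ _
        refine (hc2' _).trans ?_
        have h1 : √lam ≤ rexp ((lam - 1) / 2) := by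
          rw [Real.sqrt_le_left (Real.exp_pos _).le, ← Real.exp_nat_mul]
          have := Real.add_one_le_exp (lam - 1)
          have e : ((2 : ℕ) : ℝ) * ((lam - 1) / 2) = lam - 1 := by push_cast; ring
          rw [e]; linarith
        calc √lam * ‖c.symm x‖ ≤ rexp ((lam - 1) / 2) * (rexp l * ‖x‖) :=
              mul_le_mul h1 (hc2 x) (norm_nonneg _) (Real.exp_pos _).le
          _ = rexp (l + (lam - 1) / 2) * ‖x‖ := by rw [Real.exp_add]; ring
      · push_cast; linarith
      · have e : F'.g.trans F.g.symm = c' := by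
          rw [hF']; ext1; funext x; simp
        rw [F.val_eq F' p, e]
        have h1 : a * η * ((lam - 1) / 2) ≤ (lam - 1 - Real.log lam) / 2 := by
          have := log_gap (by linarith : 1 ≤ lam) hlamP
          rw [← ha] at this
          have h2 : a * η * (lam - 1) ≤ a * (lam - 1) ^ 2 := by
            rw [sq, ← mul_assoc]
            exact mul_le_mul_of_nonneg_right (mul_le_mul_of_nonneg_left (by linarith) ha0.le) (by linarith)
          linarith
        calc F₀.val p * rexp (a * η * (l + (lam - 1) / 2))
            = (F₀.val p * rexp (a * η * l)) * rexp (a * η * ((lam - 1) / 2)) := by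
              rw [mul_assoc (F₀.val p), ← Real.exp_add]; congr 2; ring
          _ ≤ F.val p * ratio F.T p c' :=
              mul_le_mul hval ((Real.exp_le_exp.2 h1).trans hr) (Real.exp_pos _).le (F.val_pos p).le
  obtain ⟨k, hk⟩ := exists_nat_gt (ℓ / (η / 2))
  rw [div_lt_iff₀ (by positivity)] at hk
  obtain ⟨F, c, l, hg, hc1, hc2, hkl, hval⟩ := key k
  have h1 := hval.trans (hS F)
  have h2 : rexp (a * η * l) ≤ S / F₀.val p := by
    rw [le_div_iff₀ (F₀.val_pos p)]; linarith
  have h3 := (Real.le_log_iff_exp_le (lt_of_lt_of_le (Real.exp_pos _) h2)).2 h2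
  have h4 : a * η * l ≤ a / 2 * η * ℓ := h3.trans hℓ
  have h5 : 0 < a * η := by positivity
  have h6 : 0 ≤ l := le_trans (by positivity) hkl
  nlinarith

lemma prod_gE (p : ι → ℝ) (y : ∀ j, Euc (nn j)) :
    ∏ j, gE (y j) ^ p j = ENNReal.ofReal (rexp (-π * ∑ j, p j * ‖y j‖ ^ 2)) := by
  rw [Finset.mul_sum, Real.exp_sum, ENNReal.ofReal_prod_of_nonneg fun _ _ => (Real.exp_pos _).le]
  refine Finset.prod_congr rfl fun j _ => ?_
  rw [gE, ENNReal.ofReal_rpow_of_pos (Real.exp_pos _), ← Real.exp_mul]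
  congr 2; ring

/-- Testing the Brascamp–Lieb inequality on the Gaussians of a frame. -/
lemma gauss_test {A : ∀ j, Euc n →L[ℝ] Euc (nn j)} (p : ι → ℝ) (C : ℝ) (hC : 0 ≤ C)
    (hBL : ∀ H : ∀ j, Euc (nn j) ≃L[ℝ] Euc (nn j),
      ∫⁻ x, ∏ j, gE (H j (A j x)) ^ p j ≤
        ENNReal.ofReal C * ∏ j, (ENNReal.ofReal (dt (H j))⁻¹) ^ p j)
    (F : Frame A) (η : ℝ) (hη : 0 ≤ η) (hF : F.Defect p η) :
    F.val p ≤ C * √(1 + η) ^ n := by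
  have hs : 0 < √(1 + η) := Real.sqrt_pos.2 (by linarith)
  have h1 := hBL F.H
  rw [lintegral_equiv F.g] at h1
  have h2 : ENNReal.ofReal ((√(1 + η))⁻¹ ^ n) ≤ ∫⁻ x, ∏ j, gE (F.H j (A j (F.g x))) ^ p j := by
    calc ENNReal.ofReal ((√(1 + η))⁻¹ ^ n) = ∫⁻ x : Euc n, gE (√(1 + η) • x) := by
          have e := lintegral_comp_smul (k := n) (√(1 + η)) hs gE
          rw [lintegral_gE] at e
          rw [inv_pow, ENNReal.ofReal_inv_of_pos (by positivity)]
          rw [← ENNReal.eq_inv_of_mul_eq_one_left]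
          rw [mul_comm]; exact e.symm
      _ ≤ _ := lintegral_mono fun x => by
          rw [prod_gE, gE]
          refine ENNReal.ofReal_le_ofReal (Real.exp_le_exp.2 ?_)
          have h3 := hF x
          rw [norm_smul, mul_pow, Real.norm_of_nonneg hs.le, Real.sq_sqrt (by linarith)]
          nlinarith [Real.pi_pos]
  have h3 : ∏ j, (ENNReal.ofReal (dt (F.H j))⁻¹) ^ p j = ENNReal.ofReal (∏ j, dt (F.H j) ^ p j)⁻¹ := by
    rw [← Finset.prod_inv_distrib, ENNReal.ofReal_prod_of_nonneg]
    · refine Finset.prod_congr rfl fun j _ => ?_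
      rw [ENNReal.ofReal_rpow_of_pos (inv_pos.2 (dt_pos _)), Real.inv_rpow (dt_pos _).le]
    · intro j _
      exact inv_nonneg.2 (Real.rpow_nonneg (dt_pos _).le _)
  have h4 := (mul_le_mul_right h2 (ENNReal.ofReal (dt F.g))).trans h1
  rw [h3, ← ENNReal.ofReal_mul (dt_pos _).le, ← ENNReal.ofReal_mul hC] at h4
  have hpr : 0 < ∏ j, dt (F.H j) ^ p j := Finset.prod_pos fun j _ => Real.rpow_pos_of_pos (dt_pos _) _
  rw [ENNReal.ofReal_le_ofReal_iff (by positivity)] at h4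
  unfold Frame.val
  rw [inv_pow, ← div_eq_mul_inv, ← div_eq_mul_inv, div_le_div_iff₀ (by positivity) hpr] at h4
  exact h4

end NBL

/-! ### Stability of the Gaussian quotient -/

namespace NBL
open Filter Topology
open scoped RealInnerProductSpace
variable {ι : Type} [Fintype ι] {nn : ι → ℕ} {n : ℕ}

/-- The subfamily of `w` indexed by `A` has no nontrivial nonnegative relation. -/
def FreeOn {Ω E : Type} [Fintype Ω] [NormedAddCommGroup E] [NormedSpace ℝ E] (w : Ω → E)
    (A : Finset Ω) : Prop :=
  ∀ d : Ω → ℝ, (∀ i, 0 ≤ d i) → (∀ i, i ∉ A → d i = 0) → ∑ i, d i • w i = 0 → d = 0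

/-- By compactness of the simplex. -/
lemma FreeOn.exists_bound {Ω E : Type} [Fintype Ω] [NormedAddCommGroup E] [NormedSpace ℝ E]
    (w : Ω → E) (A : Finset Ω) (hA : FreeOn w A) :
    ∃ γ : ℝ, 0 < γ ∧ ∀ d : Ω → ℝ, (∀ i, 0 ≤ d i) → (∀ i, i ∉ A → d i = 0) →
      γ * ∑ i, d i ≤ ‖∑ i, d i • w i‖ := by
  set K : Set (Ω → ℝ) := stdSimplex ℝ Ω ∩ {d | ∀ i, i ∉ A → d i = 0} with hK
  have hKc : IsCompact K := by
    refine (isCompact_stdSimplex ℝ Ω).inter_right ?_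
    simp only [Set.ofPred_forall]
    exact isClosed_iInter fun i => isClosed_iInter fun _ => isClosed_eq (continuous_apply i) continuous_const
  have hcont : Continuous fun d : Ω → ℝ => ‖∑ i, d i • w i‖ := by fun_prop
  have hmain : ∃ γ : ℝ, 0 < γ ∧ ∀ d ∈ K, γ ≤ ‖∑ i, d i • w i‖ := by
    rcases K.eq_empty_or_nonempty with h | h
    · exact ⟨1, one_pos, by simp [h]⟩
    · obtain ⟨d₀, hd₀, hmin⟩ := hKc.exists_isMinOn h hcont.continuousOn
      refine ⟨‖∑ i, d₀ i • w i‖, norm_pos_iff.2 fun h0 => ?_, fun d hd => hmin hd⟩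
      have := hA d₀ hd₀.1.1 hd₀.2 h0
      have h1 := hd₀.1.2
      rw [this] at h1
      simp at h1
  obtain ⟨γ, hγ, hb⟩ := hmain
  refine ⟨γ, hγ, fun d hd hdA => ?_⟩
  rcases (Finset.sum_nonneg fun i _ => hd i : 0 ≤ ∑ i, d i).eq_or_lt with h | h
  · rw [← h]; simp
  · have h1 := hb (fun i => (∑ i, d i)⁻¹ * d i) ⟨⟨fun i => mul_nonneg (inv_nonneg.2 h.le) (hd i), by
      rw [← Finset.mul_sum, inv_mul_cancel₀ h.ne']⟩, fun i hi => by simp [hdA i hi]⟩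
    simp only [mul_smul] at h1
    rw [← Finset.smul_sum, norm_smul, norm_inv, Real.norm_of_nonneg h.le, ← div_eq_inv_mul,
      le_div_iff₀ h] at h1
    exact h1

/-- A nonnegative combination with small sum contains an exact relation which exhausts it up to a
proportionally small remainder. -/
lemma exists_relation {Ω E : Type} [Fintype Ω] [NormedAddCommGroup E] [NormedSpace ℝ E]
    (w : Ω → E) : ∃ γ : ℝ, 0 < γ ∧ ∀ c : Ω → ℝ, (∀ i, 0 ≤ c i) → ∃ c' : Ω → ℝ, (∀ i, 0 ≤ c' i) ∧
      (∀ i, c' i ≤ c i) ∧ ∑ i, c' i • w i = 0 ∧ γ * ∑ i, (c i - c' i) ≤ ‖∑ i, c i • w i‖ := by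
  classical
  have h1 : ∀ A : Finset Ω, ∃ γ : ℝ, 0 < γ ∧ (FreeOn w A → ∀ d : Ω → ℝ, (∀ i, 0 ≤ d i) →
      (∀ i, i ∉ A → d i = 0) → γ * ∑ i, d i ≤ ‖∑ i, d i • w i‖) := by
    intro A
    by_cases hA : FreeOn w A
    · obtain ⟨γ, h, h'⟩ := hA.exists_bound
      exact ⟨γ, h, fun _ => h'⟩
    · exact ⟨1, one_pos, fun h => absurd h hA⟩
  choose γ hγ hb using h1
  obtain ⟨A₀, hA₀⟩ := Finite.exists_min γ
  refine ⟨γ A₀, hγ A₀, fun c hc => ?_⟩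
  set K : Set (Ω → ℝ) := Set.Icc 0 c ∩ {d | ∑ i, d i • w i = 0} with hK
  have hKc : IsCompact K := by
    refine isCompact_Icc.inter_right ?_
    exact isClosed_eq (by fun_prop) continuous_const
  have hne : K.Nonempty := ⟨0, ⟨le_rfl, hc⟩, by simp⟩
  obtain ⟨c', hc', hmax⟩ := hKc.exists_isMaxOn hne
    (f := fun d : Ω → ℝ => ∑ i, d i) (by fun_prop)
  have hle : ∀ i, c' i ≤ c i := hc'.1.2
  have h0 : ∀ i, 0 ≤ c' i := hc'.1.1
  refine ⟨c', h0, hle, hc'.2, ?_⟩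
  set A : Finset Ω := Finset.univ.filter fun i => c' i < c i with hA
  have hfree : FreeOn w A := by
    intro e he heA hew
    by_contra hne0
    have hev : ∀ᶠ t in 𝓝[>] (0 : ℝ), ∀ i, t * e i ≤ c i - c' i := by
      rw [eventually_all]
      intro i
      by_cases hi : i ∈ A
      · have hi' : 0 < c i - c' i := by simpa [hA] using hi
        have ht : Tendsto (fun t : ℝ => t * e i) (𝓝[>] 0) (𝓝 0) := by
          have : Tendsto (fun t : ℝ => t * e i) (𝓝 0) (𝓝 (0 * e i)) := by
            exact (continuous_id.mul continuous_const).tendsto 0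
          rw [zero_mul] at this
          exact this.mono_left nhdsWithin_le_nhds
        exact (ht.eventually (gt_mem_nhds hi')).mono fun t ht => le_of_lt ht
      · refine Eventually.of_forall fun t => ?_
        rw [heA i hi]; simpa using hle i
    obtain ⟨t, ht, ht0⟩ := (hev.and self_mem_nhdsWithin).exists
    have ht0' : 0 < t := ht0
    have hmem : (fun i => c' i + t * e i) ∈ K := by
      refine ⟨⟨fun i => add_nonneg (h0 i) (mul_nonneg ht0'.le (he i)), fun i => ?_⟩, ?_⟩
      · have := ht i
        change c' i + t * e i ≤ c i
        linarith
      · change ∑ i, (c' i + t * e i) • w i = 0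
        simp only [add_smul, mul_smul]
        rw [Finset.sum_add_distrib, ← Finset.smul_sum, hew, smul_zero, add_zero]
        exact hc'.2
    have h2 := hmax hmem
    change ∑ i, (c' i + t * e i) ≤ ∑ i, c' i at h2
    rw [Finset.sum_add_distrib, ← Finset.mul_sum] at h2
    have h3 : 0 < ∑ i, e i := by
      obtain ⟨i, hi⟩ := Function.ne_iff.1 hne0
      exact Finset.sum_pos' (fun i _ => he i) ⟨i, Finset.mem_univ _, lt_of_le_of_ne (he i) (Ne.symm hi)⟩
    nlinarith [mul_pos ht0' h3]
  have h4 := hb A hfree (fun i => c i - c' i) (fun i => sub_nonneg.2 (hle i)) (fun i hi => by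
    have : ¬ c' i < c i := by simpa [hA] using hi
    linarith [hle i])
  have h5 : ∑ i, (c i - c' i) • w i = ∑ i, c i • w i := by
    simp only [sub_smul]
    rw [Finset.sum_sub_distrib, hc'.2, sub_zero]
  rw [h5] at h4
  refine le_trans (mul_le_mul_of_nonneg_right (hA₀ A) ?_) h4
  exact Finset.sum_nonneg fun i _ => sub_nonneg.2 (hle i)

/-- Cauchy–Binet, summed over functions instead of subsets. -/
lemma cauchy_binet {r : ℕ} (w : Fin n → Fin r → ℝ) (d : Fin n → ℝ) :
    (Matrix.of fun i l : Fin r => ∑ k, d k * (w k i * w k l)).det =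
      ∑ f : Fin r → Fin n, ((Matrix.of fun i => w (f i)).det ^ 2 / (r.factorial : ℝ)) * ∏ i, d (f i) := by
  have h1 : (Matrix.of fun i l : Fin r => ∑ k, d k * (w k i * w k l)).det =
      ∑ f : Fin r → Fin n, (∏ i, d (f i)) * ((∏ i, w (f i) i) * (Matrix.of fun i => w (f i)).det) := by
    have e : (Matrix.of fun i l : Fin r => ∑ k, d k * (w k i * w k l)) =
        fun i => ∑ k, (d k * w k i) • w k := by
      funext i l
      simp [Finset.sum_apply, mul_assoc]
    rw [e]
    have := (Matrix.detRowAlternating (n := Fin r) (R := ℝ)).toMultilinearMap.map_sum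
      (fun i k => (d k * w k i) • w k)
    refine Eq.trans this ?_
    refine Finset.sum_congr rfl fun f _ => ?_
    refine ((Matrix.detRowAlternating (n := Fin r) (R := ℝ)).toMultilinearMap.map_smul_univ
      (fun i => d (f i) * w (f i) i) (fun i => w (f i))).trans ?_
    rw [Finset.prod_mul_distrib, smul_eq_mul, mul_assoc]
    rfl
  rw [h1]
  set Φ : (Fin r → Fin n) → ℝ := fun f => (∏ i, d (f i)) *
    ((∏ i, w (f i) i) * (Matrix.of fun i => w (f i)).det) with hΦ
  have h2 : ∀ σ : Equiv.Perm (Fin r), ∑ f, Φ f = ∑ f, Φ (f ∘ σ) := fun σ =>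
    ((Equiv.arrowCongr σ.symm (Equiv.refl (Fin n))).sum_comp Φ).symm
  have h3 : ∀ f : Fin r → Fin n, ∑ σ : Equiv.Perm (Fin r), Φ (f ∘ σ) =
      (Matrix.of fun i => w (f i)).det ^ 2 * ∏ i, d (f i) := by
    intro f
    have h4 : ∀ σ : Equiv.Perm (Fin r), Φ (f ∘ σ) = ((∏ i, d (f i)) * (Matrix.of fun i => w (f i)).det) *
        (((Equiv.Perm.sign σ : ℤ) : ℝ) * ∏ i, w (f (σ i)) i) := by
      intro σ
      have a1 : ∏ i, d ((f ∘ σ) i) = ∏ i, d (f i) := Equiv.prod_comp σ (fun i => d (f i))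
      have a2 : (Matrix.of fun i => w ((f ∘ σ) i)).det =
          ((Equiv.Perm.sign σ : ℤ) : ℝ) * (Matrix.of fun i => w (f i)).det :=
        Matrix.det_permute σ (Matrix.of fun i => w (f i))
      simp only [hΦ]
      rw [a1, a2]
      simp only [Function.comp]
      ring
    rw [Finset.sum_congr rfl fun σ _ => h4 σ, ← Finset.mul_sum]
    have h5 : ∑ σ : Equiv.Perm (Fin r), (((Equiv.Perm.sign σ : ℤ) : ℝ) * ∏ i, w (f (σ i)) i) =
        (Matrix.of fun i => w (f i)).det := by
      rw [Matrix.det_apply']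
      rfl
    rw [h5]; ring
  have h6 : (r.factorial : ℝ) * ∑ f, Φ f = ∑ f : Fin r → Fin n,
      (Matrix.of fun i => w (f i)).det ^ 2 * ∏ i, d (f i) := by
    have : ∑ σ : Equiv.Perm (Fin r), ∑ f, Φ f = (r.factorial : ℝ) * ∑ f, Φ f := by
      rw [Finset.sum_const, Finset.card_univ, Fintype.card_perm, Fintype.card_fin, nsmul_eq_mul]
    rw [← this, Finset.sum_congr rfl fun σ _ => h2 σ, Finset.sum_comm]
    exact Finset.sum_congr rfl fun f _ => h3 f
  have h7 : (r.factorial : ℝ) ≠ 0 := by positivity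
  rw [← mul_right_inj' h7, h6, Finset.mul_sum]
  refine Finset.sum_congr rfl fun f _ => ?_
  field_simp

end NBL

namespace NBL
open Filter Topology
open scoped RealInnerProductSpace
variable {ι : Type} [Fintype ι] {nn : ι → ℕ} {n : ℕ}

/-- The Cauchy–Binet weights of `T` in an orthonormal basis, indexed by functions instead of
subsets (each subset then occurs `r!` times). -/
noncomputable def cb {r : ℕ} (T : Euc n →L[ℝ] Euc r) (b : OrthonormalBasis (Fin n) ℝ (Euc n))
    (f : Fin r → Fin n) : ℝ :=
  (Matrix.of fun i l => T (b (f i)) l).det ^ 2 / (r.factorial : ℝ)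

lemma cb_nonneg {r : ℕ} (T : Euc n →L[ℝ] Euc r) (b : OrthonormalBasis (Fin n) ℝ (Euc n))
    (f : Fin r → Fin n) : 0 ≤ cb T b f := by unfold cb; positivity

/-- Cauchy–Binet for `T S T*`, with `S` diagonal in the basis `b`. -/
lemma det_eigen {r : ℕ} (T : Euc n →L[ℝ] Euc r) (b : OrthonormalBasis (Fin n) ℝ (Euc n))
    (S : Euc n →L[ℝ] Euc n) (d : Fin n → ℝ) (hS : ∀ k, S (b k) = d k • b k) :
    LinearMap.det ((T ∘L S ∘L ContinuousLinearMap.adjoint T : Euc r →L[ℝ] Euc r) : Euc r →ₗ[ℝ] Euc r) =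
      ∑ f : Fin r → Fin n, cb T b f * ∏ i, d (f i) := by
  rw [← LinearMap.det_toMatrix (EuclideanSpace.basisFun (Fin r) ℝ).toBasis]
  have e : LinearMap.toMatrix (EuclideanSpace.basisFun (Fin r) ℝ).toBasis
      (EuclideanSpace.basisFun (Fin r) ℝ).toBasis
      ((T ∘L S ∘L ContinuousLinearMap.adjoint T : Euc r →L[ℝ] Euc r) : Euc r →ₗ[ℝ] Euc r) =
      Matrix.of fun i l : Fin r => ∑ k, d k * (T (b k) i * T (b k) l) := by
    ext i l
    rw [LinearMap.toMatrix_apply]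
    have h1 : ContinuousLinearMap.adjoint T (EuclideanSpace.basisFun (Fin r) ℝ l) =
        ∑ k, T (b k) l • b k := by
      rw [← b.sum_repr' (ContinuousLinearMap.adjoint T (EuclideanSpace.basisFun (Fin r) ℝ l))]
      refine Finset.sum_congr rfl fun k _ => ?_
      rw [ContinuousLinearMap.adjoint_inner_right]
      simp [EuclideanSpace.inner_single_right]
    have h2 : T (S (ContinuousLinearMap.adjoint T (EuclideanSpace.basisFun (Fin r) ℝ l))) =
        ∑ k, (d k * T (b k) l) • T (b k) := by
      rw [h1, map_sum, map_sum]
      refine Finset.sum_congr rfl fun k _ => ?_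
      rw [map_smul, hS, map_smul, map_smul, smul_smul, mul_comm]
    have h3 : (T (S (ContinuousLinearMap.adjoint T (EuclideanSpace.basisFun (Fin r) ℝ l)))) i =
        ∑ k, d k * (T (b k) i * T (b k) l) := by
      rw [h2]
      simp only [WithLp.ofLp_sum, Finset.sum_apply, PiLp.smul_apply, smul_eq_mul]
      exact Finset.sum_congr rfl fun k _ => by ring
    simpa using h3
  rw [e]
  exact cauchy_binet (fun k => T (b k)) d

/-- The Cauchy–Binet weights of a coisometry form a probability distribution on functions
`Fin r → Fin n`. -/
lemma cb_sum {r : ℕ} (T : Euc n →L[ℝ] Euc r) (hT : Coiso T) (b : OrthonormalBasis (Fin n) ℝ (Euc n)) :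
    ∑ f, cb T b f = 1 := by
  have h := det_eigen T b (ContinuousLinearMap.id ℝ _) (fun _ => 1) (fun k => by simp)
  have e : ((T ∘L ContinuousLinearMap.id ℝ _ ∘L ContinuousLinearMap.adjoint T : Euc r →L[ℝ] Euc r) :
      Euc r →ₗ[ℝ] Euc r) = LinearMap.id := by
    ext1 ζ; exact hT ζ
  rw [e, LinearMap.det_id] at h
  simpa using h.symm

/-- The expected number of occurrences of the index `k` under the Cauchy–Binet weights is the
diagonal entry `‖T b_k‖²` of `T* T`. -/
lemma cb_moment {r : ℕ} (T : Euc n →L[ℝ] Euc r) (hT : Coiso T)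
    (b : OrthonormalBasis (Fin n) ℝ (Euc n)) (k : Fin n) :
    ∑ f, cb T b f * ∑ i, (if f i = k then (1 : ℝ) else 0) = ‖T (b k)‖ ^ 2 := by
  have h : ∀ t : ℝ, 1 + t * ‖T (b k)‖ ^ 2 =
      ∑ f, cb T b f * ∏ i, (1 + t * (if f i = k then (1 : ℝ) else 0)) := by
    intro t
    rw [← det_rk1 t (T (b k)), ← det_eigen T b (rk1 t (b k))
      (fun l => 1 + t * (if l = k then (1 : ℝ) else 0))]
    · congr 1
      ext1 ζ
      change rk1 t (T (b k)) ζ = T (rk1 t (b k) (ContinuousLinearMap.adjoint T ζ))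
      rw [rk1_apply, rk1_apply, map_add, hT ζ, map_smul, ContinuousLinearMap.adjoint_inner_right]
    · intro l
      rw [rk1_apply, b.inner_eq_ite]
      by_cases hl : l = k
      · subst hl; simp [add_smul]
      · have hl' : ¬ k = l := fun h => hl h.symm
        simp [hl, hl']
  have h1 : HasDerivAt (fun t : ℝ => 1 + t * ‖T (b k)‖ ^ 2) (‖T (b k)‖ ^ 2) 0 := by
    simpa using ((hasDerivAt_id (0 : ℝ)).mul_const (‖T (b k)‖ ^ 2)).const_add 1
  have h2 : HasDerivAt (fun t : ℝ => ∑ f, cb T b f * ∏ i, (1 + t * (if f i = k then (1 : ℝ) else 0)))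
      (∑ f, cb T b f * ∑ i, (if f i = k then (1 : ℝ) else 0)) 0 := by
    refine HasDerivAt.fun_sum fun f _ => HasDerivAt.const_mul _ ?_
    have h3 : ∀ i ∈ (Finset.univ : Finset (Fin r)), HasDerivAt
        (fun t : ℝ => 1 + t * (if f i = k then (1 : ℝ) else 0)) (if f i = k then (1 : ℝ) else 0) 0 := by
      intro i _
      simpa using ((hasDerivAt_id (0 : ℝ)).mul_const (if f i = k then (1 : ℝ) else 0)).const_add 1
    have h4 := HasDerivAt.fun_finsetProd h3
    simpa using h4
  have h5 : (fun t : ℝ => 1 + t * ‖T (b k)‖ ^ 2) =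
      fun t : ℝ => ∑ f, cb T b f * ∏ i, (1 + t * (if f i = k then (1 : ℝ) else 0)) := funext h
  rw [← h5] at h2
  exact h2.unique h1

lemma exists_eigen (h : Euc n ≃L[ℝ] Euc n) : ∃ (b : OrthonormalBasis (Fin n) ℝ (Euc n)) (a : Fin n → ℝ),
    (∀ k, h (ContinuousLinearMap.adjoint (h : Euc n →L[ℝ] Euc n) (b k)) = rexp (a k) • b k) ∧
    dt h ^ 2 = rexp (∑ k, a k) := by
  set S : Euc n →ₗ[ℝ] Euc n := (((h : Euc n →L[ℝ] Euc n) ∘L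
    ContinuousLinearMap.adjoint (h : Euc n →L[ℝ] Euc n) : Euc n →L[ℝ] Euc n) : Euc n →ₗ[ℝ] Euc n) with hS
  have hsym : S.IsSymmetric := by
    intro x y
    change ⟪h (ContinuousLinearMap.adjoint (h : Euc n →L[ℝ] Euc n) x), y⟫ =
      ⟪x, h (ContinuousLinearMap.adjoint (h : Euc n →L[ℝ] Euc n) y)⟫
    have e1 := ContinuousLinearMap.adjoint_inner_right (h : Euc n →L[ℝ] Euc n)
      (ContinuousLinearMap.adjoint (h : Euc n →L[ℝ] Euc n) x) y
    have e2 := ContinuousLinearMap.adjoint_inner_left (h : Euc n →L[ℝ] Euc n)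
      (ContinuousLinearMap.adjoint (h : Euc n →L[ℝ] Euc n) y) x
    exact e1.symm.trans e2
  have hn : Module.finrank ℝ (Euc n) = n := by simp
  have hb := hsym.apply_eigenvectorBasis hn
  set b := hsym.eigenvectorBasis hn with hbdef
  set d := hsym.eigenvalues hn with hd
  have hpos : ∀ k, 0 < d k := by
    intro k
    have h1 : ⟪S (b k), b k⟫ = d k := by
      rw [hb k, inner_smul_left]
      simp
    have h2 : ⟪S (b k), b k⟫ = ‖ContinuousLinearMap.adjoint (h : Euc n →L[ℝ] Euc n) (b k)‖ ^ 2 := by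
      rw [← real_inner_self_eq_norm_sq]
      exact (ContinuousLinearMap.adjoint_inner_right (h : Euc n →L[ℝ] Euc n)
        (ContinuousLinearMap.adjoint (h : Euc n →L[ℝ] Euc n) (b k)) (b k)).symm
    rw [← h1, h2]
    have h3 : ContinuousLinearMap.adjoint (h : Euc n →L[ℝ] Euc n) (b k) ≠ 0 := by
      intro h0
      obtain ⟨y, hy⟩ := h.surjective (b k)
      have h4 := ContinuousLinearMap.adjoint_inner_right (h : Euc n →L[ℝ] Euc n) y (b k)
      rw [h0, inner_zero_right] at h4
      change 0 = ⟪h y, b k⟫ at h4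
      rw [hy] at h4
      simp at h4
    have := norm_pos_iff.2 h3
    positivity
  refine ⟨b, fun k => Real.log (d k), fun k => ?_, ?_⟩
  · rw [Real.exp_log (hpos k)]
    exact hb k
  · rw [Real.exp_sum, Finset.prod_congr rfl fun k _ => Real.exp_log (hpos k)]
    have h1 : LinearMap.det S = ∏ k, d k := by
      rw [hsym.det_eq_prod_eigenvalues hn]; simp [hd]
    rw [← h1, hS]
    have hd' : dt h = |LinearMap.det ((h : Euc n →L[ℝ] Euc n) : Euc n →ₗ[ℝ] Euc n)| := rfl
    have h2 : LinearMap.det (((h : Euc n →L[ℝ] Euc n) ∘L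
      ContinuousLinearMap.adjoint (h : Euc n →L[ℝ] Euc n) : Euc n →L[ℝ] Euc n) : Euc n →ₗ[ℝ] Euc n) =
      LinearMap.det ((h : Euc n →L[ℝ] Euc n) : Euc n →ₗ[ℝ] Euc n) *
      LinearMap.det ((h : Euc n →L[ℝ] Euc n) : Euc n →ₗ[ℝ] Euc n) := by
      refine (LinearMap.det_comp _ _).trans ?_
      rw [det_adjoint]
    rw [h2, hd', sq_abs, sq]

end NBL

namespace NBL
open Filter Topology
open scoped RealInnerProductSpace
variable {ι : Type} [Fintype ι] {nn : ι → ℕ} {n : ℕ}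

/-- Jensen's inequality for the exponential, with weights of total mass `θ`. -/
lemma jensen_exp {Ω : Type} [Fintype Ω] (c a : Ω → ℝ) (hc : ∀ i, 0 ≤ c i) (θ : ℝ) (hθ : 0 < θ)
    (hs : ∑ i, c i = θ) : θ * rexp (θ⁻¹ * ∑ i, c i * a i) ≤ ∑ i, c i * rexp (a i) := by
  set m := θ⁻¹ * ∑ i, c i * a i with hm
  have h1 : ∀ i, c i * (rexp m * (1 + (a i - m))) ≤ c i * rexp (a i) := fun i => by
    refine mul_le_mul_of_nonneg_left ?_ (hc i)
    have := Real.add_one_le_exp (a i - m)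
    calc rexp m * (1 + (a i - m)) ≤ rexp m * rexp (a i - m) :=
          mul_le_mul_of_nonneg_left (by linarith) (Real.exp_pos _).le
      _ = rexp (a i) := by rw [← Real.exp_add]; congr 1; ring
  refine le_trans (le_of_eq ?_) (Finset.sum_le_sum fun i _ => h1 i)
  have h2 : ∀ i, c i * (rexp m * (1 + (a i - m))) = rexp m * (1 - m) * c i + rexp m * (c i * a i) :=
    fun i => by ring
  rw [Finset.sum_congr rfl fun i _ => h2 i, Finset.sum_add_distrib, ← Finset.mul_sum, ← Finset.mul_sum,
    hs]
  have h3 : ∑ i, c i * a i = θ * m := by rw [hm]; field_simp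
  rw [h3]; ring

/-- Stability of the Brascamp–Lieb quotient: a datum with small defect `η` has no Gaussian quotient
exceeding that of the standard Gaussians by more than a factor `exp (C η)`, uniformly over all
changes of variables. -/
theorem duality (nn : ι → ℕ) (n : ℕ) (p : ι → ℝ) (hp : ∀ j, 0 ≤ p j)
    (hdim : ∑ j, p j * (nn j : ℝ) = n) :
    ∃ C η₁ : ℝ, 0 < C ∧ 0 < η₁ ∧ ∀ (T : ∀ j, Euc n →L[ℝ] Euc (nn j)), (∀ j, Coiso (T j)) →
      ∀ η, 0 ≤ η → η ≤ η₁ → (∀ v, ∑ j, p j * ‖T j v‖ ^ 2 ≤ (1 + η) * ‖v‖ ^ 2) →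
      ∀ h : Euc n ≃L[ℝ] Euc n, ratio T p h ≤ rexp (C * η) := by
  classical
  let Ω := Option (Σ j, Fin (nn j) → Fin n)
  let w : Ω → (Fin n → ℝ) × (ι → ℝ) := fun o => match o with
    | none => (fun _ => -1, fun _ => -1)
    | some ⟨j, f⟩ => (fun k => p j * ∑ i, (if f i = k then (1 : ℝ) else 0), Pi.single j 1)
  -- a vanishing combination of the `w` is a family of measures of equal mass `θ` on the functions
  -- `Fin (nn j) → Fin n`, whose weighted occupation numbers are all equal to `θ`
  obtain ⟨γ, hγ, hrel⟩ := exists_relation w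
  set P := ∑ j, p j with hP
  have hP0 : 0 ≤ P := Finset.sum_nonneg fun j _ => hp j
  refine ⟨P * n / γ + 1, γ / (2 * (n + 1)), by positivity, by positivity, ?_⟩
  intro T hT η hη hη1 hdef h
  obtain ⟨b, a, hb, hdet⟩ := exists_eigen h
  have hgr : ∀ j, gr (T j ∘L (h : Euc n →L[ℝ] Euc n)) =
      ∑ f, cb (T j) b f * rexp (∑ i, a (f i)) := by
    intro j
    have := det_eigen (T j) b ((h : Euc n →L[ℝ] Euc n) ∘L
      ContinuousLinearMap.adjoint (h : Euc n →L[ℝ] Euc n)) (fun k => rexp (a k)) hb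
    simp only [← Real.exp_sum] at this
    rw [← this, gr, ContinuousLinearMap.adjoint_comp]
    rfl
  set c : Ω → ℝ := fun o => match o with
    | none => 1
    | some ⟨j, f⟩ => cb (T j) b f with hc
  have hc0 : ∀ o, 0 ≤ c o := by
    rintro (_ | ⟨j, f⟩)
    · exact zero_le_one
    · exact cb_nonneg _ _ _
  obtain ⟨c', hc'0, hc'c, hc'w, hc'γ⟩ := hrel c hc0
  set θ : ℝ := c' none with hθdef
  -- the deviation of the diagonal of `∑ p_j T_j* T_j` from `1`
  have hdiag : ∀ k, |∑ j, p j * ‖T j (b k)‖ ^ 2 - 1| ≤ n * η := by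
    have hup : ∀ k, ∑ j, p j * ‖T j (b k)‖ ^ 2 - 1 ≤ η := fun k => by
      have := hdef (b k)
      simp only [b.norm_eq_one] at this
      linarith
    have htr : ∑ k, (∑ j, p j * ‖T j (b k)‖ ^ 2 - 1) = 0 := by
      rw [Finset.sum_sub_distrib, Finset.sum_comm]
      simp only [← Finset.mul_sum]
      rw [Finset.sum_congr rfl fun j _ => by rw [(hT j).sum_sq b], hdim]
      simp
    intro k
    have hn1 : (1 : ℝ) ≤ n := by
      have := k.pos
      exact_mod_cast this
    rw [abs_le]
    constructor
    · have h1 := Finset.add_sum_erase Finset.univ (fun k => ∑ j, p j * ‖T j (b k)‖ ^ 2 - 1)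
        (Finset.mem_univ k)
      have h2 : ∑ l ∈ Finset.univ.erase k, (∑ j, p j * ‖T j (b l)‖ ^ 2 - 1) ≤
          ∑ l ∈ Finset.univ.erase k, η := Finset.sum_le_sum fun l _ => hup l
      rw [Finset.sum_const, Finset.card_erase_of_mem (Finset.mem_univ k), Finset.card_univ,
        Fintype.card_fin, nsmul_eq_mul] at h2
      have h3 : ((n - 1 : ℕ) : ℝ) * η ≤ n * η :=
        mul_le_mul_of_nonneg_right (by exact_mod_cast Nat.sub_le n 1) hη
      rw [htr] at h1
      linarith
    · nlinarith [hup k]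
  have hsum : ∑ o, c o • w o = (fun k => ∑ j, p j * ‖T j (b k)‖ ^ 2 - 1, 0) := by
    rw [Fintype.sum_option, Fintype.sum_sigma]
    refine Prod.ext ?_ ?_
    · funext k
      simp only [hc, w, Prod.fst_add, Prod.fst_sum, Prod.smul_fst, Pi.add_apply, Finset.sum_apply,
        Pi.smul_apply, smul_eq_mul, one_mul]
      rw [add_comm, ← sub_eq_add_neg]
      congr 1
      refine Finset.sum_congr rfl fun j _ => ?_
      rw [← cb_moment (T j) (hT j) b k, Finset.mul_sum]
      exact Finset.sum_congr rfl fun f _ => by ring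
    · funext j
      simp only [hc, w, Prod.snd_add, Prod.snd_sum, Prod.smul_snd, Pi.add_apply, Finset.sum_apply,
        Pi.smul_apply, smul_eq_mul, one_mul, Pi.zero_apply]
      simp only [← Finset.sum_mul]
      rw [Finset.sum_congr rfl fun j _ => by rw [cb_sum (T j) (hT j) b, one_mul]]
      simp [Pi.single_apply]
  have hnorm : ‖∑ o, c o • w o‖ ≤ n * η := by
    rw [hsum, Prod.norm_def]
    refine max_le ?_ (by simp; positivity)
    exact (pi_norm_le_iff_of_nonneg (by positivity)).2 fun k => hdiag k
  have hθ1 : 1 - θ ≤ n * η / γ := by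
    rw [le_div_iff₀ hγ, mul_comm]
    refine le_trans (mul_le_mul_of_nonneg_left ?_ hγ.le) (hc'γ.trans hnorm)
    have := Finset.single_le_sum (f := fun o => c o - c' o) (fun o _ => sub_nonneg.2 (hc'c o))
      (Finset.mem_univ (none : Ω))
    exact this
  have hθhalf : 1 / 2 ≤ θ := by
    have h1 : n * η / γ ≤ 1 / 2 := by
      rw [div_le_iff₀ hγ]
      rw [le_div_iff₀ (by positivity)] at hη1
      nlinarith
    linarith
  have hθle : θ ≤ 1 := hc'c none
  have hθ0 : 0 < θ := by linarith
  rw [Fintype.sum_option, Fintype.sum_sigma] at hc'w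
  have hmass : ∀ j, ∑ f, c' (some ⟨j, f⟩) = θ := by
    intro j
    have h1 := congrFun (congrArg Prod.snd hc'w) j
    simp only [w, Prod.snd_add, Prod.snd_sum, Prod.smul_snd, Pi.add_apply, Finset.sum_apply,
        Pi.smul_apply, smul_eq_mul, Prod.snd_zero, Pi.zero_apply] at h1
    simp only [← Finset.sum_mul, Pi.single_apply] at h1
    simp at h1
    linarith
  have hmom : ∀ k, ∑ j, p j * ∑ f, c' (some ⟨j, f⟩) * ∑ i, (if f i = k then (1 : ℝ) else 0) = θ := by
    intro k
    have h1 := congrFun (congrArg Prod.fst hc'w) k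
    simp only [w, Prod.fst_add, Prod.fst_sum, Prod.smul_fst, Pi.add_apply, Finset.sum_apply,
        Pi.smul_apply, smul_eq_mul, Prod.fst_zero, Pi.zero_apply] at h1
    have h2 : ∑ j, p j * ∑ f, c' (some ⟨j, f⟩) * ∑ i, (if f i = k then (1 : ℝ) else 0) =
      ∑ j, ∑ f, c' (some ⟨j, f⟩) * (p j * ∑ i, (if f i = k then (1 : ℝ) else 0)) := by
      refine Finset.sum_congr rfl fun j _ => ?_
      rw [Finset.mul_sum]
      exact Finset.sum_congr rfl fun f _ => by ring
    rw [h2]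
    linarith
  have hexpo : ∑ j, p j * ∑ f, c' (some ⟨j, f⟩) * ∑ i, a (f i) = θ * ∑ k, a k := by
    have h1 : ∀ j, ∀ f : Fin (nn j) → Fin n, ∑ i, a (f i) =
        ∑ k, a k * ∑ i, (if f i = k then (1 : ℝ) else 0) := by
      intro j f
      simp only [Finset.mul_sum]
      rw [Finset.sum_comm]
      refine Finset.sum_congr rfl fun i _ => ?_
      simp
    set N : ∀ j, (Fin (nn j) → Fin n) → Fin n → ℝ := fun j f k =>
      ∑ i, (if f i = k then (1 : ℝ) else 0) with hN
    have h2 : ∀ j, p j * ∑ f, c' (some ⟨j, f⟩) * ∑ i, a (f i) =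
        ∑ k, ∑ f, a k * (p j * (c' (some ⟨j, f⟩) * N j f k)) := by
      intro j
      rw [Finset.sum_comm, Finset.mul_sum]
      refine Finset.sum_congr rfl fun f _ => ?_
      rw [h1 j f, Finset.mul_sum, Finset.mul_sum]
      exact Finset.sum_congr rfl fun k _ => by ring
    have h3 : ∀ k, θ * a k = ∑ j, ∑ f, a k * (p j * (c' (some ⟨j, f⟩) * N j f k)) := by
      intro k
      rw [← hmom k, mul_comm, Finset.mul_sum]
      refine Finset.sum_congr rfl fun j _ => ?_
      rw [Finset.mul_sum, Finset.mul_sum]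
    rw [Finset.sum_congr rfl fun j _ => h2 j, Finset.mul_sum, Finset.sum_congr rfl fun k _ => h3 k,
      Finset.sum_comm]
  have hlow : ∀ j, θ ^ p j * rexp (θ⁻¹ * (p j * ∑ f, c' (some ⟨j, f⟩) * ∑ i, a (f i))) ≤
      gr (T j ∘L (h : Euc n →L[ℝ] Euc n)) ^ p j := by
    intro j
    have h1 : θ * rexp (θ⁻¹ * ∑ f, c' (some ⟨j, f⟩) * ∑ i, a (f i)) ≤
        gr (T j ∘L (h : Euc n →L[ℝ] Euc n)) := by
      rw [hgr]
      refine (jensen_exp (fun f => c' (some ⟨j, f⟩)) (fun f => ∑ i, a (f i)) (fun f => hc'0 _) θ hθ0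
        (hmass j)).trans ?_
      exact Finset.sum_le_sum fun f _ => mul_le_mul_of_nonneg_right (hc'c (some ⟨j, f⟩)) (Real.exp_pos _).le
    have h2 := Real.rpow_le_rpow (by positivity) h1 (hp j)
    rw [Real.mul_rpow hθ0.le (Real.exp_pos _).le, ← Real.exp_mul] at h2
    refine le_trans (le_of_eq ?_) h2
    congr 2; ring
  have hprod : θ ^ P * dt h ^ 2 ≤ ∏ j, gr (T j ∘L (h : Euc n →L[ℝ] Euc n)) ^ p j := by
    refine le_trans (le_of_eq ?_) (Finset.prod_le_prod (fun j _ => by positivity) fun j _ => hlow j)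
    rw [Finset.prod_mul_distrib, ← Real.exp_sum, ← Finset.mul_sum, hexpo, hdet, hP,
      Real.rpow_sum_of_pos hθ0]
    congr 2
    field_simp
  have hgrpos : ∀ j, 0 < gr (T j ∘L (h : Euc n →L[ℝ] Euc n)) := by
    intro j
    rw [hgr]
    have h1 : 0 < θ * rexp (θ⁻¹ * ∑ f, c' (some ⟨j, f⟩) * ∑ i, a (f i)) := by positivity
    refine lt_of_lt_of_le h1 ((jensen_exp (fun f => c' (some ⟨j, f⟩)) (fun f => ∑ i, a (f i))
      (fun f => hc'0 _) θ hθ0 (hmass j)).trans ?_)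
    exact Finset.sum_le_sum fun f _ => mul_le_mul_of_nonneg_right (hc'c (some ⟨j, f⟩)) (Real.exp_pos _).le
  have hlog : -(2 * (n * η / γ)) ≤ Real.log θ := by
    have h1 := Real.one_sub_inv_le_log_of_pos hθ0
    have h2 : θ⁻¹ ≤ 2 := by
      rw [inv_le_comm₀ hθ0 (by norm_num)]; linarith
    have h3 : 1 - θ⁻¹ = -(θ⁻¹ * (1 - θ)) := by field_simp; ring
    rw [h3] at h1
    have h4 : θ⁻¹ * (1 - θ) ≤ 2 * (n * η / γ) :=
      mul_le_mul h2 hθ1 (by linarith) (by norm_num)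
    linarith
  have hθP : rexp (-(2 * (P * n / γ * η))) ≤ θ ^ P := by
    rw [Real.rpow_def_of_pos hθ0, Real.exp_le_exp]
    have := mul_le_mul_of_nonneg_right hlog hP0
    refine le_trans (le_of_eq ?_) this
    ring
  have hr : ratio T p h ^ 2 = dt h ^ 2 * (∏ j, gr (T j ∘L (h : Euc n →L[ℝ] Euc n)) ^ p j)⁻¹ := by
    unfold ratio
    rw [mul_pow, ← Finset.prod_pow, ← Finset.prod_inv_distrib]
    congr 1
    refine Finset.prod_congr rfl fun j _ => ?_
    rw [← Real.rpow_natCast, ← Real.rpow_mul (hgrpos j).le, ← Real.rpow_neg (hgrpos j).le]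
    congr 1; push_cast; ring
  have hratpos : 0 ≤ ratio T p h := mul_nonneg (dt_pos _).le
    (Finset.prod_nonneg fun j _ => Real.rpow_nonneg (hgrpos j).le _)
  have hfin : ratio T p h ^ 2 ≤ rexp (P * n / γ * η) ^ 2 := by
    rw [hr, ← div_eq_mul_inv, div_le_iff₀ (Finset.prod_pos fun j _ => Real.rpow_pos_of_pos (hgrpos j) _),
      ← Real.exp_nat_mul]
    have h1 := mul_le_mul_of_nonneg_right hθP (sq_nonneg (dt h))
    have h2 := mul_le_mul_of_nonneg_left (h1.trans hprod) (Real.exp_pos (((2 : ℕ) : ℝ) * (P * n / γ * η))).le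
    refine le_trans (le_of_eq ?_) h2
    rw [← mul_assoc, ← Real.exp_add]
    have : ((2 : ℕ) : ℝ) * (P * n / γ * η) + -(2 * (P * n / γ * η)) = 0 := by push_cast; ring
    rw [this]; simp
  refine (pow_le_pow_iff_left₀ hratpos (Real.exp_pos _).le two_ne_zero).1 hfin |>.trans ?_
  rw [Real.exp_le_exp]
  nlinarith

end NBL

/-! ### Uniform frames near a datum -/

namespace NBL
open Filter Topology
open scoped RealInnerProductSpace
variable {ι : Type} [Fintype ι] {nn : ι → ℕ} {n : ℕ}

/-- Halving the defect `N` times. By stability the remaining growth of the value at defect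
`η` is at most `exp (C η)`, so `path` reaches defect `η / 2` within a logarithmic length independent
of `η`. -/
lemma Frame.refine {A : ∀ j, Euc n →L[ℝ] Euc (nn j)} (hA : ∀ j, Function.Surjective (A j)) (p : ι → ℝ)
    (hp : ∀ j, 0 ≤ p j) (C η₁ : ℝ) (hC : 0 < C)
    (hdual : ∀ (T : ∀ j, Euc n →L[ℝ] Euc (nn j)), (∀ j, Coiso (T j)) →
      ∀ η, 0 ≤ η → η ≤ η₁ → (∀ v, ∑ j, p j * ‖T j v‖ ^ 2 ≤ (1 + η) * ‖v‖ ^ 2) →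
      ∀ h : Euc n ≃L[ℝ] Euc n, ratio T p h ≤ rexp (C * η))
    (F₀ : Frame A) (η₀ : ℝ) (hη₀ : 0 < η₀) (hη₁ : η₀ ≤ η₁) (hF₀ : F₀.Defect p η₀) (a : ℝ)
    (ha : a = 1 / (√(∑ j, p j) + 1) ^ 2) (N : ℕ) :
    ∃ (F : Frame A) (c : Euc n ≃L[ℝ] Euc n), F.g = c.trans F₀.g ∧ (∀ x, ‖c x‖ ≤ ‖x‖) ∧
      (∀ x, ‖c.symm x‖ ≤ rexp (N * (4 * C / a)) * ‖x‖) ∧ F₀.val p ≤ F.val p ∧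
      F.Defect p (η₀ / 2 ^ N) := by
  have ha0 : 0 < a := by rw [ha]; positivity
  induction N with
  | zero =>
    refine ⟨F₀, ContinuousLinearEquiv.refl ℝ _, ?_, ?_, ?_, le_rfl, ?_⟩
    · ext1; rfl
    · simp
    · simp
    · simpa using hF₀
  | succ N ih =>
    obtain ⟨F, c, hg, hc1, hc2, hv, hd⟩ := ih
    have hpos : 0 < η₀ / 2 ^ N := by positivity
    have hle : η₀ / 2 ^ N ≤ η₁ := (div_le_self hη₀.le (one_le_pow₀ (by norm_num))).trans hη₁
    have hS : ∀ F' : Frame A, F'.val p ≤ F.val p * rexp (C * (η₀ / 2 ^ N)) := fun F' => by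
      rw [F.val_eq F' p]
      exact mul_le_mul_of_nonneg_left (hdual F.T F.coiso _ hpos.le hle hd _) (F.val_pos p).le
    obtain ⟨F', c', hg', hc1', hc2', hv', hd'⟩ := path hA p hp _ hS F (η₀ / 2 ^ (N + 1))
      (by positivity) a ha (4 * C / a) (by
        rw [mul_div_cancel_left₀ _ (F.val_pos p).ne', Real.log_exp, pow_succ]
        refine le_of_eq ?_
        field_simp; ring)
    refine ⟨F', c'.trans c, ?_, fun x => (hc1 _).trans (hc1' x), fun x => ?_, hv.trans hv', hd'⟩
    · rw [hg', hg]; ext1; rfl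
    · change ‖c'.symm (c.symm x)‖ ≤ _
      refine (hc2' _).trans ((mul_le_mul_of_nonneg_left (hc2 x) (Real.exp_pos _).le).trans (le_of_eq ?_))
      rw [← mul_assoc, ← Real.exp_add]
      congr 2; push_cast; ring

lemma norm_of_adjoint {k l : ℕ} (K : Euc k →L[ℝ] Euc l) (M : ℝ) (hM : 0 ≤ M)
    (h : ∀ y, ‖ContinuousLinearMap.adjoint K y‖ ≤ M * ‖y‖) (x : Euc k) : ‖K x‖ ≤ M * ‖x‖ := by
  have h1 : ‖ContinuousLinearMap.adjoint K‖ ≤ M := ContinuousLinearMap.opNorm_le_bound _ hM h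
  rw [LinearIsometryEquiv.norm_map] at h1
  exact (K.le_opNorm x).trans (mul_le_mul_of_nonneg_right h1 (norm_nonneg _))

/-- A coisometry can be restored after a small perturbation by a map close to the identity. -/
lemma coiso_perturb {k : ℕ} (T T' : Euc n →L[ℝ] Euc k) (hT : Coiso T) (e : ℝ) (he : 0 ≤ e) (he1 : e ≤ 1 / 2)
    (h : ‖T' - T‖ ≤ e) : ∃ K : Euc k ≃L[ℝ] Euc k, Coiso ((K : Euc k →L[ℝ] Euc k) ∘L T') ∧
      (∀ x, ‖K x‖ ≤ (1 - e)⁻¹ * ‖x‖) ∧ (∀ x, ‖K.symm x‖ ≤ (1 + e) * ‖x‖) := by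
  have hadj : ∀ y, ‖ContinuousLinearMap.adjoint T' y - ContinuousLinearMap.adjoint T y‖ ≤ e * ‖y‖ := by
    intro y
    have h1 : ‖ContinuousLinearMap.adjoint (T' - T)‖ ≤ e := by rwa [LinearIsometryEquiv.norm_map]
    have h2 := (ContinuousLinearMap.adjoint (T' - T)).le_of_opNorm_le h1 y
    rwa [map_sub] at h2
  have hsurj : Function.Surjective T' := by
    have hinj : Function.Injective ((T' ∘L ContinuousLinearMap.adjoint T : Euc k →L[ℝ] Euc k) :
        Euc k →ₗ[ℝ] Euc k) := by
      rw [← LinearMap.ker_eq_bot, LinearMap.ker_eq_bot']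
      intro y hy
      have hy' : T' (ContinuousLinearMap.adjoint T y) = 0 := hy
      have h1 := (T' - T).le_of_opNorm_le h (ContinuousLinearMap.adjoint T y)
      rw [_root_.sub_apply, hy', hT y, hT.norm_adjoint, zero_sub, norm_neg] at h1
      have : ‖y‖ = 0 := by nlinarith [norm_nonneg y]
      exact norm_eq_zero.1 this
    have hs := LinearMap.injective_iff_surjective.1 hinj
    intro y
    obtain ⟨x, hx⟩ := hs y
    exact ⟨_, hx⟩
  obtain ⟨K, hK⟩ := exists_coiso T' hsurj
  refine ⟨K, hK, fun x => ?_, fun x => ?_⟩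
  · refine norm_of_adjoint (K : Euc k →L[ℝ] Euc k) _ (inv_nonneg.2 (by linarith)) (fun y => ?_) x
    have h1 := hK.norm_adjoint y
    rw [ContinuousLinearMap.adjoint_comp] at h1
    change ‖ContinuousLinearMap.adjoint T' (ContinuousLinearMap.adjoint (K : Euc k →L[ℝ] Euc k) y)‖ = ‖y‖ at h1
    set z := ContinuousLinearMap.adjoint (K : Euc k →L[ℝ] Euc k) y
    have h2 := hadj z
    have h3 := hT.norm_adjoint z
    have h4 : ‖ContinuousLinearMap.adjoint T z‖ ≤ ‖ContinuousLinearMap.adjoint T' z‖ +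
      ‖ContinuousLinearMap.adjoint T' z - ContinuousLinearMap.adjoint T z‖ := by
      rw [norm_sub_rev]; exact norm_le_norm_add_norm_sub' _ _
    rw [← div_eq_inv_mul, le_div_iff₀ (by linarith)]
    linarith
  · refine norm_of_adjoint (K.symm : Euc k →L[ℝ] Euc k) _ (by linarith) (fun y => ?_) x
    set z := ContinuousLinearMap.adjoint (K.symm : Euc k →L[ℝ] Euc k) y with hz
    have h0 : ContinuousLinearMap.adjoint (K : Euc k →L[ℝ] Euc k) z = y := by
      rw [hz]
      refine ext_inner_right ℝ fun x => ?_
      rw [ContinuousLinearMap.adjoint_inner_left, ContinuousLinearMap.adjoint_inner_left]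
      simp
    have h1 := hK.norm_adjoint z
    rw [ContinuousLinearMap.adjoint_comp] at h1
    change ‖ContinuousLinearMap.adjoint T' (ContinuousLinearMap.adjoint (K : Euc k →L[ℝ] Euc k) z)‖ = ‖z‖ at h1
    rw [h0] at h1
    have h2 := hadj y
    have h3 := hT.norm_adjoint y
    have h4 : ‖ContinuousLinearMap.adjoint T' y‖ ≤ ‖ContinuousLinearMap.adjoint T y‖ +
      ‖ContinuousLinearMap.adjoint T' y - ContinuousLinearMap.adjoint T y‖ :=
      norm_le_norm_add_norm_sub' _ _
    linarith

lemma dt_le_of {k : ℕ} (K : Euc k ≃L[ℝ] Euc k) (M : ℝ) (hM : 0 ≤ M) (h : ∀ x, ‖K x‖ ≤ M * ‖x‖) :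
    dt K ≤ M ^ k :=
  (dt_le K).trans (pow_le_pow_left₀ (norm_nonneg _) (ContinuousLinearMap.opNorm_le_bound _ hM h) k)

lemma sq_le_two_pow (N : ℕ) : ((N : ℝ) + 1) ^ 2 ≤ 4 * 2 ^ N := by
  have : ∀ N : ℕ, (N + 1) ^ 2 ≤ 4 * 2 ^ N := by
    intro N
    induction N with
    | zero => norm_num
    | succ N ih =>
      rcases N with _ | _ | N
      · norm_num
      · norm_num
      · have h : (N + 1 + 1 + 1 + 1) ^ 2 ≤ 2 * (N + 1 + 1 + 1) ^ 2 := by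
          have : 0 ≤ N * N := Nat.zero_le _
          ring_nf
          nlinarith
        calc _ ≤ _ := h
          _ ≤ 2 * (4 * 2 ^ (N + 1 + 1)) := Nat.mul_le_mul_left 2 ih
          _ = _ := by ring
  exact_mod_cast this N

end NBL

namespace NBL
open Filter Topology
open scoped RealInnerProductSpace
variable {ι : Type} [Fintype ι] {nn : ι → ℕ} {n : ℕ}

lemma Frame.Defect.mono {A : ∀ j, Euc n →L[ℝ] Euc (nn j)} {F : Frame A} {p : ι → ℝ} {η η' : ℝ}
    (h : F.Defect p η) (hη : η ≤ η') : F.Defect p η' := fun v =>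
  (h v).trans (mul_le_mul_of_nonneg_right (by linarith) (by positivity))

/-- Data satisfying the inequality for Gaussians have frames of arbitrarily small defect. -/
lemma exists_frame {L : ∀ j, Euc n →L[ℝ] Euc (nn j)} (hL : ∀ j, Function.Surjective (L j))
    (p : ι → ℝ) (hp : ∀ j, 0 ≤ p j) (C₀ : ℝ) (hC₀ : 0 < C₀)
    (hBL : ∀ H : ∀ j, Euc (nn j) ≃L[ℝ] Euc (nn j),
      ∫⁻ x, ∏ j, gE (H j (L j x)) ^ p j ≤
        ENNReal.ofReal C₀ * ∏ j, (ENNReal.ofReal (dt (H j))⁻¹) ^ p j) (η : ℝ) (hη : 0 < η) :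
    ∃ F : Frame L, F.Defect p η ∧ F.val p ≤ C₀ * √(1 + η) ^ n := by
  have hP : 0 ≤ ∑ j, p j := Finset.sum_nonneg fun j _ => hp j
  obtain ⟨F₀, -⟩ := Frame.exists_move hL (ContinuousLinearEquiv.refl ℝ _)
  set S := C₀ * √(1 + ∑ j, p j) ^ n with hS
  have hSb : ∀ F : Frame L, F.val p ≤ S := by
    intro F
    refine gauss_test p C₀ hC₀.le hBL F _ hP fun v => ?_
    refine (F.defect_sum p hp v).trans (mul_le_mul_of_nonneg_right (by linarith) (by positivity))
  set a : ℝ := 1 / (√(∑ j, p j) + 1) ^ 2 with ha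
  have ha0 : 0 < a := by positivity
  obtain ⟨F, c, -, -, -, -, hF⟩ := path hL p hp S hSb F₀ η hη a ha (Real.log (S / F₀.val p) / (a / 2 * η))
    (by rw [mul_div_cancel₀]; positivity)
  exact ⟨F, hF, gauss_test p C₀ hC₀.le hBL F η hη.le hF⟩

lemma prod_dt_le (K : ∀ j, Euc (nn j) ≃L[ℝ] Euc (nn j)) (p : ι → ℝ) (hp : ∀ j, 0 ≤ p j)
    (hdim : ∑ j, p j * (nn j : ℝ) = n) (M : ℝ) (hM : 0 < M) (h : ∀ j x, ‖K j x‖ ≤ M * ‖x‖) :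
    ∏ j, dt (K j) ^ p j ≤ M ^ n := by
  calc ∏ j, dt (K j) ^ p j ≤ ∏ j, M ^ (p j * (nn j : ℝ)) := by
        refine Finset.prod_le_prod (fun j _ => (Real.rpow_pos_of_pos (dt_pos _) _).le) fun j _ => ?_
        rw [mul_comm, Real.rpow_mul hM.le, Real.rpow_natCast]
        exact Real.rpow_le_rpow (dt_pos _).le (dt_le_of _ M hM.le (h j)) (hp j)
    _ = M ^ n := by
        rw [← Real.rpow_sum_of_pos hM, hdim, Real.rpow_natCast]

/-- A frame of `L` gives a frame of any nearby datum `A`, with nearby value and defect. -/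
lemma Frame.perturb {L A : ∀ j, Euc n →L[ℝ] Euc (nn j)} (F₀ : Frame L) (p : ι → ℝ) (hp : ∀ j, 0 ≤ p j)
    (hdim : ∑ j, p j * (nn j : ℝ) = n) (e : ℝ) (he : 0 ≤ e) (he1 : e ≤ 1 / 2)
    (hA : ∀ j x, ‖F₀.H j (A j (F₀.g x)) - F₀.H j (L j (F₀.g x))‖ ≤ e * ‖x‖) (η : ℝ)
    (hF₀ : F₀.Defect p η) :
    ∃ F : Frame A, F.g = F₀.g ∧ (∀ j z, ‖F.H j z‖ ≤ 2 * ‖F₀.H j z‖) ∧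
      F.val p ≤ (1 - e)⁻¹ ^ n * F₀.val p ∧ F₀.val p ≤ (1 + e) ^ n * F.val p ∧
      F.Defect p ((1 - e)⁻¹ ^ 2 * (1 + η + 3 * e * ∑ j, p j) - 1) := by
  have he2 : 0 < 1 - e := by linarith
  have h1 : ∀ j, ∃ K : Euc (nn j) ≃L[ℝ] Euc (nn j),
      Coiso ((K : Euc (nn j) →L[ℝ] Euc (nn j)) ∘L
        ((F₀.H j : Euc (nn j) →L[ℝ] Euc (nn j)) ∘L A j ∘L (F₀.g : Euc n →L[ℝ] Euc n))) ∧
      (∀ x, ‖K x‖ ≤ (1 - e)⁻¹ * ‖x‖) ∧ (∀ x, ‖K.symm x‖ ≤ (1 + e) * ‖x‖) := by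
    intro j
    refine coiso_perturb (F₀.T j) _ (F₀.coiso j) e he he1 ?_
    refine ContinuousLinearMap.opNorm_le_bound _ he fun x => ?_
    exact hA j x
  choose K hK hK1 hK2 using h1
  let F : Frame A := ⟨F₀.g, fun j => (F₀.H j).trans (K j), fun j => hK j⟩
  have hval : F.val p = F₀.val p * ∏ j, dt (K j) ^ p j := by
    show dt F₀.g * ∏ j, dt ((F₀.H j).trans (K j)) ^ p j = _
    simp_rw [dt_trans]
    rw [Frame.val, mul_assoc, ← Finset.prod_mul_distrib]
    congr 1
    refine Finset.prod_congr rfl fun j _ => ?_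
    rw [Real.mul_rpow (dt_pos _).le (dt_pos _).le, mul_comm]
  have hv0 := F₀.val_pos p
  have hP0 : 0 < ∏ j, dt (K j) ^ p j := Finset.prod_pos fun j _ => Real.rpow_pos_of_pos (dt_pos _) _
  refine ⟨F, rfl, ?_, ?_, ?_, ?_⟩
  · intro j z
    refine (hK1 j (F₀.H j z)).trans (mul_le_mul_of_nonneg_right ?_ (norm_nonneg _))
    rw [inv_le_comm₀ he2 (by norm_num)]
    linarith
  · rw [hval, mul_comm]
    exact mul_le_mul_of_nonneg_right (prod_dt_le K p hp hdim _ (inv_pos.2 he2) hK1) hv0.le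
  · have h2 := prod_dt_le (fun j => (K j).symm) p hp hdim (1 + e) (by linarith) hK2
    have h3 : ∏ j, dt (K j).symm ^ p j = (∏ j, dt (K j) ^ p j)⁻¹ := by
      rw [← Finset.prod_inv_distrib]
      refine Finset.prod_congr rfl fun j _ => ?_
      rw [dt_symm, Real.inv_rpow (dt_pos _).le]
    rw [h3, inv_le_iff_one_le_mul₀ hP0] at h2
    rw [hval]
    nlinarith
  · intro v
    have h4 : ∀ j, ‖F.H j (A j (F.g v))‖ ^ 2 ≤ (1 - e)⁻¹ ^ 2 * (‖F₀.T j v‖ ^ 2 + 3 * e * ‖v‖ ^ 2) := by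
      intro j
      have h5 : ‖F.H j (A j (F.g v))‖ ≤ (1 - e)⁻¹ * ‖F₀.H j (A j (F₀.g v))‖ := hK1 j _
      have h6 : ‖F₀.H j (A j (F₀.g v))‖ ≤ ‖F₀.T j v‖ + e * ‖v‖ := by
        have := norm_sub_norm_le (F₀.H j (A j (F₀.g v))) (F₀.H j (L j (F₀.g v)))
        have h7 := hA j v
        rw [Frame.T_apply]
        linarith
      have h8 := Coiso.norm_le (F₀.coiso j) v
      change ‖F₀.T j v‖ ≤ ‖v‖ at h8
      calc ‖F.H j (A j (F.g v))‖ ^ 2 ≤ ((1 - e)⁻¹ * (‖F₀.T j v‖ + e * ‖v‖)) ^ 2 := by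
            refine pow_le_pow_left₀ (norm_nonneg _) (h5.trans ?_) 2
            exact mul_le_mul_of_nonneg_left h6 (inv_pos.2 he2).le
        _ = (1 - e)⁻¹ ^ 2 * (‖F₀.T j v‖ + e * ‖v‖) ^ 2 := by ring
        _ ≤ _ := by
            refine mul_le_mul_of_nonneg_left ?_ (by positivity)
            have a1 : ‖F₀.T j v‖ * (e * ‖v‖) ≤ ‖v‖ * (e * ‖v‖) :=
              mul_le_mul_of_nonneg_right h8 (by positivity)
            have a2 : e * e * ‖v‖ ^ 2 ≤ e * 1 * ‖v‖ ^ 2 := by gcongr; linarith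
            nlinarith
    calc ∑ j, p j * ‖F.H j (A j (F.g v))‖ ^ 2
        ≤ ∑ j, p j * ((1 - e)⁻¹ ^ 2 * (‖F₀.T j v‖ ^ 2 + 3 * e * ‖v‖ ^ 2)) :=
          Finset.sum_le_sum fun j _ => mul_le_mul_of_nonneg_left (h4 j) (hp j)
      _ = (1 - e)⁻¹ ^ 2 * (∑ j, p j * ‖F₀.T j v‖ ^ 2 + 3 * e * (∑ j, p j) * ‖v‖ ^ 2) := by
          rw [mul_add, Finset.mul_sum, Finset.mul_sum, Finset.sum_mul, Finset.mul_sum,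
            ← Finset.sum_add_distrib]
          refine Finset.sum_congr rfl fun j _ => ?_
          ring
      _ ≤ (1 - e)⁻¹ ^ 2 * ((1 + η) * ‖v‖ ^ 2 + 3 * e * (∑ j, p j) * ‖v‖ ^ 2) := by
          refine mul_le_mul_of_nonneg_left ?_ (by positivity)
          have := hF₀ v
          simp_rw [Frame.T_apply]
          linarith
      _ = _ := by ring

/-- Near `L` there are frames whose value is at most `(1 + t) C₀`, with condition numbers at most
`exp s` and defect `O(s⁻²)`, uniformly in the datum. -/
theorem uniform_frames {L : ∀ j, Euc n →L[ℝ] Euc (nn j)} (hL : ∀ j, Function.Surjective (L j))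
    (p : ι → ℝ) (hp : ∀ j, 0 ≤ p j) (hdim : ∑ j, p j * (nn j : ℝ) = n) (C₀ : ℝ) (hC₀ : 0 < C₀)
    (hBL : ∀ H : ∀ j, Euc (nn j) ≃L[ℝ] Euc (nn j),
      ∫⁻ x, ∏ j, gE (H j (L j x)) ^ p j ≤
        ENNReal.ofReal C₀ * ∏ j, (ENNReal.ofReal (dt (H j))⁻¹) ^ p j) (t : ℝ) (ht : 0 < t) :
    ∃ e v₀ Cη s₁ : ℝ, 0 < e ∧ 0 < v₀ ∧ 0 < Cη ∧ 0 < s₁ ∧ ∀ A : ∀ j, Euc n →L[ℝ] Euc (nn j),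
      (∀ j, ‖A j - L j‖ ≤ e) → ∀ s, s₁ ≤ s → ∃ F : Frame A, (∀ x, ‖F.g x‖ ≤ rexp s * ‖x‖) ∧
        (∀ x, ‖F.g.symm x‖ ≤ rexp s * ‖x‖) ∧ (∀ j z, ‖F.H j z‖ ≤ rexp s * ‖z‖) ∧
        F.Defect p (Cη / s ^ 2) ∧ v₀ ≤ F.val p ∧ F.val p ≤ (1 + t) * C₀ := by
  obtain ⟨C, η₁, hC, hη₁, hdual⟩ := duality nn n p hp hdim
  set P := ∑ j, p j with hPdef
  have hP : 0 ≤ P := Finset.sum_nonneg fun j _ => hp j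
  -- choice of the initial defect
  obtain ⟨η, hη, hη2, hηt⟩ : ∃ η : ℝ, 0 < η ∧ 2 * η ≤ η₁ ∧ √(1 + η) ^ n * rexp (C * (2 * η)) < 1 + t := by
    have hc : Continuous fun η : ℝ => √(1 + η) ^ n * rexp (C * (2 * η)) := by fun_prop
    have h0 : ∀ᶠ η in 𝓝 (0 : ℝ), √(1 + η) ^ n * rexp (C * (2 * η)) < 1 + t :=
      hc.continuousAt.eventually_lt continuousAt_const (by simp [ht])
    obtain ⟨d, hd, hd2⟩ := Metric.eventually_nhds_iff.1 h0
    refine ⟨min (d / 2) (η₁ / 2), by positivity, ?_, hd2 ?_⟩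
    · have := min_le_right (d / 2) (η₁ / 2); linarith
    · have := min_le_left (d / 2) (η₁ / 2)
      have h2 : 0 < min (d / 2) (η₁ / 2) := by positivity
      rw [Real.dist_eq, sub_zero, abs_of_pos h2]
      linarith
  obtain ⟨F₀, hF₀, hv⟩ := exists_frame hL p hp C₀ hC₀ hBL η hη
  have hD := F₀.val_pos p
  -- choice of the perturbation size
  obtain ⟨e, he, he2, hed, hev⟩ : ∃ e : ℝ, 0 < e ∧ e ≤ 1 / 2 ∧
      (1 - e)⁻¹ ^ 2 * (1 + η + 3 * e * P) - 1 < 2 * η ∧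
      (1 - e)⁻¹ ^ n * F₀.val p * rexp (C * (2 * η)) < (1 + t) * C₀ := by
    have hi : ContinuousAt (fun e : ℝ => (1 - e)⁻¹) 0 :=
      ContinuousAt.inv₀ (by fun_prop) (by norm_num)
    have h1 : ∀ᶠ e in 𝓝 (0 : ℝ), (1 - e)⁻¹ ^ 2 * (1 + η + 3 * e * P) - 1 < 2 * η := by
      refine ContinuousAt.eventually_lt (g := fun _ => 2 * η) (((hi.pow 2).mul (by fun_prop)).sub continuousAt_const)
        continuousAt_const ?_
      norm_num
      linarith
    have h2 : ∀ᶠ e in 𝓝 (0 : ℝ), (1 - e)⁻¹ ^ n * F₀.val p * rexp (C * (2 * η)) < (1 + t) * C₀ := by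
      refine ContinuousAt.eventually_lt (g := fun _ => (1 + t) * C₀)
        (((hi.pow n).mul continuousAt_const).mul continuousAt_const)
        continuousAt_const ?_
      simp only [sub_zero, inv_one, one_pow, one_mul]
      calc F₀.val p * rexp (C * (2 * η)) ≤ C₀ * √(1 + η) ^ n * rexp (C * (2 * η)) := by gcongr
        _ = C₀ * (√(1 + η) ^ n * rexp (C * (2 * η))) := by ring
        _ < C₀ * (1 + t) := by gcongr
        _ = _ := by ring
    obtain ⟨d, hd, hd2⟩ := Metric.eventually_nhds_iff.1 (h1.and h2)
    have h3 : dist (min (d / 2) (1 / 2)) 0 < d := by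
      have := min_le_left (d / 2) (1 / 2)
      have h2 : 0 < min (d / 2) (1 / 2) := by positivity
      rw [Real.dist_eq, sub_zero, abs_of_pos h2]
      linarith
    exact ⟨min (d / 2) (1 / 2), by positivity, min_le_right _ _, (hd2 h3).1, (hd2 h3).2⟩
  set a : ℝ := 1 / (√P + 1) ^ 2 with ha
  have ha0 : 0 < a := by positivity
  set l := 4 * C / a with hl
  have hl0 : 0 < l := by positivity
  set Hs := ∑ j, ‖(F₀.H j : Euc (nn j) →L[ℝ] Euc (nn j))‖ with hHs
  have hHs0 : 0 ≤ Hs := Finset.sum_nonneg fun j _ => norm_nonneg _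
  have hHj : ∀ j, ‖(F₀.H j : Euc (nn j) →L[ℝ] Euc (nn j))‖ ≤ Hs := fun j =>
    Finset.single_le_sum (f := fun j => ‖(F₀.H j : Euc (nn j) →L[ℝ] Euc (nn j))‖)
      (fun j _ => norm_nonneg _) (Finset.mem_univ j)
  have hHz : ∀ j z, ‖F₀.H j z‖ ≤ Hs * ‖z‖ := fun j z =>
    ((F₀.H j : Euc (nn j) →L[ℝ] Euc (nn j)).le_opNorm z).trans
      (mul_le_mul_of_nonneg_right (hHj j) (norm_nonneg _))
  set G := ‖(F₀.g : Euc n →L[ℝ] Euc n)‖ with hG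
  have hG0 : 0 ≤ G := norm_nonneg _
  have hGz : ∀ z, ‖F₀.g z‖ ≤ G * ‖z‖ := fun z => (F₀.g : Euc n →L[ℝ] Euc n).le_opNorm z
  set G' := ‖(F₀.g.symm : Euc n →L[ℝ] Euc n)‖ with hG'
  have hG'0 : 0 ≤ G' := norm_nonneg _
  have hG'z : ∀ z, ‖F₀.g.symm z‖ ≤ G' * ‖z‖ := fun z => (F₀.g.symm : Euc n →L[ℝ] Euc n).le_opNorm z
  set M := 1 + G + G' + G' * (G * (2 * Hs)) with hM
  have hM1 : 0 ≤ G' * (G * (2 * Hs)) := by positivity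
  refine ⟨e / (Hs * G + 1), F₀.val p / 2 ^ n, 32 * η * l ^ 2, 2 * M, by positivity, by positivity,
    by positivity, by positivity, ?_⟩
  intro A hA s hs
  have hs0 : 0 < s := by linarith
  have hMs : M ≤ rexp (s / 2) := by
    have := Real.add_one_le_exp (s / 2)
    linarith
  have hss : rexp (s / 2) * rexp (s / 2) = rexp s := by rw [← Real.exp_add]; congr 1; ring
  have hss1 : 1 ≤ rexp (s / 2) := Real.one_le_exp (by linarith)
  have hss2 : rexp (s / 2) ≤ rexp s := by rw [← hss]; nlinarith
  obtain ⟨F₁, hg, hH, hval1, hval2, hdef⟩ := F₀.perturb (A := A) p hp hdim e he.le he2 (by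
    intro j x
    rw [← map_sub, ← _root_.sub_apply]
    calc ‖F₀.H j ((A j - L j) (F₀.g x))‖ ≤ Hs * ((e / (Hs * G + 1)) * (G * ‖x‖)) := by
          refine (hHz j _).trans (mul_le_mul_of_nonneg_left ?_ hHs0)
          refine ((A j - L j).le_opNorm _).trans ?_
          exact mul_le_mul (hA j) (hGz x) (norm_nonneg _) (by positivity)
      _ = e * (Hs * G / (Hs * G + 1)) * ‖x‖ := by ring
      _ ≤ e * 1 * ‖x‖ := by
          gcongr
          rw [div_le_one (by positivity)]
          linarith
      _ = _ := by ring) η hF₀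
  have hdef1 : F₁.Defect p (2 * η) := hdef.mono hed.le
  have hsec : ∀ j z, A j (F₁.g (ContinuousLinearMap.adjoint (F₁.T j) (F₁.H j z))) = z := by
    intro j z
    have := F₁.coiso j (F₁.H j z)
    exact (F₁.H j).injective this
  have hAs : ∀ j, Function.Surjective (A j) := fun j z => ⟨_, hsec j z⟩
  set N := ⌊s / (2 * l)⌋₊ with hN
  have hN1 : (N : ℝ) * l ≤ s / 2 := by
    have := Nat.floor_le (a := s / (2 * l)) (by positivity)
    calc (N : ℝ) * l ≤ s / (2 * l) * l := by gcongr
      _ = s / 2 := by field_simp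
  have hN2 : s / (2 * l) ≤ N + 1 := (Nat.lt_floor_add_one _).le
  obtain ⟨F, c, hFg, hc1, hc2, hval, hFd⟩ := Frame.refine hAs p hp C η₁ hC hdual F₁ (2 * η)
    (by positivity) hη2 hdef1 a ha N
  have hc3 : ∀ x, ‖c.symm x‖ ≤ rexp (s / 2) * ‖x‖ := fun x => (hc2 x).trans
    (mul_le_mul_of_nonneg_right (Real.exp_le_exp.2 hN1) (norm_nonneg _))
  have hFs : ∀ x, ‖F.g.symm x‖ ≤ rexp (s / 2) * (G' * ‖x‖) := by
    intro x
    rw [hFg, hg]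
    exact (hc3 _).trans (mul_le_mul_of_nonneg_left (hG'z x) (by positivity))
  refine ⟨F, ?_, ?_, ?_, ?_, ?_, ?_⟩
  · intro x
    rw [hFg, hg]
    calc ‖F₀.g (c x)‖ ≤ G * ‖c x‖ := hGz _
      _ ≤ rexp s * ‖x‖ := mul_le_mul (by linarith) (hc1 x) (norm_nonneg _) (by positivity)
  · intro x
    refine (hFs x).trans ?_
    rw [← mul_assoc, ← hss]
    gcongr
    linarith
  · intro j z
    set x := F₁.g (ContinuousLinearMap.adjoint (F₁.T j) (F₁.H j z)) with hx
    have h1 : F.H j z = F.T j (F.g.symm x) := by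
      rw [Frame.T_apply, ContinuousLinearEquiv.apply_symm_apply, hsec j z]
    have h2 : ‖x‖ ≤ G * (2 * (Hs * ‖z‖)) := by
      rw [hx, hg]
      refine (hGz _).trans (mul_le_mul_of_nonneg_left ?_ hG0)
      rw [Coiso.norm_adjoint (T := F₁.T j) (F₁.coiso j)]
      exact (hH j z).trans (mul_le_mul_of_nonneg_left (hHz j z) (by norm_num))
    calc ‖F.H j z‖ ≤ ‖F.g.symm x‖ := by rw [h1]; exact Coiso.norm_le (F.coiso j) _
      _ ≤ rexp (s / 2) * (G' * (G * (2 * (Hs * ‖z‖)))) :=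
          (hFs x).trans (by gcongr)
      _ = rexp (s / 2) * (G' * (G * (2 * Hs))) * ‖z‖ := by ring
      _ ≤ rexp (s / 2) * rexp (s / 2) * ‖z‖ := by gcongr; linarith
      _ = _ := by rw [hss]
  · refine hFd.mono ?_
    have h1 := sq_le_two_pow N
    have h2 : (s / (2 * l)) ^ 2 ≤ 4 * 2 ^ N := (pow_le_pow_left₀ (by positivity) hN2 2).trans h1
    rw [div_le_div_iff₀ (by positivity) (by positivity)]
    have h3 : s ^ 2 = (s / (2 * l)) ^ 2 * (4 * l ^ 2) := by field_simp; norm_num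
    rw [h3]
    calc 2 * η * ((s / (2 * l)) ^ 2 * (4 * l ^ 2)) ≤ 2 * η * (4 * 2 ^ N * (4 * l ^ 2)) := by gcongr
      _ = _ := by ring
  · refine le_trans ?_ hval
    rw [div_le_iff₀ (by positivity)]
    calc F₀.val p ≤ (1 + e) ^ n * F₁.val p := hval2
      _ ≤ 2 ^ n * F₁.val p := by
          have := (F₁.val_pos p).le
          gcongr
          linarith
      _ = _ := by ring
  · rw [F₁.val_eq F p]
    have h1 : ratio F₁.T p (F.g.trans F₁.g.symm) ≤ rexp (C * (2 * η)) :=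
      hdual F₁.T F₁.coiso (2 * η) (by positivity) hη2 hdef1 _
    calc _ ≤ F₁.val p * rexp (C * (2 * η)) := mul_le_mul_of_nonneg_left h1 (F₁.val_pos p).le
      _ ≤ (1 - e)⁻¹ ^ n * F₀.val p * rexp (C * (2 * η)) := by gcongr
      _ ≤ _ := hev.le

end NBL

/-! ### Log-quasiconvexity -/

namespace NBL
open Filter Topology
open scoped RealInnerProductSpace
variable {ι : Type} [Fintype ι] {nn : ι → ℕ} {n : ℕ}

/-- Midpoint log-quasiconvexity with constant `Λ`: `log f + πΛ|·|²` is midpoint convex. Gaussian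
mixtures have this property, and products of such functions keep it. -/
def LC {k : ℕ} (Λ : ℝ) (f : Euc k → ℝ≥0∞) : Prop :=
  ∀ z v, f z ^ 2 ≤ ENNReal.ofReal (rexp (2 * π * Λ * ‖v‖ ^ 2)) * (f (z + v) * f (z - v))

lemma LC.mono {k : ℕ} {Λ Λ' : ℝ} {f : Euc k → ℝ≥0∞} (h : LC Λ f) (hΛ : Λ ≤ Λ') : LC Λ' f := by
  intro z v
  refine (h z v).trans ?_
  gcongr

lemma LC.mul {k : ℕ} {Λ Λ' : ℝ} {f g : Euc k → ℝ≥0∞} (hf : LC Λ f) (hg : LC Λ' g) :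
    LC (Λ + Λ') (fun z => f z * g z) := by
  intro z v
  have e : rexp (2 * π * (Λ + Λ') * ‖v‖ ^ 2) = rexp (2 * π * Λ * ‖v‖ ^ 2) * rexp (2 * π * Λ' * ‖v‖ ^ 2) := by
    rw [← Real.exp_add]; congr 1; ring
  rw [e, ENNReal.ofReal_mul (Real.exp_pos _).le, mul_pow]
  calc f z ^ 2 * g z ^ 2 ≤ _ * _ := mul_le_mul' (hf z v) (hg z v)
    _ = _ := by ring

lemma LC.const_mul {k : ℕ} {Λ : ℝ} {f : Euc k → ℝ≥0∞} (hf : LC Λ f) (c : ℝ≥0∞) :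
    LC Λ (fun z => c * f z) := by
  intro z v
  rw [mul_pow]
  calc c ^ 2 * f z ^ 2 ≤ c ^ 2 * _ := mul_le_mul_right (hf z v) _
    _ = _ := by ring

lemma LC_gE {k l : ℕ} (T : Euc k →L[ℝ] Euc l) (M : ℝ) (hT : ∀ z, ‖T z‖ ≤ M * ‖z‖)
    (w : Euc k) : LC (M ^ 2) (fun z => gE (T (z - w))) := by
  intro z v
  have e1 : T (z + v - w) = T (z - w) + T v := by rw [← map_add]; congr 1; abel
  have e2 : T (z - v - w) = T (z - w) - T v := by rw [← map_sub]; congr 1; abel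
  show gE (T (z - w)) ^ 2 ≤ _ * (gE (T (z + v - w)) * gE (T (z - v - w)))
  rw [e1, e2]
  unfold gE
  rw [← ENNReal.ofReal_mul (Real.exp_pos _).le, ← ENNReal.ofReal_mul (Real.exp_pos _).le,
    ← ENNReal.ofReal_pow (Real.exp_pos _).le, ← Real.exp_add, ← Real.exp_add, ← Real.exp_nat_mul]
  refine ENNReal.ofReal_le_ofReal (Real.exp_le_exp.2 ?_)
  have h1 := parallelogram_law_with_norm ℝ (T (z - w)) (T v)
  have h2 : ‖T v‖ ^ 2 ≤ M ^ 2 * ‖v‖ ^ 2 := by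
    rw [← mul_pow]; exact pow_le_pow_left₀ (norm_nonneg _) (hT v) 2
  have h3 := mul_le_mul_of_nonneg_left h2 (show 0 ≤ 2 * π by positivity)
  push_cast
  have h4 : π * (‖T (z - w) + T v‖ ^ 2 + ‖T (z - w) - T v‖ ^ 2) =
      π * (2 * ‖T (z - w)‖ ^ 2 + 2 * ‖T v‖ ^ 2) := by
    congr 1
    simp only [pow_two]
    linarith
  nlinarith

/-- Cauchy–Schwarz for functions with `φ² ≤ c a b`. -/
lemma lintegral_sq_le {α : Type*} [MeasurableSpace α] (μ : Measure α) (a b φ : α → ℝ≥0∞)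
    (ha : Measurable a) (hb : Measurable b) (c : ℝ≥0∞) (h : ∀ x, φ x ^ 2 ≤ c * (a x * b x)) :
    (∫⁻ x, φ x ∂μ) ^ 2 ≤ c * ((∫⁻ x, a x ∂μ) * ∫⁻ x, b x ∂μ) := by
  have hh : ∀ x, φ x ≤ c ^ (1 / 2 : ℝ) * (a x ^ (1 / 2 : ℝ) * b x ^ (1 / 2 : ℝ)) := by
    intro x
    rw [← ENNReal.mul_rpow_of_nonneg _ _ (by norm_num : (0 : ℝ) ≤ 1 / 2),
      ← ENNReal.mul_rpow_of_nonneg _ _ (by norm_num : (0 : ℝ) ≤ 1 / 2)]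
    rw [← ENNReal.pow_le_pow_left_iff (n := 2) (by norm_num), ← ENNReal.rpow_two,
      ← ENNReal.rpow_two, ← ENNReal.rpow_mul]
    norm_num
    exact h x
  have hsq : ∀ y : ℝ≥0∞, (y ^ (1 / 2 : ℝ)) ^ (2 : ℝ) = y := by
    intro y
    rw [← ENNReal.rpow_mul]; norm_num
  have hsq' : ∀ y : ℝ≥0∞, (y ^ (1 / 2 : ℝ)) ^ 2 = y := by
    intro y
    rw [← ENNReal.rpow_two, hsq]
  have h2 := ENNReal.lintegral_mul_le_Lp_mul_Lq μ (Real.HolderConjugate.two_two)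
    (f := fun x => a x ^ (1 / 2 : ℝ)) (g := fun x => b x ^ (1 / 2 : ℝ))
    (ha.pow_const _).aemeasurable (hb.pow_const _).aemeasurable
  simp only [hsq, Pi.mul_apply] at h2
  have hm : Measurable fun x => a x ^ (1 / 2 : ℝ) * b x ^ (1 / 2 : ℝ) :=
    (ha.pow_const _).mul (hb.pow_const _)
  calc (∫⁻ x, φ x ∂μ) ^ 2
      ≤ (∫⁻ x, c ^ (1 / 2 : ℝ) * (a x ^ (1 / 2 : ℝ) * b x ^ (1 / 2 : ℝ)) ∂μ) ^ 2 := by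
        gcongr with x; exact hh x
    _ = (c ^ (1 / 2 : ℝ) * ∫⁻ x, (a x ^ (1 / 2 : ℝ) * b x ^ (1 / 2 : ℝ)) ∂μ) ^ 2 := by
        rw [lintegral_const_mul _ hm]
    _ ≤ (c ^ (1 / 2 : ℝ) * ((∫⁻ x, a x ∂μ) ^ (1 / 2 : ℝ) * (∫⁻ x, b x ∂μ) ^ (1 / 2 : ℝ))) ^ 2 := by
        gcongr
    _ = _ := by rw [mul_pow, mul_pow, hsq', hsq', hsq']

/-- Convolutions with Gaussians satisfy the log-quasiconvexity of the Gaussian. -/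
lemma LC_conv {k l : ℕ} (T : Euc k →L[ℝ] Euc l) (M : ℝ) (hT : ∀ z, ‖T z‖ ≤ M * ‖z‖)
    (h : Euc k → ℝ≥0∞) (hh : Measurable h) : LC (M ^ 2) (fun z => ∫⁻ w, h w * gE (T (w - z))) := by
  have hs : ∀ z w : Euc k, gE (T (w - z)) = gE (T (z - w)) := by
    intro z w
    unfold gE
    rw [← neg_sub z w, map_neg, norm_neg]
  intro z v
  have hm : ∀ y : Euc k, Measurable fun w => h w * gE (T (w - y)) := fun y =>
    hh.mul (measurable_gE.comp (by fun_prop))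
  refine lintegral_sq_le volume _ _ _ (hm (z + v)) (hm (z - v)) _ fun w => ?_
  rw [hs z, hs (z + v), hs (z - v)]
  exact ((LC_gE T M hT w).const_mul (h w)) z v

lemma LC_smooth {k : ℕ} (s : ℝ) (hs : 0 < s) (h : Euc k → ℝ≥0∞) (hh : Measurable h) :
    LC (s⁻¹ ^ 2) (smooth s h) := by
  have e : smooth s h = fun z => ENNReal.ofReal (s⁻¹ ^ k) * ∫⁻ w, h w * gE (s⁻¹ • (w - z)) := by
    funext z
    exact smooth_eq hs h z
  rw [e]
  refine LC.const_mul ?_ _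
  exact LC_conv (s⁻¹ • ContinuousLinearMap.id ℝ (Euc k)) s⁻¹ (fun z => by
    simp [norm_smul, abs_of_pos hs]) h hh

lemma four_mul_le (a b : ℝ≥0∞) : 4 * (a * b) ≤ (a + b) ^ 2 := by
  rcases eq_or_ne a ⊤ with rfl | ha
  · simp
  rcases eq_or_ne b ⊤ with rfl | hb
  · simp
  lift a to NNReal using ha
  lift b to NNReal using hb
  norm_cast
  rw [← NNReal.coe_le_coe]
  push_cast
  nlinarith [sq_nonneg ((a : ℝ) - b)]

lemma shift_ball {k : ℕ} (u : Euc k) (r : ℝ) (f : Euc k → ℝ≥0∞) :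
    ∫⁻ x in closedBall u r, f x = ∫⁻ y in closedBall 0 r, f (u + y) := by
  rw [← lintegral_indicator measurableSet_closedBall, ← lintegral_indicator measurableSet_closedBall,
    ← lintegral_add_left_eq_self _ u]
  refine lintegral_congr fun y => ?_
  simp only [Set.indicator, mem_closedBall, dist_eq_norm, add_sub_cancel_left, sub_zero]

lemma shift_ball' {k : ℕ} (u : Euc k) (r : ℝ) (f : Euc k → ℝ≥0∞) :
    ∫⁻ x in closedBall u r, f x = ∫⁻ y in closedBall 0 r, f (u - y) := by
  rw [← lintegral_indicator measurableSet_closedBall, ← lintegral_indicator measurableSet_closedBall,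
    ← lintegral_sub_left_eq_self _ u]
  refine lintegral_congr fun y => ?_
  simp only [Set.indicator, mem_closedBall, dist_eq_norm, sub_sub_cancel_left, sub_zero, norm_neg]

/-- Log-quasiconvexity bounds point values by averages over balls. -/
lemma LC.avg {k : ℕ} {Λ : ℝ} (hΛ : 0 ≤ Λ) {f : Euc k → ℝ≥0∞} (hf : LC Λ f) (hm : Measurable f)
    (τ : ℝ) (z : Euc k) :
    volume (closedBall (0 : Euc k) τ) * f z ≤
      ENNReal.ofReal (rexp (π * Λ * τ ^ 2)) * ∫⁻ w in closedBall z τ, f w := by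
  set c := ENNReal.ofReal (rexp (π * Λ * τ ^ 2)) with hc
  have h1 : ∀ v ∈ closedBall (0 : Euc k) τ, 2 * f z ≤ c * (f (z + v) + f (z - v)) := by
    intro v hv
    rw [mem_closedBall, dist_zero_right] at hv
    rw [← ENNReal.pow_le_pow_left_iff (n := 2) (by norm_num)]
    have hexp : ENNReal.ofReal (rexp (2 * π * Λ * ‖v‖ ^ 2)) ≤ c ^ 2 := by
      rw [hc, ← ENNReal.ofReal_pow (Real.exp_pos _).le, ← Real.exp_nat_mul]
      refine ENNReal.ofReal_le_ofReal (Real.exp_le_exp.2 ?_)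
      push_cast
      have := pow_le_pow_left₀ (norm_nonneg v) hv 2
      have h2 := mul_le_mul_of_nonneg_left this (show 0 ≤ 2 * π * Λ by positivity)
      linarith
    calc (2 * f z) ^ 2 = 4 * f z ^ 2 := by ring
      _ ≤ 4 * (c ^ 2 * (f (z + v) * f (z - v))) :=
          mul_le_mul_right ((hf z v).trans (mul_le_mul_left hexp _)) _
      _ = c ^ 2 * (4 * (f (z + v) * f (z - v))) := by ring
      _ ≤ c ^ 2 * (f (z + v) + f (z - v)) ^ 2 := mul_le_mul_right (four_mul_le _ _) _
      _ = _ := by ring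
  have hm1 : Measurable fun v => f (z + v) := hm.comp (by fun_prop)
  have hm2 : Measurable fun v => f (z - v) := hm.comp (by fun_prop)
  have h2 : ∫⁻ v in closedBall (0 : Euc k) τ, 2 * f z ≤
      ∫⁻ v in closedBall (0 : Euc k) τ, c * (f (z + v) + f (z - v)) :=
    setLIntegral_mono (by fun_prop) h1
  have hm3 : Measurable fun v => f (z + v) + f (z - v) := hm1.add hm2
  rw [lintegral_const, Measure.restrict_apply_univ, lintegral_const_mul _ hm3, lintegral_add_left hm1,
    ← shift_ball, ← shift_ball', ← two_mul] at h2
  have h3 : 2 * (volume (closedBall (0 : Euc k) τ) * f z) ≤ 2 * (c * ∫⁻ w in closedBall z τ, f w) := by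
    calc _ = _ := by ring
      _ ≤ _ := h2
      _ = _ := by ring
  exact (ENNReal.mul_le_mul_iff_right (by norm_num) (by norm_num)).1 h3

end NBL

/-! ### Maps close to affine ones -/

namespace NBL
open Filter Topology
open scoped RealInnerProductSpace
variable {ι : Type} [Fintype ι] {nn : ι → ℕ} {n : ℕ}

/-- Volume of the unit ball. -/
noncomputable def om (k : ℕ) : ℝ := (volume (ball (0 : Euc k) 1)).toReal

lemma om_pos (k : ℕ) : 0 < om k :=
  ENNReal.toReal_pos (measure_ball_pos _ _ one_pos).ne' measure_ball_lt_top.ne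

lemma vol_ball {k : ℕ} (z : Euc k) (t : ℝ) (ht : 0 ≤ t) :
    volume (closedBall z t) = ENNReal.ofReal (t ^ k * om k) := by
  rw [Measure.addHaar_closedBall _ _ ht, ENNReal.ofReal_mul (by positivity), om,
    ENNReal.ofReal_toReal measure_ball_lt_top.ne]
  simp

/-- The integral of `f` over the ball of radius `t` centred at `b + z`. -/
noncomputable def bav {k : ℕ} (t : ℝ) (b : Euc k) (f : Euc k → ℝ≥0∞) (z : Euc k) : ℝ≥0∞ :=
  ∫⁻ w in closedBall (b + z) t, f w

lemma bav_eq {k : ℕ} (t : ℝ) (b : Euc k) (f : Euc k → ℝ≥0∞) (z : Euc k) :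
    bav t b f z = ∫⁻ w, (closedBall (0 : Euc k) t).indicator 1 (w - b - z) * f w := by
  rw [bav, ← lintegral_indicator measurableSet_closedBall]
  refine lintegral_congr fun w => ?_
  simp only [Set.indicator, mem_closedBall, dist_eq_norm, sub_zero, sub_sub]
  split_ifs <;> simp

lemma measurable_bav_aux {k : ℕ} (t : ℝ) (b : Euc k) (f : Euc k → ℝ≥0∞) (hf : Measurable f) :
    Measurable (Function.uncurry fun z w => (closedBall (0 : Euc k) t).indicator (1 : Euc k → ℝ≥0∞) (w - b - z) * f w) := by
  refine Measurable.mul ?_ (hf.comp measurable_snd)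
  exact (measurable_one.indicator measurableSet_closedBall).comp
    (f := fun q : Euc k × Euc k => q.2 - b - q.1) (by fun_prop)

lemma measurable_bav {k : ℕ} (t : ℝ) (b : Euc k) (f : Euc k → ℝ≥0∞) (hf : Measurable f) :
    Measurable (bav t b f) := by
  have : bav t b f = fun z => ∫⁻ w, (closedBall (0 : Euc k) t).indicator 1 (w - b - z) * f w := by
    funext z; exact bav_eq t b f z
  rw [this]
  exact (measurable_bav_aux t b f hf).lintegral_prod_right'

lemma lintegral_bav {k : ℕ} (t : ℝ) (ht : 0 ≤ t) (b : Euc k) (f : Euc k → ℝ≥0∞) (hf : Measurable f) :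
    ∫⁻ z, bav t b f z = ENNReal.ofReal (t ^ k * om k) * ∫⁻ w, f w := by
  simp_rw [bav_eq]
  rw [lintegral_lintegral_swap (measurable_bav_aux t b f hf).aemeasurable, ← lintegral_const_mul _ hf]
  refine lintegral_congr fun w => ?_
  have hm : Measurable fun z => (closedBall (0 : Euc k) t).indicator (1 : Euc k → ℝ≥0∞) (w - b - z) :=
    (measurable_one.indicator measurableSet_closedBall).comp (f := fun z => w - b - z) (by fun_prop)
  rw [lintegral_mul_const _ hm, lintegral_sub_left_eq_self
    (fun z => (closedBall (0 : Euc k) t).indicator (1 : Euc k → ℝ≥0∞) z) (w - b),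
    lintegral_indicator_one measurableSet_closedBall, vol_ball _ _ ht]

lemma bav_le {k : ℕ} (t : ℝ) (b : Euc k) (f : Euc k → ℝ≥0∞) (z : Euc k) : bav t b f z ≤ ∫⁻ w, f w :=
  setLIntegral_le_lintegral _ _

lemma prod_ofReal_rpow (a : ι → ℝ) (ha : ∀ j, 0 ≤ a j) (p : ι → ℝ) (hp : ∀ j, 0 ≤ p j) :
    ∏ j, (ENNReal.ofReal (a j)) ^ p j = ENNReal.ofReal (∏ j, a j ^ p j) := by
  rw [ENNReal.ofReal_prod_of_nonneg fun j _ => Real.rpow_nonneg (ha j) _]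
  exact Finset.prod_congr rfl fun j _ => ENNReal.ofReal_rpow_of_nonneg (ha j) (hp j)

lemma prod_mul_rpow (a b : ι → ℝ≥0∞) (p : ι → ℝ) (hp : ∀ j, 0 ≤ p j) :
    ∏ j, (a j * b j) ^ p j = (∏ j, a j ^ p j) * ∏ j, b j ^ p j := by
  rw [← Finset.prod_mul_distrib]
  exact Finset.prod_congr rfl fun j _ => ENNReal.mul_rpow_of_nonneg _ _ (hp j)

lemma prod_pow_dim (p : ι → ℝ) (hdim : ∑ j, p j * (nn j : ℝ) = n) (t : ℝ) (ht : 0 < t) :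
    ∏ j, (t ^ nn j) ^ p j = t ^ n := by
  rw [← Real.rpow_natCast t n, ← hdim, Real.rpow_sum_of_pos ht]
  refine Finset.prod_congr rfl fun j _ => ?_
  rw [mul_comm, Real.rpow_mul ht.le, Real.rpow_natCast]

/-- The inequality for maps that are `ε₀`-close to affine ones on a ball, for log-quasiconvex
inputs: the inputs are replaced by averages over balls of radius `τ ≫ ε₀`. -/
lemma near_affine {A : ∀ j, Euc n →L[ℝ] Euc (nn j)} (F : Frame A) (p : ι → ℝ)
    (hp : ∀ j, 0 < p j) (hdim : ∑ j, p j * (nn j : ℝ) = n) (η : ℝ) (hη : 0 < η)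
    (hdef : F.Defect p η) (Γ : ℝ) (hΓ : 0 < Γ) (hg : ∀ x, ‖F.g x‖ ≤ Γ * ‖x‖)
    (hg' : ∀ x, ‖F.g.symm x‖ ≤ Γ * ‖x‖)
    (f : ∀ j, Euc (nn j) → ℝ≥0∞) (hf : ∀ j, Measurable (f j)) (hfi : ∀ j, ∫⁻ z, f j z ≠ ⊤)
    (Λ : ℝ) (hΛ : 0 ≤ Λ) (hLC : ∀ j, LC Λ (f j)) (u : Euc n) (r : ℝ) (hr : 0 < r)
    (τ ε₀ : ℝ) (hτ : 0 < τ) (hε₀ : 0 ≤ ε₀) (B : ∀ j, Euc n → Euc (nn j))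
    (hB : ∀ j, ∀ x ∈ closedBall u r, ‖B j x - B j u - A j (x - u)‖ ≤ ε₀)
    (v₀ : ℝ) (hv₀ : 0 < v₀) (hv : v₀ ≤ F.val p) :
    ∫⁻ x in closedBall u r, ∏ j, (f j (B j x)) ^ p j ≤
      ENNReal.ofReal (rexp (π * Λ * τ ^ 2 * ∑ j, p j) * (1 + ε₀ / τ) ^ n * (F.val p *
        (rexp (2 * π * n * η) * ((Γ ^ 2 * r / τ) ^ n * (∏ j, (om (nn j))⁻¹ ^ p j) / v₀) ^
          (2 * η / (1 + 2 * η))))) * ∏ j, (∫⁻ z, f j z) ^ p j := by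
  have hp0 : ∀ j, 0 ≤ p j := fun j => (hp j).le
  have hom : ∀ j, 0 < om (nn j) := fun j => om_pos _
  set t := τ + ε₀ with ht
  have ht0 : 0 < t := by positivity
  set ft : ∀ j, Euc (nn j) → ℝ≥0∞ := fun j => bav t (B j u) (f j) with hft
  have hIntg : ∀ j, ∫⁻ z, ft j z = ENNReal.ofReal (t ^ nn j * om (nn j)) * ∫⁻ z, f j z := fun j =>
    lintegral_bav t ht0.le _ _ (hf j)
  set c : ι → ℝ := fun j => (τ ^ nn j * om (nn j))⁻¹ * rexp (π * Λ * τ ^ 2) with hc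
  have hc0 : ∀ j, 0 < c j := fun j => by have := hom j; simp only [hc]; positivity
  have hpt : ∀ y ∈ closedBall (0 : Euc n) r, ∀ j, f j (B j (u + y)) ≤ ENNReal.ofReal (c j) * ft j (A j y) := by
    intro y hy j
    have h1 := (hLC j).avg hΛ (hf j) τ (B j (u + y))
    rw [vol_ball _ _ hτ.le] at h1
    have hpos : 0 < τ ^ nn j * om (nn j) := by have := hom j; positivity
    have h2 : ∫⁻ w in closedBall (B j (u + y)) τ, f j w ≤ ft j (A j y) := by
      refine lintegral_mono_set (closedBall_subset_closedBall' ?_)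
      rw [dist_eq_norm]
      have h3 := hB j (u + y) (by simpa [dist_eq_norm] using hy)
      rw [add_sub_cancel_left, sub_sub] at h3
      linarith
    calc f j (B j (u + y)) = ENNReal.ofReal (τ ^ nn j * om (nn j))⁻¹ *
          (ENNReal.ofReal (τ ^ nn j * om (nn j)) * f j (B j (u + y))) := by
          rw [← mul_assoc, ← ENNReal.ofReal_mul (by positivity), inv_mul_cancel₀ hpos.ne']
          simp
      _ ≤ ENNReal.ofReal (τ ^ nn j * om (nn j))⁻¹ * (ENNReal.ofReal (rexp (π * Λ * τ ^ 2)) * ft j (A j y)) :=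
          mul_le_mul_right (h1.trans (mul_le_mul_right h2 _)) _
      _ = _ := by rw [← mul_assoc, ← ENNReal.ofReal_mul (by positivity)]
  have hfb := frame_bound F p hp hdim η hη hdef ft (fun j => measurable_bav _ _ _ (hf j))
    (fun j => by rw [hIntg]; exact ENNReal.mul_ne_top ENNReal.ofReal_ne_top (hfi j))
    (fun j => (t ^ nn j * om (nn j))⁻¹) (fun j => by have := hom j; positivity)
    (fun j z => by
      have hpos : 0 < t ^ nn j * om (nn j) := by have := hom j; positivity
      rw [hIntg, ← mul_assoc, ← ENNReal.ofReal_mul (by positivity), inv_mul_cancel₀ hpos.ne']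
      simpa using bav_le t _ (f j) z) (Γ * r) (by positivity) (closedBall 0 r) (fun x hx => by
      rw [mem_closedBall, dist_zero_right] at hx
      exact (hg' x).trans (by gcongr))
  set Q := (Γ * r) ^ n * ∏ j, ((t ^ nn j * om (nn j))⁻¹ / dt (F.H j)) ^ p j with hQ
  have hdtg : dt F.g ≤ Γ ^ n := dt_le_of _ _ hΓ.le hg
  have hPH : 0 < ∏ j, dt (F.H j) ^ p j := Finset.prod_pos fun j _ => Real.rpow_pos_of_pos (dt_pos _) _
  have hΩ : 0 < ∏ j, (om (nn j))⁻¹ ^ p j :=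
    Finset.prod_pos fun j _ => Real.rpow_pos_of_pos (inv_pos.2 (hom j)) _
  have hQe : Q = (Γ * r) ^ n * ((t ^ n)⁻¹ * (∏ j, (om (nn j))⁻¹ ^ p j) * (dt F.g / F.val p)) := by
    rw [hQ]
    congr 1
    have e1 : dt F.g / F.val p = (∏ j, dt (F.H j) ^ p j)⁻¹ := by
      rw [Frame.val]
      have := dt_pos F.g
      field_simp
    rw [e1, ← prod_pow_dim p hdim t ht0, ← Finset.prod_inv_distrib, ← Finset.prod_inv_distrib,
      ← Finset.prod_mul_distrib, ← Finset.prod_mul_distrib]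
    refine Finset.prod_congr rfl fun j _ => ?_
    have := hom j
    rw [div_eq_mul_inv, mul_inv, Real.mul_rpow (by positivity) (inv_pos.2 (dt_pos _)).le,
      Real.mul_rpow (by positivity) (by positivity), Real.inv_rpow (by positivity),
      Real.inv_rpow (dt_pos _).le]
  have hQ0 : 0 ≤ Q := by
    rw [hQe]
    have := dt_pos F.g
    have := F.val_pos p
    positivity
  have hQle : Q ≤ (Γ ^ 2 * r / τ) ^ n * (∏ j, (om (nn j))⁻¹ ^ p j) / v₀ := by
    rw [hQe]
    calc _ ≤ (Γ * r) ^ n * ((τ ^ n)⁻¹ * (∏ j, (om (nn j))⁻¹ ^ p j) * (Γ ^ n / v₀)) := by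
          have := dt_pos F.g
          have := F.val_pos p
          have hτt : τ ≤ t := by linarith
          gcongr
      _ = _ := by rw [div_pow, mul_pow, mul_pow]; ring
  rw [shift_ball]
  calc ∫⁻ y in closedBall 0 r, ∏ j, f j (B j (u + y)) ^ p j
      ≤ ∫⁻ y in closedBall 0 r, (∏ j, ENNReal.ofReal (c j) ^ p j) * ∏ j, ft j (A j y) ^ p j := by
        refine setLIntegral_mono' measurableSet_closedBall fun y hy => ?_
        rw [← prod_mul_rpow _ _ p hp0]
        exact Finset.prod_le_prod' fun j _ => ENNReal.rpow_le_rpow (hpt y hy j) (hp0 j)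
    _ = (∏ j, ENNReal.ofReal (c j) ^ p j) * ∫⁻ y in closedBall 0 r, ∏ j, ft j (A j y) ^ p j := by
        refine lintegral_const_mul' _ _ ?_
        rw [prod_ofReal_rpow _ (fun j => (hc0 j).le) p hp0]
        exact ENNReal.ofReal_ne_top
    _ ≤ (∏ j, ENNReal.ofReal (c j) ^ p j) * (ENNReal.ofReal (F.val p * (rexp (2 * π * n * η) *
        Q ^ (2 * η / (1 + 2 * η)))) * ∏ j, (∫⁻ z, ft j z) ^ p j) := mul_le_mul_right hfb _
    _ = ((∏ j, ENNReal.ofReal (c j) ^ p j) * ∏ j, ENNReal.ofReal (t ^ nn j * om (nn j)) ^ p j) *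
        ENNReal.ofReal (F.val p * (rexp (2 * π * n * η) *
        Q ^ (2 * η / (1 + 2 * η)))) * ∏ j, (∫⁻ z, f j z) ^ p j := by
        simp_rw [hIntg]
        rw [prod_mul_rpow _ _ p hp0]
        ring
    _ = ENNReal.ofReal (rexp (π * Λ * τ ^ 2 * ∑ j, p j) * (1 + ε₀ / τ) ^ n *
        (F.val p * (rexp (2 * π * n * η) *
        Q ^ (2 * η / (1 + 2 * η))))) * ∏ j, (∫⁻ z, f j z) ^ p j := by
        rw [← prod_mul_rpow _ _ p hp0]
        have e2 : ∀ j, ENNReal.ofReal (c j) * ENNReal.ofReal (t ^ nn j * om (nn j)) =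
            ENNReal.ofReal (rexp (π * Λ * τ ^ 2) * (1 + ε₀ / τ) ^ nn j) := by
          intro j
          rw [← ENNReal.ofReal_mul (hc0 j).le]
          congr 1
          have := hom j
          have e3 : 1 + ε₀ / τ = t / τ := by rw [ht]; field_simp
          rw [e3, div_pow]
          simp only [hc]
          field_simp
        simp_rw [e2]
        rw [prod_ofReal_rpow _ (fun j => by positivity) p hp0, ENNReal.ofReal_mul (p := rexp (π * Λ * τ ^ 2 * ∑ j, p j) * (1 + ε₀ / τ) ^ n) (by positivity)]
        congr 3
        rw [← prod_pow_dim p hdim (1 + ε₀ / τ) (by positivity), Finset.mul_sum, Real.exp_sum,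
          ← Finset.prod_mul_distrib]
        refine Finset.prod_congr rfl fun j _ => ?_
        rw [Real.mul_rpow (by positivity) (by positivity), ← Real.exp_mul]
    _ ≤ _ := by
        have := F.val_pos p
        gcongr

end NBL

namespace NBL
open Filter Topology
open scoped RealInnerProductSpace
variable {ι : Type} [Fintype ι] {nn : ι → ℕ} {n : ℕ}

lemma exp_neg_le_inv (s c : ℝ) (hs : 1 ≤ s) (hc : 1 ≤ c) : rexp (-c * s) ≤ 1 / s := by
  have h1 : s ≤ rexp (c * s) := by
    have := Real.add_one_le_exp (c * s)
    nlinarith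
  rw [neg_mul, Real.exp_neg, inv_eq_one_div]
  exact one_div_le_one_div_of_le (by linarith) h1

/-- `near_affine` with the parameters tuned to the scale `r = 2 exp (-16 s)`: the loss over the value
of the frame is `exp (O(1/s))`. -/
lemma near_affine_scale (nn : ι → ℕ) (n : ℕ) (p : ι → ℝ) (hp : ∀ j, 0 < p j)
    (hdim : ∑ j, p j * (nn j : ℝ) = n)
    (κ v₀ Cη : ℝ) (hκ : 0 ≤ κ) (hv₀ : 0 < v₀) (hCη : 0 < Cη) :
    ∃ C : ℝ, 0 < C ∧ ∀ s : ℝ, 1 ≤ s → ∀ (A : ∀ j, Euc n →L[ℝ] Euc (nn j)) (F : Frame A),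
      (∀ x, ‖F.g x‖ ≤ rexp s * ‖x‖) → (∀ x, ‖F.g.symm x‖ ≤ rexp s * ‖x‖) →
      F.Defect p (Cη / s ^ 2) → v₀ ≤ F.val p → ∀ Λ : ℝ, 0 ≤ Λ → Λ ≤ 2 * rexp (50 * s) →
      ∀ f : ∀ j, Euc (nn j) → ℝ≥0∞, (∀ j, Measurable (f j)) → (∀ j, ∫⁻ z, f j z ≠ ⊤) →
      (∀ j, LC Λ (f j)) → ∀ (u : Euc n) (B : ∀ j, Euc n → Euc (nn j)),
      (∀ j, ∀ x ∈ closedBall u (2 * rexp (-16 * s)),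
        ‖B j x - B j u - A j (x - u)‖ ≤ κ * rexp (-32 * s)) →
      ∫⁻ x in closedBall u (2 * rexp (-16 * s)), ∏ j, (f j (B j x)) ^ p j ≤
        ENNReal.ofReal (F.val p * rexp (C / s)) * ∏ j, (∫⁻ z, f j z) ^ p j := by
  set P := ∑ j, p j with hPdef
  have hP : 0 ≤ P := Finset.sum_nonneg fun j _ => (hp j).le
  set Ω := ∏ j, (om (nn j))⁻¹ ^ p j with hΩdef
  have hΩ : 0 < Ω := Finset.prod_pos fun j _ => Real.rpow_pos_of_pos (inv_pos.2 (om_pos _)) _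
  set C₁ := 15 * n + Ω / v₀ with hC₁
  have hC₁0 : 0 < C₁ := by positivity
  refine ⟨2 * π * P + n * κ + 2 * π * n * Cη + 2 * C₁ * Cη, by positivity, ?_⟩
  intro s hs A F hg hg' hdef hv Λ hΛ hΛ' f hf hfi hLC u B hB
  have hs0 : 0 < s := by linarith
  have hη : 0 < Cη / s ^ 2 := by positivity
  set η := Cη / s ^ 2 with hηdef
  have hηs : η ≤ Cη / s := by
    rw [hηdef]
    gcongr
    nlinarith
  have hηs2 : η * s = Cη / s := by rw [hηdef]; field_simp
  refine (near_affine F p hp hdim η hη hdef (rexp s) (Real.exp_pos _) hg hg' f hf hfi Λ hΛ hLC u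
    (2 * rexp (-16 * s)) (by positivity) (rexp (-28 * s)) (κ * rexp (-32 * s)) (Real.exp_pos _)
    (by positivity) B hB v₀ hv₀ hv).trans (mul_le_mul_left (ENNReal.ofReal_le_ofReal ?_) _)
  have hval := F.val_pos p
  have e1 : rexp (π * Λ * rexp (-28 * s) ^ 2 * P) ≤ rexp (2 * π * P / s) := by
    refine Real.exp_le_exp.2 ?_
    have h1 : Λ * rexp (-28 * s) ^ 2 ≤ 2 * (1 / s) := by
      calc Λ * rexp (-28 * s) ^ 2 ≤ 2 * rexp (50 * s) * rexp (-28 * s) ^ 2 := by gcongr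
        _ = 2 * rexp (-6 * s) := by
            rw [← Real.exp_nat_mul, mul_assoc, ← Real.exp_add]; congr 2; push_cast; ring
        _ ≤ _ := by gcongr; exact exp_neg_le_inv s 6 hs (by norm_num)
    calc π * Λ * rexp (-28 * s) ^ 2 * P = π * P * (Λ * rexp (-28 * s) ^ 2) := by ring
      _ ≤ π * P * (2 * (1 / s)) := by gcongr
      _ = _ := by ring
  have e2 : (1 + κ * rexp (-32 * s) / rexp (-28 * s)) ^ n ≤ rexp (n * κ / s) := by
    have h1 : κ * rexp (-32 * s) / rexp (-28 * s) ≤ κ / s := by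
      rw [mul_div_assoc, ← Real.exp_sub, div_eq_mul_one_div κ s]
      gcongr
      refine le_trans (le_of_eq ?_) (exp_neg_le_inv s 4 hs (by norm_num))
      congr 1; ring
    calc _ ≤ rexp (κ / s) ^ n := by
          refine pow_le_pow_left₀ (by positivity) ?_ n
          have := Real.add_one_le_exp (κ / s)
          linarith
      _ = _ := by rw [← Real.exp_nat_mul]; congr 1; ring
  have e3 : rexp (2 * π * n * η) ≤ rexp (2 * π * n * Cη / s) := by
    refine Real.exp_le_exp.2 ?_
    calc 2 * π * n * η ≤ 2 * π * n * (Cη / s) := by gcongr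
      _ = _ := by ring
  have e4 : ((rexp s ^ 2 * (2 * rexp (-16 * s)) / rexp (-28 * s)) ^ n * Ω / v₀) ^ (2 * η / (1 + 2 * η)) ≤
      rexp (2 * C₁ * Cη / s) := by
    have h1 : (rexp s ^ 2 * (2 * rexp (-16 * s)) / rexp (-28 * s)) ^ n * Ω / v₀ ≤ rexp (C₁ * s) := by
      have h2 : rexp s ^ 2 * (2 * rexp (-16 * s)) / rexp (-28 * s) ≤ rexp (15 * s) := by
        have h3 : (2 : ℝ) ≤ rexp s := by
          have := Real.add_one_le_exp s
          linarith
        calc _ = 2 * rexp (14 * s) := by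
              rw [← Real.exp_nat_mul, mul_left_comm, ← Real.exp_add, mul_div_assoc, ← Real.exp_sub]
              congr 2; push_cast; ring
          _ ≤ rexp s * rexp (14 * s) := by gcongr
          _ = _ := by rw [← Real.exp_add]; congr 1; ring
      calc _ ≤ rexp (15 * s) ^ n * Ω / v₀ := by gcongr
        _ = rexp (15 * n * s) * (Ω / v₀) := by rw [← Real.exp_nat_mul, mul_div_assoc]; congr 2; ring
        _ ≤ rexp (15 * n * s) * rexp (Ω / v₀ * s) := by
            gcongr
            have := Real.add_one_le_exp (Ω / v₀ * s)
            have h4 : 0 < Ω / v₀ := by positivity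
            nlinarith
        _ = _ := by rw [← Real.exp_add]; congr 1; ring
    calc _ ≤ rexp (C₁ * s) ^ (2 * η / (1 + 2 * η)) := by
          refine Real.rpow_le_rpow (by positivity) h1 (by positivity)
      _ = rexp (C₁ * s * (2 * η / (1 + 2 * η))) := by rw [← Real.exp_mul]
      _ ≤ rexp (C₁ * s * (2 * η)) := by
          gcongr
          exact div_le_self (by positivity) (by linarith)
      _ = _ := by congr 1; calc C₁ * s * (2 * η) = 2 * C₁ * (η * s) := by ring
                        _ = _ := by rw [hηs2]; ring
  calc _ ≤ rexp (2 * π * P / s) * rexp (n * κ / s) * (F.val p * (rexp (2 * π * n * Cη / s) *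
        rexp (2 * C₁ * Cη / s))) := by gcongr
    _ = F.val p * (rexp (2 * π * P / s) * rexp (n * κ / s) * rexp (2 * π * n * Cη / s) *
        rexp (2 * C₁ * Cη / s)) := by ring
    _ = _ := by
        rw [← Real.exp_add, ← Real.exp_add, ← Real.exp_add]
        congr 2; ring

/-- Gaussian tail bound, from `e^{-π|x|²} ≤ e^{-πR²/2} e^{-π|x|²/2}` outside the ball. -/
lemma gE_tail (n : ℕ) (R : ℝ) (hR : 0 ≤ R) :
    ENNReal.ofReal (1 - √2 ^ n * rexp (-(π * R ^ 2 / 2))) ≤ ∫⁻ x in closedBall (0 : Euc n) R, gE x := by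
  have h2 : (0 : ℝ) < √2 := by positivity
  have h1 := lintegral_add_compl (μ := volume) (gE : Euc n → ℝ≥0∞) (measurableSet_closedBall (x := (0 : Euc n)) (ε := R))
  rw [lintegral_gE] at h1
  have h3 : ∫⁻ x in (closedBall (0 : Euc n) R)ᶜ, gE x ≤ ENNReal.ofReal (√2 ^ n * rexp (-(π * R ^ 2 / 2))) := by
    calc ∫⁻ x in (closedBall (0 : Euc n) R)ᶜ, gE x
        ≤ ∫⁻ x in (closedBall (0 : Euc n) R)ᶜ, ENNReal.ofReal (rexp (-(π * R ^ 2 / 2))) * gE ((√2)⁻¹ • x) := by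
          refine setLIntegral_mono' measurableSet_closedBall.compl fun x hx => ?_
          simp only [Set.mem_compl_iff, mem_closedBall, dist_zero_right, not_le] at hx
          unfold gE
          rw [← ENNReal.ofReal_mul (Real.exp_pos _).le, ← Real.exp_add]
          refine ENNReal.ofReal_le_ofReal (Real.exp_le_exp.2 ?_)
          have h4 : R ^ 2 ≤ ‖x‖ ^ 2 := pow_le_pow_left₀ hR hx.le 2
          rw [norm_smul, mul_pow, norm_inv, Real.norm_of_nonneg h2.le, inv_pow, Real.sq_sqrt (by norm_num)]
          have := mul_le_mul_of_nonneg_left h4 Real.pi_pos.le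
          linarith
      _ ≤ ∫⁻ x, ENNReal.ofReal (rexp (-(π * R ^ 2 / 2))) * gE ((√2)⁻¹ • x) := setLIntegral_le_lintegral _ _
      _ = _ := by
          have hm : Measurable fun x : Euc n => gE ((√2)⁻¹ • x) := measurable_gE.comp (by fun_prop)
          rw [lintegral_const_mul _ hm, lintegral_comp_smul (√2) h2 (fun x : Euc n => gE ((√2)⁻¹ • x))]
          simp_rw [smul_smul, inv_mul_cancel₀ h2.ne', one_smul]
          rw [lintegral_gE, mul_one, ← ENNReal.ofReal_mul (Real.exp_pos _).le, mul_comm]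
  rw [ENNReal.ofReal_sub _ (by positivity), ENNReal.ofReal_one, ← h1]
  exact tsub_le_iff_right.2 (add_le_add_right h3 _)

/-- Lower bound for the mass of the localised Gaussians of a frame. -/
lemma gauss_mass {A : ∀ j, Euc n →L[ℝ] Euc (nn j)} (F : Frame A) (p : ι → ℝ) (η : ℝ) (hη : 0 ≤ η)
    (hdef : F.Defect p η) (δ R : ℝ) (hδ : 0 < δ) (hR : 0 ≤ R) :
    ENNReal.ofReal (dt F.g * ((δ / √(1 + η)) ^ n * (1 - √2 ^ n * rexp (-(π * R ^ 2 / 2))))) ≤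
      ∫⁻ v in {v | ‖F.g.symm v‖ ≤ R * δ}, ∏ j, gE (δ⁻¹ • F.H j (A j v)) ^ p j := by
  have hs : 0 < √(1 + η) := Real.sqrt_pos.2 (by linarith)
  have hms : MeasurableSet {v : Euc n | ‖F.g.symm v‖ ≤ R * δ} :=
    measurableSet_le (by fun_prop) measurable_const
  rw [← lintegral_indicator hms, lintegral_equiv F.g, ENNReal.ofReal_mul (dt_pos _).le,
    lintegral_comp_smul (δ / √(1 + η)) (by positivity), ENNReal.ofReal_mul (by positivity)]
  refine mul_le_mul_right (mul_le_mul_right ((gE_tail n R hR).trans ?_) _) _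
  rw [← lintegral_indicator measurableSet_closedBall]
  refine lintegral_mono fun x => ?_
  by_cases hx : x ∈ closedBall (0 : Euc n) R
  swap
  · rw [Set.indicator_of_notMem hx]; exact zero_le
  rw [Set.indicator_of_mem hx]
  rw [mem_closedBall, dist_zero_right] at hx
  have h1 : 1 ≤ √(1 + η) := Real.one_le_sqrt.2 (by linarith)
  rw [Set.indicator_of_mem]
  · rw [prod_gE]
    unfold gE
    refine ENNReal.ofReal_le_ofReal (Real.exp_le_exp.2 ?_)
    have h3 : ∑ j, p j * ‖δ⁻¹ • F.H j (A j (F.g ((δ / √(1 + η)) • x)))‖ ^ 2 ≤ ‖x‖ ^ 2 := by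
      have h2 := hdef ((√(1 + η))⁻¹ • x)
      rw [norm_smul, norm_inv, Real.norm_of_nonneg hs.le, mul_pow, inv_pow, Real.sq_sqrt (by linarith),
        ← mul_assoc, mul_inv_cancel₀ (by linarith), one_mul] at h2
      refine le_trans (le_of_eq ?_) h2
      refine Finset.sum_congr rfl fun j _ => ?_
      rw [← map_smul, ← map_smul, ← map_smul, smul_smul]
      congr 6
      field_simp
    have := mul_le_mul_of_nonneg_left h3 Real.pi_pos.le
    linarith
  · show ‖F.g.symm (F.g ((δ / √(1 + η)) • x))‖ ≤ R * δ
    rw [ContinuousLinearEquiv.symm_apply_apply, norm_smul, Real.norm_of_nonneg (by positivity)]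
    calc δ / √(1 + η) * ‖x‖ ≤ δ * R := by
          gcongr
          exact div_le_self hδ.le h1
      _ = _ := mul_comm _ _

end NBL

/-! ### Induction on scales -/

namespace NBL
open Filter Topology
open scoped RealInnerProductSpace
variable {ι : Type} [Fintype ι] {nn : ι → ℕ} {n : ℕ}

lemma lintegral_gs {k : ℕ} (H : Euc k ≃L[ℝ] Euc k) (δ : ℝ) (hδ : 0 < δ) :
    ∫⁻ z, gE (δ⁻¹ • H z) = ENNReal.ofReal (δ ^ k * (dt H)⁻¹) := by
  rw [lintegral_equiv H.symm, dt_symm]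
  simp_rw [ContinuousLinearEquiv.apply_symm_apply]
  rw [lintegral_comp_smul δ hδ (fun z : Euc k => gE (δ⁻¹ • z))]
  simp_rw [smul_smul, inv_mul_cancel₀ hδ.ne', one_smul]
  rw [lintegral_gE, mul_one, ← ENNReal.ofReal_mul (inv_pos.2 (dt_pos _)).le, mul_comm]

lemma prod_lintegral_gs {A : ∀ j, Euc n →L[ℝ] Euc (nn j)} (F : Frame A) (p : ι → ℝ) (hp : ∀ j, 0 ≤ p j)
    (hdim : ∑ j, p j * (nn j : ℝ) = n) (δ : ℝ) (hδ : 0 < δ) :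
    ∏ j, (∫⁻ z, gE (δ⁻¹ • F.H j z)) ^ p j = ENNReal.ofReal (δ ^ n * (dt F.g / F.val p)) := by
  simp_rw [lintegral_gs _ δ hδ]
  rw [prod_ofReal_rpow _ (fun j => by have := dt_pos (F.H j); positivity) p hp]
  congr 1
  have hPH : 0 < ∏ j, dt (F.H j) ^ p j := Finset.prod_pos fun j _ => Real.rpow_pos_of_pos (dt_pos _) _
  have e1 : dt F.g / F.val p = (∏ j, dt (F.H j) ^ p j)⁻¹ := by
    rw [Frame.val]
    have := dt_pos F.g
    field_simp
  rw [e1, ← prod_pow_dim p hdim δ hδ, ← Finset.prod_inv_distrib, ← Finset.prod_mul_distrib]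
  refine Finset.prod_congr rfl fun j _ => ?_
  rw [Real.mul_rpow (by positivity) (inv_pos.2 (dt_pos _)).le, Real.inv_rpow (dt_pos _).le]

lemma gE_close {k : ℕ} (a b : Euc k) (R θ : ℝ) (ha : ‖a‖ ≤ R) (hθ : ‖b - a‖ ≤ θ) :
    gE a ≤ ENNReal.ofReal (rexp (π * (2 * R * θ + θ ^ 2))) * gE b := by
  unfold gE
  rw [← ENNReal.ofReal_mul (Real.exp_pos _).le, ← Real.exp_add]
  refine ENNReal.ofReal_le_ofReal (Real.exp_le_exp.2 ?_)
  have h1 : ‖b‖ ≤ ‖a‖ + θ := by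
    have := norm_sub_norm_le b a
    linarith
  have hθ0 : 0 ≤ θ := (norm_nonneg _).trans hθ
  have h2 : ‖b‖ ^ 2 ≤ (‖a‖ + θ) ^ 2 := pow_le_pow_left₀ (norm_nonneg _) h1 2
  have h3 : ‖b‖ ^ 2 ≤ ‖a‖ ^ 2 + (2 * R * θ + θ ^ 2) := by nlinarith
  have := mul_le_mul_of_nonneg_left h3 Real.pi_pos.le
  linarith

lemma lintegral_conv {k : ℕ} (f g : Euc k → ℝ≥0∞) (hf : Measurable f) (hg : Measurable g) :
    ∫⁻ w, ∫⁻ z, f z * g (z - w) = (∫⁻ z, f z) * ∫⁻ z, g z := by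
  have hm : Measurable (Function.uncurry fun w z => f z * g (z - w)) :=
    (hf.comp measurable_snd).mul (hg.comp (f := fun q : Euc k × Euc k => q.2 - q.1) (by fun_prop))
  rw [lintegral_lintegral_swap hm.aemeasurable, ← lintegral_mul_const _ hf]
  refine lintegral_congr fun z => ?_
  have hm2 : Measurable fun w => g (z - w) := hg.comp (by fun_prop)
  rw [lintegral_const_mul _ hm2, lintegral_sub_left_eq_self g z]

/-- One induction-on-scales step: inserting a Gaussian partition of scale `δ` adapted to a frame,
the integral over a ball of radius `r` is controlled by integrals over balls of radius `r'` and one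
near-linear integral over the ball of radius `2 * r`. -/
lemma scale_step {A : ∀ j, Euc n →L[ℝ] Euc (nn j)} (F : Frame A) (p : ι → ℝ)
    (hp : ∀ j, 0 < p j) (Γ δ R r r' κ θ : ℝ) (hΓ : 0 < Γ) (hδ : 0 < δ) (hR : 0 < R)
    (hr' : Γ * (R * δ) ≤ r') (hrr : r' ≤ r) (hκ : 0 ≤ κ) (hθ : Γ * (κ * (Γ * R)) ≤ θ)
    (hg : ∀ x, ‖F.g x‖ ≤ Γ * ‖x‖) (hH : ∀ j z, ‖F.H j z‖ ≤ Γ * ‖z‖)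
    (B : ∀ j, Euc n → Euc (nn j)) (hBm : ∀ j, Measurable (B j)) (u : Euc n)
    (hB : ∀ j, ∀ x ∈ closedBall u (2 * r), ∀ y ∈ closedBall u (2 * r),
      ‖B j x - B j y - A j (x - y)‖ ≤ κ * ‖x - y‖)
    (Λ : ℝ) (K D : ℝ)
    (inner : ∀ y ∈ closedBall u (2 * r), ∀ h : ∀ j, Euc (nn j) → ℝ≥0∞, (∀ j, Measurable (h j)) →
      (∀ j, ∫⁻ z, h j z ≠ ⊤) → (∀ j, LC (Λ + (δ⁻¹ * Γ) ^ 2) (h j)) →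
      ∫⁻ x in closedBall y r', ∏ j, h j (B j x) ^ p j ≤ ENNReal.ofReal K * ∏ j, (∫⁻ z, h j z) ^ p j)
    (outer : ∀ h : ∀ j, Euc (nn j) → ℝ≥0∞, (∀ j, Measurable (h j)) →
      (∀ j, ∫⁻ z, h j z ≠ ⊤) → (∀ j, LC ((δ⁻¹ * Γ) ^ 2) (h j)) →
      ∫⁻ x in closedBall u (2 * r), ∏ j, h j (B j x) ^ p j ≤
        ENNReal.ofReal D * ∏ j, (∫⁻ z, h j z) ^ p j)
    (f : ∀ j, Euc (nn j) → ℝ≥0∞) (hf : ∀ j, Measurable (f j)) (hfi : ∀ j, ∫⁻ z, f j z ≠ ⊤)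
    (hLC : ∀ j, LC Λ (f j)) :
    (∫⁻ x in closedBall u r, ∏ j, (f j (B j x)) ^ p j) *
      (∫⁻ v in {v | ‖F.g.symm v‖ ≤ R * δ}, ∏ j, gE (δ⁻¹ • F.H j (A j v)) ^ p j) ≤
      ENNReal.ofReal (rexp (π * (2 * R * θ + θ ^ 2) * ∑ j, p j)) * (ENNReal.ofReal K * (ENNReal.ofReal D *
        ((∏ j, (∫⁻ z, f j z) ^ p j) * ∏ j, (∫⁻ z, gE (δ⁻¹ • F.H j z)) ^ p j))) := by
  have hp0 : ∀ j, 0 ≤ p j := fun j => (hp j).le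
  set S : Set (Euc n) := {v | ‖F.g.symm v‖ ≤ R * δ} with hS
  have hms : MeasurableSet S := measurableSet_le (by fun_prop) measurable_const
  set gs : ∀ j, Euc (nn j) → ℝ≥0∞ := fun j z => gE (δ⁻¹ • F.H j z) with hgs
  have hgsm : ∀ j, Measurable (gs j) := fun j => measurable_gE.comp (by fun_prop)
  have hgs1 : ∀ j z, gs j z ≤ 1 := by
    intro j z
    simp only [hgs, gE]
    rw [← ENNReal.ofReal_one]
    refine ENNReal.ofReal_le_ofReal (Real.exp_le_one_iff.2 ?_)
    have := Real.pi_pos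
    have h2 := sq_nonneg ‖δ⁻¹ • F.H j z‖
    nlinarith
  set T : ∀ j, Euc (nn j) →L[ℝ] Euc (nn j) := fun j => δ⁻¹ • (F.H j : Euc (nn j) →L[ℝ] Euc (nn j)) with hT
  have hTb : ∀ j z, ‖T j z‖ ≤ δ⁻¹ * Γ * ‖z‖ := by
    intro j z
    show ‖δ⁻¹ • F.H j z‖ ≤ _
    rw [norm_smul, Real.norm_of_nonneg (inv_pos.2 hδ).le, mul_assoc]
    exact mul_le_mul_of_nonneg_left (hH j z) (inv_pos.2 hδ).le
  set c := ENNReal.ofReal (rexp (π * (2 * R * θ + θ ^ 2) * ∑ j, p j)) with hc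
  set m := ∫⁻ v in S, ∏ j, gs j (A j v) ^ p j with hm
  have hmeq : ∀ x, ∫⁻ y, S.indicator (fun v => ∏ j, gs j (A j v) ^ p j) (x - y) = m := by
    intro x
    rw [lintegral_sub_left_eq_self (S.indicator fun v => ∏ j, gs j (A j v) ^ p j) x, hm,
      lintegral_indicator hms]
  -- `Ψ` couples `x` to the centre `y` of a Gaussian; integrating in `x` first uses `inner`, and the
  -- resulting convolutions `f j * gs j` are integrated in `y` by `outer`
  set Ψ : Euc n → Euc n → ℝ≥0∞ := fun x y => (closedBall u (2 * r)).indicator 1 y *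
    ((closedBall (0 : Euc n) r').indicator 1 (x - y) *
      ∏ j, (f j (B j x) * gs j (B j x - B j y)) ^ p j) with hΨ
  have hΨm : Measurable (Function.uncurry Ψ) := by
    refine Measurable.mul ((measurable_one.indicator measurableSet_closedBall).comp measurable_snd) ?_
    refine Measurable.mul ((measurable_one.indicator measurableSet_closedBall).comp
      (f := fun q : Euc n × Euc n => q.1 - q.2) (by fun_prop)) ?_
    refine Finset.measurable_fun_prod _ fun j _ => Measurable.pow_const (Measurable.mul ?_ ?_) _
    · exact (hf j).comp ((hBm j).comp measurable_fst)
    · exact (hgsm j).comp (((hBm j).comp measurable_fst).sub ((hBm j).comp measurable_snd))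
  have hpt : ∀ x ∈ closedBall u r, ∀ y, (∏ j, f j (B j x) ^ p j) *
      S.indicator (fun v => ∏ j, gs j (A j v) ^ p j) (x - y) ≤ c * Ψ x y := by
    intro x hx y
    by_cases hxy : x - y ∈ S
    swap
    · rw [Set.indicator_of_notMem hxy, mul_zero]; exact zero_le
    rw [Set.indicator_of_mem hxy]
    have hxyS : ‖F.g.symm (x - y)‖ ≤ R * δ := hxy
    have hd : ‖x - y‖ ≤ Γ * (R * δ) := by
      have := hg (F.g.symm (x - y))
      rw [ContinuousLinearEquiv.apply_symm_apply] at this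
      exact this.trans (by gcongr)
    have hx' : ‖x - u‖ ≤ r := by rwa [mem_closedBall, dist_eq_norm] at hx
    have hr0 : 0 ≤ r := (norm_nonneg _).trans hx'
    have hy : y ∈ closedBall u (2 * r) := by
      rw [mem_closedBall, dist_eq_norm]
      have : y - u = (x - u) - (x - y) := by abel
      rw [this]
      have := norm_sub_le (x - u) (x - y)
      linarith
    have hx2 : x ∈ closedBall u (2 * r) := closedBall_subset_closedBall (by linarith) hx
    have hy2 : x - y ∈ closedBall (0 : Euc n) r' := by
      rw [mem_closedBall, dist_zero_right]; linarith
    simp only [hΨ]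
    rw [Set.indicator_of_mem hy, Set.indicator_of_mem hy2, Pi.one_apply, Pi.one_apply, one_mul, one_mul,
      prod_mul_rpow _ _ p hp0, mul_left_comm]
    refine mul_le_mul_right ?_ _
    have hc2 : c = ∏ j, ENNReal.ofReal (rexp (π * (2 * R * θ + θ ^ 2))) ^ p j := by
      rw [prod_ofReal_rpow _ (fun j => (Real.exp_pos _).le) p hp0, hc, Finset.mul_sum, Real.exp_sum]
      congr 1
      exact Finset.prod_congr rfl fun j _ => by rw [← Real.exp_mul]
    rw [hc2, ← prod_mul_rpow _ _ p hp0]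
    refine Finset.prod_le_prod' fun j _ => ENNReal.rpow_le_rpow ?_ (hp0 j)
    refine gE_close _ _ R θ ?_ ?_
    · rw [norm_smul, Real.norm_of_nonneg (inv_pos.2 hδ).le, inv_mul_le_iff₀ hδ, mul_comm δ R]
      have h1 : F.H j (A j (x - y)) = F.T j (F.g.symm (x - y)) := by
        rw [Frame.T_apply, ContinuousLinearEquiv.apply_symm_apply]
      rw [h1]
      exact (Coiso.norm_le (F.coiso j) _).trans hxyS
    · have h1 : δ⁻¹ • F.H j (B j x - B j y) - δ⁻¹ • F.H j (A j (x - y)) =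
          T j (B j x - B j y - A j (x - y)) := by
        rw [map_sub (T j)]; rfl
      rw [h1]
      calc _ ≤ δ⁻¹ * Γ * (κ * (Γ * (R * δ))) := by
            refine (hTb j _).trans ?_
            have := hB j x hx2 y hy
            gcongr
            exact this.trans (by gcongr)
        _ = Γ * (κ * (Γ * R)) := by field_simp
        _ ≤ θ := hθ
  set G : ∀ j, Euc (nn j) → ℝ≥0∞ := fun j w => ∫⁻ z, f j z * gE (T j (z - w)) with hG
  have hGm : ∀ j, Measurable (G j) := by
    intro j
    have : Measurable (Function.uncurry fun w z => f j z * gE (T j (z - w))) :=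
      ((hf j).comp measurable_snd).mul (measurable_gE.comp
        (f := fun q : Euc (nn j) × Euc (nn j) => T j (q.2 - q.1)) (by fun_prop))
    exact this.lintegral_prod_right'
  have hGi : ∀ j, ∫⁻ w, G j w = (∫⁻ z, f j z) * ∫⁻ z, gs j z := fun j =>
    lintegral_conv (f j) (gs j) (hf j) (hgsm j)
  have hΨy : ∀ y, ∫⁻ x, Ψ x y ≤ (closedBall u (2 * r)).indicator
      (fun y => ENNReal.ofReal K * ∏ j, G j (B j y) ^ p j) y := by
    intro y
    by_cases hy : y ∈ closedBall u (2 * r)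
    swap
    · simp [hΨ, hy]
    rw [Set.indicator_of_mem hy]
    have h1 := inner y hy (fun j z => f j z * gE (T j (z - B j y)))
      (fun j => (hf j).mul (measurable_gE.comp (by fun_prop)))
      (fun j => by
        refine ne_top_of_le_ne_top (hfi j) (lintegral_mono fun z => ?_)
        calc f j z * gE (T j (z - B j y)) ≤ f j z * 1 := mul_le_mul_right (hgs1 j _) _
          _ = _ := mul_one _)
      (fun j => (hLC j).mul (LC_gE (T j) _ (hTb j) _))
    refine le_trans (le_of_eq ?_) h1
    rw [← lintegral_indicator measurableSet_closedBall]
    refine lintegral_congr fun x => ?_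
    simp only [hΨ]
    rw [Set.indicator_of_mem hy, Pi.one_apply, one_mul]
    simp only [Set.indicator, mem_closedBall, dist_eq_norm, sub_zero]
    split_ifs
    · rw [Pi.one_apply, one_mul]; rfl
    · rw [zero_mul]
  have hKne : ENNReal.ofReal K ≠ ⊤ := ENNReal.ofReal_ne_top
  have hgsA : Measurable fun v => ∏ j, gs j (A j v) ^ p j :=
    Finset.measurable_fun_prod _ fun j _ => ((hgsm j).comp (A j).measurable).pow_const _
  calc (∫⁻ x in closedBall u r, ∏ j, (f j (B j x)) ^ p j) * m
      = ∫⁻ x in closedBall u r, (∏ j, (f j (B j x)) ^ p j) * m := by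
        rw [lintegral_mul_const]
        exact Finset.measurable_fun_prod _ fun j _ => ((hf j).comp (hBm j)).pow_const _
    _ ≤ ∫⁻ x in closedBall u r, ∫⁻ y, c * Ψ x y := by
        refine setLIntegral_mono' measurableSet_closedBall fun x hx => ?_
        have hm3 : Measurable fun y => S.indicator (fun v => ∏ j, gs j (A j v) ^ p j) (x - y) :=
          (hgsA.indicator hms).comp (f := fun y => x - y) (by fun_prop)
        rw [← hmeq x, ← lintegral_const_mul _ hm3]
        exact lintegral_mono fun y => hpt x hx y
    _ ≤ ∫⁻ x, ∫⁻ y, c * Ψ x y := setLIntegral_le_lintegral _ _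
    _ = ∫⁻ y, ∫⁻ x, c * Ψ x y :=
        lintegral_lintegral_swap (hΨm.const_mul c).aemeasurable
    _ = ∫⁻ y, c * ∫⁻ x, Ψ x y := lintegral_congr fun y =>
        lintegral_const_mul' _ _ ENNReal.ofReal_ne_top
    _ = c * ∫⁻ y, ∫⁻ x, Ψ x y := lintegral_const_mul' _ _ ENNReal.ofReal_ne_top
    _ ≤ c * ∫⁻ y, (closedBall u (2 * r)).indicator
          (fun y => ENNReal.ofReal K * ∏ j, G j (B j y) ^ p j) y :=
        mul_le_mul_right (lintegral_mono hΨy) _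
    _ = c * (ENNReal.ofReal K * ∫⁻ y in closedBall u (2 * r), ∏ j, G j (B j y) ^ p j) := by
        rw [lintegral_indicator measurableSet_closedBall, lintegral_const_mul' _ _ hKne]
    _ ≤ c * (ENNReal.ofReal K * (ENNReal.ofReal D * ∏ j, (∫⁻ w, G j w) ^ p j)) := by
        refine mul_le_mul_right (mul_le_mul_right (outer G hGm (fun j => ?_) fun j => ?_) _) _
        · rw [hGi]
          refine ENNReal.mul_ne_top (hfi j) ?_
          simp only [hgs]
          rw [lintegral_gs _ δ hδ]
          exact ENNReal.ofReal_ne_top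
        · exact LC_conv (T j) _ (hTb j) (f j) (hf j)
    _ = _ := by
        simp_rw [hGi]
        rw [prod_mul_rpow _ _ p hp0]

end NBL

namespace NBL
open Filter Topology
open scoped RealInnerProductSpace
variable {ι : Type} [Fintype ι] {nn : ι → ℕ} {n : ℕ}

/-- The inequality with constant `K` on all balls of radius `exp (-16 s)` well inside the ball of
radius `ρ₀` about `x₀`, for inputs that are log-quasiconvex with constant `Λ₀ + exp (48 s)`. -/
def Good (B : ∀ j, Euc n → Euc (nn j)) (p : ι → ℝ) (x₀ : Euc n) (ρ₀ Λ₀ s K : ℝ) : Prop :=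
  ∀ u, ‖u - x₀‖ ≤ ρ₀ - 4 * rexp (-16 * s) → ∀ f : ∀ j, Euc (nn j) → ℝ≥0∞, (∀ j, Measurable (f j)) →
    (∀ j, ∫⁻ z, f j z ≠ ⊤) → (∀ j, LC (Λ₀ + rexp (48 * s)) (f j)) →
    ∫⁻ x in closedBall u (rexp (-16 * s)), ∏ j, f j (B j x) ^ p j ≤
      ENNReal.ofReal K * ∏ j, (∫⁻ z, f j z) ^ p j

lemma Good.mono {B : ∀ j, Euc n → Euc (nn j)} {p : ι → ℝ} {x₀ : Euc n} {ρ₀ Λ₀ s K K' : ℝ}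
    (h : Good B p x₀ ρ₀ Λ₀ s K) (hK : K ≤ K') : Good B p x₀ ρ₀ Λ₀ s K' :=
  fun u hu f hf hfi hLC => (h u hu f hf hfi hLC).trans
    (mul_le_mul_left (ENNReal.ofReal_le_ofReal hK) _)

/-- For `R = exp s` and `η = O(1/s)`, the mass in `gauss_mass` is `δ ^ n exp (-O(1/s))` up to the
determinant of the frame. -/
lemma mass_aux (n : ℕ) (s η Cη : ℝ) (hs : 1 ≤ s) (hs2 : √2 ^ n ≤ s) (hη : 0 < η) (hηs : η ≤ Cη / s)
    (δ : ℝ) (hδ : 0 < δ) :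
    δ ^ n * rexp (-((n * Cη + √2 ^ n) / s)) ≤
      (δ / √(1 + η)) ^ n * (1 - √2 ^ n * rexp (-(π * rexp s ^ 2 / 2))) := by
  have hs0 : 0 < s := by linarith
  have hsq : 0 < √(1 + η) := Real.sqrt_pos.2 (by linarith)
  have h1 : √(1 + η) ≤ rexp η := by
    calc √(1 + η) ≤ 1 + η := by
          rw [Real.sqrt_le_left (by linarith)]
          nlinarith
      _ ≤ rexp η := by have := Real.add_one_le_exp η; linarith
  have h2 : rexp (-(n * Cη / s)) ≤ (1 / √(1 + η)) ^ n := by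
    have h3 : √(1 + η) ^ n ≤ rexp (n * Cη / s) := by
      calc √(1 + η) ^ n ≤ rexp η ^ n := pow_le_pow_left₀ hsq.le h1 n
        _ = rexp (n * η) := by rw [← Real.exp_nat_mul]
        _ ≤ rexp (n * (Cη / s)) := by gcongr
        _ = _ := by rw [mul_div_assoc]
    rw [Real.exp_neg, one_div, inv_pow]
    exact inv_anti₀ (by positivity) h3
  set x := √2 ^ n * rexp (-(π * rexp s ^ 2 / 2)) with hx
  have hx0 : 0 ≤ x := by positivity
  have hxs : 2 * x ≤ √2 ^ n / s := by
    have h4 : 2 * s ≤ π * rexp s ^ 2 / 2 := by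
      have h5 := Real.add_one_le_exp (2 * s)
      have h6 : rexp s ^ 2 = rexp (2 * s) := by rw [← Real.exp_nat_mul]; norm_num
      have h7 := Real.pi_gt_three
      rw [h6]
      nlinarith
    have h5 : rexp (-(π * rexp s ^ 2 / 2)) ≤ 1 / (2 * s) := by
      rw [Real.exp_neg, inv_eq_one_div]
      refine one_div_le_one_div_of_le (by positivity) (h4.trans ?_)
      have := Real.add_one_le_exp (π * rexp s ^ 2 / 2)
      linarith
    calc 2 * x ≤ 2 * (√2 ^ n * (1 / (2 * s))) := by rw [hx]; gcongr
      _ = _ := by field_simp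
  have hx1 : 2 * x ≤ 1 := hxs.trans ((div_le_one hs0).2 hs2)
  have h8 : rexp (-(√2 ^ n / s)) ≤ 1 - x := by
    calc rexp (-(√2 ^ n / s)) ≤ rexp (-(2 * x)) := Real.exp_le_exp.2 (by linarith)
      _ ≤ 1 / (1 + 2 * x) := by
          rw [Real.exp_neg, inv_eq_one_div]
          refine one_div_le_one_div_of_le (by positivity) ?_
          have := Real.add_one_le_exp (2 * x)
          linarith
      _ ≤ 1 - x := by
          rw [div_le_iff₀ (by positivity)]
          nlinarith
  calc δ ^ n * rexp (-((n * Cη + √2 ^ n) / s))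
      = δ ^ n * (rexp (-(n * Cη / s)) * rexp (-(√2 ^ n / s))) := by
        rw [← Real.exp_add]; congr 2; ring
    _ ≤ δ ^ n * ((1 / √(1 + η)) ^ n * (1 - x)) := by
        gcongr
    _ = _ := by rw [← mul_assoc, ← mul_pow]; congr 2; rw [mul_one_div]

/-- Induction on scales: the near-linear inequality holds on all small balls with a constant
`D exp (O(1/s))` close to the largest frame value `D`. -/
theorem good_all {L : ∀ j, Euc n →L[ℝ] Euc (nn j)} (p : ι → ℝ) (hp : ∀ j, 0 < p j)
    (hdim : ∑ j, p j * (nn j : ℝ) = n) (e v₀ Cη s₁ D : ℝ) (hv₀ : 0 < v₀) (hCη : 0 < Cη) (hD : 0 < D)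
    (hframe : ∀ A : ∀ j, Euc n →L[ℝ] Euc (nn j),
      (∀ j, ‖A j - L j‖ ≤ e) → ∀ s, s₁ ≤ s → ∃ F : Frame A, (∀ x, ‖F.g x‖ ≤ rexp s * ‖x‖) ∧
        (∀ x, ‖F.g.symm x‖ ≤ rexp s * ‖x‖) ∧ (∀ j z, ‖F.H j z‖ ≤ rexp s * ‖z‖) ∧
        F.Defect p (Cη / s ^ 2) ∧ v₀ ≤ F.val p ∧ F.val p ≤ D)
    (B : ∀ j, Euc n → Euc (nn j)) (hBm : ∀ j, Measurable (B j)) (x₀ : Euc n) (ρ₀ : ℝ)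
    (A : Euc n → ∀ j, Euc n →L[ℝ] Euc (nn j)) (hAL : ∀ u ∈ closedBall x₀ ρ₀, ∀ j, ‖A u j - L j‖ ≤ e)
    (κ : ℝ) (hκ : 0 ≤ κ) (hNL : ∀ u ∈ closedBall x₀ ρ₀, ∀ x ∈ closedBall x₀ ρ₀, ∀ y ∈ closedBall x₀ ρ₀,
      ∀ t, ‖x - u‖ ≤ t → ‖y - u‖ ≤ t → ∀ j, ‖B j x - B j y - A u j (x - y)‖ ≤ κ * t * ‖x - y‖) :
    ∃ C s₂ : ℝ, 0 < C ∧ 0 < s₂ ∧ ∀ s, s₂ ≤ s → ∀ Λ₀, 0 ≤ Λ₀ → Good B p x₀ ρ₀ Λ₀ s (D * rexp (C / s)) := by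
  obtain ⟨C₁, hC₁, hlin⟩ := near_affine_scale nn n p hp hdim (4 * κ) v₀ Cη (by positivity) hv₀ hCη
  set P := ∑ j, p j with hPdef
  have hP : 0 ≤ P := Finset.sum_nonneg fun j _ => (hp j).le
  set C := C₁ + π * (4 * κ + 4 * κ ^ 2) * P + (n * Cη + √2 ^ n) with hC
  have hC0 : 0 < C := by positivity
  have hC1C : C₁ ≤ C := by
    have : 0 ≤ π * (4 * κ + 4 * κ ^ 2) * P := by positivity
    have : (0 : ℝ) ≤ n * Cη + √2 ^ n := by positivity
    linarith
  set s₂ := max s₁ (max 1 (√2 ^ n)) with hs₂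
  have hs₂a : s₁ ≤ s₂ := le_max_left _ _
  have hs₂b : 1 ≤ s₂ := (le_max_left _ _).trans (le_max_right _ _)
  have hs₂c : √2 ^ n ≤ s₂ := (le_max_right _ _).trans (le_max_right _ _)
  have hsub : ∀ s u, ‖u - x₀‖ ≤ ρ₀ - 4 * rexp (-16 * s) → ∀ x ∈ closedBall u (2 * rexp (-16 * s)),
      x ∈ closedBall x₀ ρ₀ := by
    intro s u hu x hx
    rw [mem_closedBall, dist_eq_norm] at hx ⊢
    have : x - x₀ = (x - u) + (u - x₀) := by abel
    rw [this]
    have := norm_add_le (x - u) (u - x₀)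
    have := Real.exp_pos (-16 * s)
    linarith
  have hlin_at : ∀ s, s₂ ≤ s → ∀ u, ‖u - x₀‖ ≤ ρ₀ - 4 * rexp (-16 * s) → ∀ j,
      ∀ x ∈ closedBall u (2 * rexp (-16 * s)),
        ‖B j x - B j u - A u j (x - u)‖ ≤ 4 * κ * rexp (-32 * s) := by
    intro s hs u hu j x hx
    have hx2 : ‖x - u‖ ≤ 2 * rexp (-16 * s) := by rwa [mem_closedBall, dist_eq_norm] at hx
    have hu2 := hsub s u hu u (by simp [Real.exp_nonneg])
    have h1 := hNL u hu2 x (hsub s u hu x hx) u hu2 (2 * rexp (-16 * s)) hx2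
      (by rw [sub_self, norm_zero]; positivity) j
    calc _ ≤ κ * (2 * rexp (-16 * s)) * ‖x - u‖ := h1
      _ ≤ κ * (2 * rexp (-16 * s)) * (2 * rexp (-16 * s)) := by gcongr
      _ = 4 * κ * (rexp (-16 * s) * rexp (-16 * s)) := by ring
      _ = _ := by rw [← Real.exp_add]; congr 2; ring
  have base : ∀ s, s₂ ≤ s → ∀ Λ₀, 0 ≤ Λ₀ → Λ₀ ≤ rexp (50 * s) →
      Good B p x₀ ρ₀ Λ₀ s (D * rexp (C₁ / s)) := by
    intro s hs Λ₀ hΛ₀ hΛs u hu f hf hfi hLC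
    have hu2 := hsub s u hu u (by simp [Real.exp_nonneg])
    obtain ⟨F, hg, hg', hH, hdef, hv, hvD⟩ := hframe (A u) (hAL u hu2) s (hs₂a.trans hs)
    have hle : Λ₀ + rexp (48 * s) ≤ 2 * rexp (50 * s) := by
      have : rexp (48 * s) ≤ rexp (50 * s) := Real.exp_le_exp.2 (by linarith)
      linarith
    have h1 := hlin s (hs₂b.trans hs) (A u) F hg hg' hdef hv (Λ₀ + rexp (48 * s)) (by positivity) hle
      f hf hfi hLC u B (hlin_at s hs u hu)
    calc _ ≤ ∫⁻ x in closedBall u (2 * rexp (-16 * s)), ∏ j, f j (B j x) ^ p j :=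
          lintegral_mono_set (closedBall_subset_closedBall (by linarith [Real.exp_pos (-16 * s)]))
      _ ≤ _ := h1
      _ ≤ _ := by gcongr
  have step : ∀ s, s₂ ≤ s → ∀ Λ₀, 0 ≤ Λ₀ → ∀ K, 0 ≤ K → Good B p x₀ ρ₀ Λ₀ (11 / 8 * s) K →
      Good B p x₀ ρ₀ Λ₀ s (K * rexp (C / s)) := by
    intro s hs Λ₀ hΛ₀ K hK hgood u hu f hf hfi hLC
    have hs1 : 1 ≤ s := hs₂b.trans hs
    have hs0 : 0 < s := by linarith
    have hu2 := hsub s u hu u (by simp [Real.exp_nonneg])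
    obtain ⟨F, hg, hg', hH, hdef, hv, hvD⟩ := hframe (A u) (hAL u hu2) s (hs₂a.trans hs)
    have hval := F.val_pos p
    have hdg := dt_pos F.g
    have h7 : 7 * rexp (-22 * s) ≤ rexp (-16 * s) := by
      have h1 : rexp (-16 * s) = rexp (6 * s) * rexp (-22 * s) := by
        rw [← Real.exp_add]; congr 1; ring
      rw [h1]
      gcongr
      have := Real.add_one_le_exp (6 * s)
      linarith
    have h22 : 0 < rexp (-22 * s) := Real.exp_pos _
    have e22 : -16 * (11 / 8 * s) = -22 * s := by ring
    have e66 : 48 * (11 / 8 * s) = 66 * s := by ring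
    have hδΓ : ((rexp (-24 * s))⁻¹ * rexp s) ^ 2 = rexp (50 * s) := by
      rw [← Real.exp_neg, ← Real.exp_add, ← Real.exp_nat_mul]; congr 1; push_cast; ring
    -- Gaussians of scale `exp (-24 s)` cut off at `R = exp s` live, in a frame of condition number
    -- `exp s`, on balls of radius `exp (-22 s)`, which is `exp (-16 s)` with `s` replaced by `11/8 s`;
    -- they are log-quasiconvex with constant `exp (50 s)`
    have hmain := scale_step F p hp (rexp s) (rexp (-24 * s)) (rexp s) (rexp (-16 * s)) (rexp (-22 * s))
      (κ * (2 * rexp (-16 * s))) (2 * κ * rexp (-13 * s)) (Real.exp_pos _) (Real.exp_pos _) (Real.exp_pos _)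
      (le_of_eq (by rw [← Real.exp_add, ← Real.exp_add]; congr 1; ring)) (by linarith) (by positivity)
      (le_of_eq (by
        have : rexp (-13 * s) = rexp s * (rexp (-16 * s) * (rexp s * rexp s)) := by
          rw [← Real.exp_add, ← Real.exp_add, ← Real.exp_add]; congr 1; ring
        rw [this]; ring)) hg hH B hBm u
      (fun j x hx y hy => hNL u hu2 x (hsub s u hu x hx) y (hsub s u hu y hy) (2 * rexp (-16 * s))
        (by rwa [mem_closedBall, dist_eq_norm] at hx) (by rwa [mem_closedBall, dist_eq_norm] at hy) j)
      (Λ₀ + rexp (48 * s)) K (F.val p * rexp (C₁ / s))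
      (by
        intro y hy h hh hhi hhLC
        have hy' : ‖y - u‖ ≤ 2 * rexp (-16 * s) := by rwa [mem_closedBall, dist_eq_norm] at hy
        have h1 := hgood y (by
          rw [e22]
          have : y - x₀ = (y - u) + (u - x₀) := by abel
          rw [this]
          have := norm_add_le (y - u) (u - x₀)
          linarith) h hh hhi (fun j => (hhLC j).mono (by
            rw [hδΓ, e66, add_assoc]
            gcongr
            have h2 : rexp (48 * s) ≤ rexp (50 * s) := Real.exp_le_exp.2 (by linarith)
            have h3 : rexp (66 * s) = rexp (16 * s) * rexp (50 * s) := by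
              rw [← Real.exp_add]; congr 1; ring
            have h4 := Real.add_one_le_exp (16 * s)
            have h5 := Real.exp_pos (50 * s)
            rw [h3]
            nlinarith))
        rw [e22] at h1
        exact h1)
      (by
        intro h hh hhi hhLC
        rw [hδΓ] at hhLC
        exact hlin s hs1 (A u) F hg hg' hdef hv (rexp (50 * s)) (Real.exp_pos _).le
          (by linarith [Real.exp_pos (50 * s)]) h hh hhi hhLC u B (hlin_at s hs u hu))
      f hf hfi hLC
    have hη : 0 < Cη / s ^ 2 := by positivity
    have hηs : Cη / s ^ 2 ≤ Cη / s := by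
      gcongr
      nlinarith
    have hmass := gauss_mass F p (Cη / s ^ 2) hη.le hdef (rexp (-24 * s)) (rexp s) (Real.exp_pos _)
      (Real.exp_pos _).le
    have haux := mass_aux n s (Cη / s ^ 2) Cη hs1 (hs₂c.trans hs) hη hηs (rexp (-24 * s)) (Real.exp_pos _)
    set δ := rexp (-24 * s) with hδ
    have hδ0 : 0 < δ := Real.exp_pos _
    set I := ∫⁻ x in closedBall u (rexp (-16 * s)), ∏ j, f j (B j x) ^ p j with hI
    set m := dt F.g * (δ ^ n * rexp (-((n * Cη + √2 ^ n) / s))) with hm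
    have hm0 : 0 < m := by positivity
    have hmass2 : ENNReal.ofReal m ≤
        ∫⁻ v in {v | ‖F.g.symm v‖ ≤ rexp s * δ}, ∏ j, gE (δ⁻¹ • F.H j (A u j v)) ^ p j :=
      (ENNReal.ofReal_le_ofReal (mul_le_mul_of_nonneg_left haux hdg.le)).trans hmass
    rw [prod_lintegral_gs F p (fun j => (hp j).le) hdim δ hδ0] at hmain
    have hE : rexp (π * (2 * rexp s * (2 * κ * rexp (-13 * s)) + (2 * κ * rexp (-13 * s)) ^ 2) * P) ≤
        rexp (π * (4 * κ + 4 * κ ^ 2) * P / s) := by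
      refine Real.exp_le_exp.2 ?_
      have a1 : rexp s * rexp (-13 * s) ≤ 1 / s := by
        rw [← Real.exp_add]
        refine le_trans (le_of_eq ?_) (exp_neg_le_inv s 12 hs1 (by norm_num))
        congr 1; ring
      have a2 : rexp (-13 * s) ^ 2 ≤ 1 / s := by
        rw [← Real.exp_nat_mul]
        refine le_trans (le_of_eq ?_) (exp_neg_le_inv s 26 hs1 (by norm_num))
        congr 1; push_cast; ring
      calc _ = π * (4 * κ * (rexp s * rexp (-13 * s)) + 4 * κ ^ 2 * rexp (-13 * s) ^ 2) * P := by ring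
        _ ≤ π * (4 * κ * (1 / s) + 4 * κ ^ 2 * (1 / s)) * P := by gcongr
        _ = _ := by ring
    set Pf := ∏ j, (∫⁻ z, f j z) ^ p j with hPf
    have hfin : ENNReal.ofReal m * I ≤ ENNReal.ofReal m * (ENNReal.ofReal (K * rexp (C / s)) * Pf) := by
      calc ENNReal.ofReal m * I ≤ _ * I := mul_le_mul_left hmass2 _
        _ = _ := mul_comm _ _
        _ ≤ _ := hmain
        _ ≤ ENNReal.ofReal (rexp (π * (4 * κ + 4 * κ ^ 2) * P / s)) * (ENNReal.ofReal K *
            (ENNReal.ofReal (F.val p * rexp (C₁ / s)) * (Pf * ENNReal.ofReal (δ ^ n * (dt F.g / F.val p))))) :=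
            mul_le_mul_left (ENNReal.ofReal_le_ofReal hE) _
        _ = ENNReal.ofReal (rexp (π * (4 * κ + 4 * κ ^ 2) * P / s) * (K * (F.val p * rexp (C₁ / s) *
            (δ ^ n * (dt F.g / F.val p))))) * Pf := by
            rw [ENNReal.ofReal_mul (Real.exp_pos _).le, ENNReal.ofReal_mul hK,
              ENNReal.ofReal_mul (p := F.val p * rexp (C₁ / s)) (by positivity)]
            ring
        _ = ENNReal.ofReal (m * (K * rexp (C / s))) * Pf := by
            congr 2
            have e5 : rexp (C / s) = rexp (C₁ / s) * rexp (π * (4 * κ + 4 * κ ^ 2) * P / s) *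
                rexp ((n * Cη + √2 ^ n) / s) := by
              rw [← Real.exp_add, ← Real.exp_add]; congr 1; rw [hC]; ring
            rw [e5, hm, Real.exp_neg]
            have := (Real.exp_pos ((n * Cη + √2 ^ n) / s)).ne'
            field_simp
        _ = _ := by rw [ENNReal.ofReal_mul hm0.le, mul_assoc]
    exact (ENNReal.mul_le_mul_iff_right (ENNReal.ofReal_pos.2 hm0).ne' ENNReal.ofReal_ne_top).1 hfin
  refine ⟨4 * C, s₂, by positivity, by linarith, ?_⟩
  -- after `N` steps the scale is below that of the inputs, and `base` applies; the constant `4 C`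
  -- absorbs the geometric series `∑ (8/11)^k`
  have hind : ∀ N : ℕ, ∀ s, s₂ ≤ s → ∀ Λ₀, 0 ≤ Λ₀ → Λ₀ ≤ rexp (50 * ((11 / 8) ^ N * s)) →
      Good B p x₀ ρ₀ Λ₀ s (D * rexp (4 * C / s)) := by
    intro N
    induction N with
    | zero =>
      intro s hs Λ₀ hΛ₀ hΛ
      have hs0 : 0 < s := by linarith
      refine (base s hs Λ₀ hΛ₀ (by simpa using hΛ)).mono ?_
      gcongr
      linarith
    | succ N ih =>
      intro s hs Λ₀ hΛ₀ hΛ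
      have hs0 : 0 < s := by linarith
      have h1 := ih (11 / 8 * s) (by linarith) Λ₀ hΛ₀ (by
        refine hΛ.trans (le_of_eq ?_)
        congr 1; ring)
      refine (step s hs Λ₀ hΛ₀ _ (by positivity) h1).mono ?_
      rw [mul_assoc, ← Real.exp_add]
      gcongr
      have : 4 * C / (11 / 8 * s) = 32 / 11 * (C / s) := by field_simp; norm_num
      rw [this, mul_div_assoc]
      have : 0 < C / s := by positivity
      linarith
  intro s hs Λ₀ hΛ₀
  obtain ⟨N, hN⟩ := pow_unbounded_of_one_lt Λ₀ (show (1 : ℝ) < 11 / 8 by norm_num)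
  refine hind N s hs Λ₀ hΛ₀ ?_
  have hs1 : 1 ≤ s := hs₂b.trans hs
  have := Real.add_one_le_exp (50 * ((11 / 8) ^ N * s))
  have h3 : (0 : ℝ) < (11 / 8) ^ N := by positivity
  nlinarith

end NBL

/-! ### The nonlinear inequality for positive exponents -/

namespace NBL
open Filter Topology
open scoped RealInnerProductSpace
variable {ι : Type} [Fintype ι] {nn : ι → ℕ} {n : ℕ}

/-- A map that is `C²` at a point is differentiable near it, with Lipschitz derivative. -/
lemma local_c2 {k : ℕ} (b : Euc n → Euc k) (x₀ : Euc n) (hb : ContDiffAt ℝ 2 b x₀) (e : ℝ) (he : 0 < e) :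
    ∃ ρ κ : ℝ, 0 < ρ ∧ 0 ≤ κ ∧ (∀ u ∈ closedBall x₀ ρ, DifferentiableAt ℝ b u) ∧
      (∀ u ∈ closedBall x₀ ρ, ‖fderiv ℝ b u - fderiv ℝ b x₀‖ ≤ e) ∧
      ∀ u ∈ closedBall x₀ ρ, ∀ v ∈ closedBall x₀ ρ, ‖fderiv ℝ b v - fderiv ℝ b u‖ ≤ κ * ‖v - u‖ := by
  have h1 : ContDiffAt ℝ 1 (fderiv ℝ b) x₀ := hb.fderiv_right (by norm_num)
  obtain ⟨K, t, ht, hK⟩ := h1.exists_lipschitzOnWith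
  have h2 : ∀ᶠ u in 𝓝 x₀, DifferentiableAt ℝ b u := by
    filter_upwards [hb.eventually (by simp)] with u hu
    exact hu.differentiableAt (by simp)
  have h3 : ∀ᶠ u in 𝓝 x₀, ‖fderiv ℝ b u - fderiv ℝ b x₀‖ ≤ e := by
    have := h1.continuousAt.eventually (closedBall_mem_nhds (fderiv ℝ b x₀) he)
    filter_upwards [this] with u hu
    simpa [dist_eq_norm] using hu
  obtain ⟨ρ, hρ, hsub⟩ := nhds_basis_closedBall.mem_iff.1 ((h2.and h3).and ht)
  refine ⟨ρ, K, hρ, K.2, fun u hu => (hsub hu).1.1, fun u hu => (hsub hu).1.2, fun u hu v hv => ?_⟩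
  have := hK.dist_le_mul v (hsub hv).2 u (hsub hu).2
  simpa [dist_eq_norm] using this

/-- The nonlinear inequality in the case of positive exponents, given the linear inequality with
constant `C₀` for centred Gaussians. -/
theorem nonlinear_core {L : ∀ j, Euc n →L[ℝ] Euc (nn j)} (hL : ∀ j, Function.Surjective (L j))
    (p : ι → ℝ) (hp : ∀ j, 0 < p j) (hdim : ∑ j, p j * (nn j : ℝ) = n) (C₀ : ℝ) (hC₀ : 0 < C₀)
    (hBL : ∀ H : ∀ j, Euc (nn j) ≃L[ℝ] Euc (nn j),
      ∫⁻ x, ∏ j, gE (H j (L j x)) ^ p j ≤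
        ENNReal.ofReal C₀ * ∏ j, (ENNReal.ofReal (dt (H j))⁻¹) ^ p j) (ε : ℝ) (hε : 0 < ε)
    (B : ∀ j, Euc n → Euc (nn j)) (x₀ : Euc n) (hB : ∀ j, ContDiffAt ℝ 2 (B j) x₀)
    (hdB : ∀ j, fderiv ℝ (B j) x₀ = L j) :
    ∃ U ∈ 𝓝 x₀, ∀ f : ∀ j, Euc (nn j) → ℝ≥0∞, (∀ j, Measurable (f j)) → (∀ j, ∫⁻ z, f j z ≠ ⊤) →
      ∫⁻ x in U, ∏ j, f j (B j x) ^ p j ≤ ENNReal.ofReal ((1 + ε) * C₀) * ∏ j, (∫⁻ z, f j z) ^ p j := by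
  obtain ⟨e, v₀, Cη, s₁, he, hv₀, hCη, hs₁, hframe⟩ :=
    uniform_frames hL p (fun j => (hp j).le) hdim C₀ hC₀ hBL (ε / 2) (by positivity)
  choose ρ κ hρ hκ hdiff hclose hlip using fun j => local_c2 (B j) x₀ (hB j) e he
  obtain ⟨ρ₀, hρ₀, hρ₀j⟩ : ∃ ρ₀ : ℝ, 0 < ρ₀ ∧ ∀ j, ρ₀ ≤ ρ j := by
    have h1 : ∀ᶠ r in 𝓝[>] (0 : ℝ), ∀ j, r ≤ ρ j := eventually_all.2 fun j =>
      mem_nhdsWithin_of_mem_nhds (Iic_mem_nhds (hρ j))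
    obtain ⟨r, hr, hr2⟩ := (h1.and self_mem_nhdsWithin).exists
    exact ⟨r, hr2, hr⟩
  have hsubρ : ∀ j, closedBall x₀ ρ₀ ⊆ closedBall x₀ (ρ j) := fun j => closedBall_subset_closedBall (hρ₀j j)
  -- the maps are cut off outside the ball of radius `ρ₀` to make them globally measurable
  set B' : ∀ j, Euc n → Euc (nn j) := fun j => (closedBall x₀ ρ₀).indicator (B j) with hB'
  have hB'eq : ∀ j, ∀ x ∈ closedBall x₀ ρ₀, B' j x = B j x := fun j x hx => Set.indicator_of_mem hx _
  have hB'm : ∀ j, Measurable (B' j) := by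
    intro j
    have hc : ContinuousOn (B j) (closedBall x₀ ρ₀) := fun u hu =>
      (hdiff j u (hsubρ j hu)).continuousAt.continuousWithinAt
    classical
    have := hc.measurable_piecewise (g := (0 : Euc n → Euc (nn j))) continuousOn_const
      (measurableSet_closedBall)
    rw [Set.piecewise_eq_indicator] at this
    exact this
  have hAL : ∀ u ∈ closedBall x₀ ρ₀, ∀ j, ‖fderiv ℝ (B j) u - L j‖ ≤ e := by
    intro u hu j
    rw [← hdB j]
    exact hclose j u (hsubρ j hu)
  have hNL : ∀ u ∈ closedBall x₀ ρ₀, ∀ x ∈ closedBall x₀ ρ₀, ∀ y ∈ closedBall x₀ ρ₀,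
      ∀ t, ‖x - u‖ ≤ t → ‖y - u‖ ≤ t → ∀ j,
        ‖B' j x - B' j y - fderiv ℝ (B j) u (x - y)‖ ≤ (∑ j, κ j) * t * ‖x - y‖ := by
    intro u hu x hx y hy t hxt hyt j
    rw [hB'eq j x hx, hB'eq j y hy]
    have ht : 0 ≤ t := (norm_nonneg _).trans hxt
    have hconv : Convex ℝ (closedBall x₀ ρ₀ ∩ closedBall u t) :=
      (convex_closedBall _ _).inter (convex_closedBall _ _)
    refine hconv.norm_image_sub_le_of_norm_hasFDerivWithin_le' (f' := fun z => fderiv ℝ (B j) z)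
      (fun z hz => (hdiff j z (hsubρ j hz.1)).hasFDerivAt.hasFDerivWithinAt) (fun z hz => ?_)
      ⟨hy, by simpa [dist_eq_norm] using hyt⟩ ⟨hx, by simpa [dist_eq_norm] using hxt⟩
    refine (hlip j u (hsubρ j hu) z (hsubρ j hz.1)).trans ?_
    have h1 : ‖z - u‖ ≤ t := by simpa [dist_eq_norm] using hz.2
    have h2 : κ j ≤ ∑ j, κ j := Finset.single_le_sum (fun i _ => hκ i) (Finset.mem_univ j)
    exact mul_le_mul h2 h1 (norm_nonneg _) ((hκ j).trans h2)
  obtain ⟨C, s₂, hC, hs₂, hgood⟩ := good_all p hp hdim e v₀ Cη s₁ ((1 + ε / 2) * C₀) hv₀ hCη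
    (by positivity) hframe B' hB'm x₀ ρ₀ (fun u j => fderiv ℝ (B j) u) hAL (∑ j, κ j)
    (Finset.sum_nonneg fun j _ => hκ j) hNL
  obtain ⟨s, hs, hsρ, hsC⟩ : ∃ s, s₂ ≤ s ∧ 4 * rexp (-16 * s) ≤ ρ₀ ∧
      (1 + ε / 2) * C₀ * rexp (C / s) ≤ (1 + ε) * C₀ := by
    have h1 : Tendsto (fun s : ℝ => 4 * rexp (-16 * s)) atTop (𝓝 (4 * 0)) := by
      refine Tendsto.const_mul _ (Real.tendsto_exp_atBot.comp ?_)
      exact tendsto_id.const_mul_atTop_of_neg (by norm_num)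
    have h2 : Tendsto (fun s : ℝ => (1 + ε / 2) * C₀ * rexp (C / s)) atTop
        (𝓝 ((1 + ε / 2) * C₀ * rexp 0)) := by
      refine Tendsto.const_mul _ ((Real.continuous_exp.tendsto 0).comp ?_)
      exact tendsto_const_nhds.div_atTop tendsto_id
    rw [mul_zero] at h1
    rw [Real.exp_zero, mul_one] at h2
    have h3 := h1.eventually (Iic_mem_nhds hρ₀)
    have h4 := h2.eventually (Iic_mem_nhds (show (1 + ε / 2) * C₀ < (1 + ε) * C₀ by nlinarith))
    obtain ⟨s, ⟨h5, h6⟩, h7⟩ := ((h3.and h4).and (eventually_ge_atTop s₂)).exists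
    exact ⟨s, h7, h5, h6⟩
  have hr : 0 < rexp (-16 * s) := Real.exp_pos _
  refine ⟨closedBall x₀ (rexp (-16 * s)), closedBall_mem_nhds _ hr, fun f hf hfi => ?_⟩
  have hsub : closedBall x₀ (rexp (-16 * s)) ⊆ closedBall x₀ ρ₀ :=
    closedBall_subset_closedBall (by linarith)
  have e1 : ∫⁻ x in closedBall x₀ (rexp (-16 * s)), ∏ j, f j (B j x) ^ p j =
      ∫⁻ x in closedBall x₀ (rexp (-16 * s)), ∏ j, f j (B' j x) ^ p j := by
    refine setLIntegral_congr_fun measurableSet_closedBall fun x hx => ?_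
    simp only [hB'eq _ x (hsub hx)]
  rw [e1]
  refine approx _ B' hB'm p hp _ ENNReal.ofReal_ne_top (fun r hr0 h hh _ hhi => ?_) f hf hfi
  have key := ((hgood s hs (r⁻¹ ^ 2) (by positivity)).mono hsC) x₀ (by simpa using hsρ)
    (fun j => smooth r (h j)) (fun j => measurable_smooth r (hh j))
    (fun j => by rw [lintegral_smooth r (hh j)]; exact hhi j)
    (fun j => (LC_smooth r hr0 (h j) (hh j)).mono (by have := Real.exp_pos (48 * s); linarith))
  simpa only [lintegral_smooth r (hh _)] using key

end NBL

/-! ### Reduction to positive exponents -/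

namespace NBL
open Filter Topology

/-- Factors with exponent zero can be dropped. -/
lemma prod_pos_part {m : ℕ} (p : Fin m → ℝ) (hp : ∀ j, 0 ≤ p j) (F : Fin m → ℝ≥0∞) :
    ∏ j, F j ^ p j = ∏ j : {j // 0 < p j}, F j.1 ^ p j.1 := by
  rw [← Finset.prod_subtype (Finset.univ.filter fun j => 0 < p j) (by simp) (fun j => F j ^ p j)]
  refine (Finset.prod_filter_of_ne fun j _ h => ?_).symm
  rcases (hp j).eq_or_lt with h0 | h0
  · rw [← h0, ENNReal.rpow_zero] at h
    exact absurd rfl h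
  · exact h0

lemma sum_pos_part {m : ℕ} (p : Fin m → ℝ) (hp : ∀ j, 0 ≤ p j) (F : Fin m → ℝ) :
    ∑ j, p j * F j = ∑ j : {j // 0 < p j}, p j.1 * F j.1 := by
  rw [← Finset.sum_subtype (Finset.univ.filter fun j => 0 < p j) (by simp) (fun j => p j * F j)]
  refine (Finset.sum_filter_of_ne fun j _ h => ?_).symm
  rcases (hp j).eq_or_lt with h0 | h0
  · rw [← h0, zero_mul] at h
    exact absurd rfl h
  · exact h0

/-- The infimum defining the Brascamp–Lieb constant is attained on inputs of positive mass; in general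
the product `BLconst * BLden` may degenerate to `⊤ * 0`. -/
lemma BLnum_le {m n : ℕ} (nn : Fin m → ℕ) (L : ∀ j, Euc n →L[ℝ] Euc (nn j)) (p : Fin m → ℝ)
    (hp : ∀ j, 0 ≤ p j) (f : ∀ j, Euc (nn j) → ℝ) (hf : ∀ j x, 0 ≤ f j x)
    (hfi : ∀ j, Integrable (f j)) (hpos : ∀ j, 0 < ∫ y, f j y) :
    BLnum nn L p f ≤ BLconst nn L p * BLden nn p f := by
  have h0 : BLden nn p f ≠ 0 := Finset.prod_ne_zero_iff.2 fun j _ => by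
    rw [ne_eq, ENNReal.rpow_eq_zero_iff]
    have : ENNReal.ofReal (∫ y, f j y) ≠ 0 := (ENNReal.ofReal_pos.2 (hpos j)).ne'
    simp [this]
  have h1 : BLden nn p f ≠ ⊤ := ENNReal.prod_ne_top fun j _ =>
    ENNReal.rpow_ne_top_of_nonneg (hp j) ENNReal.ofReal_ne_top
  rw [← ENNReal.div_le_iff h0 h1]
  exact le_sInf fun C hC => (ENNReal.div_le_iff h0 h1).2 (hC f hf hfi)

/-- The inequality defining `BLconst`, tested on centred Gaussians. -/
lemma BL_gauss {m n : ℕ} (nn : Fin m → ℕ) (L : ∀ j, Euc n →L[ℝ] Euc (nn j)) (p : Fin m → ℝ)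
    (hp : ∀ j, 0 ≤ p j) (H : ∀ j, Euc (nn j) ≃L[ℝ] Euc (nn j)) :
    ∫⁻ x, ∏ j, gE (H j (L j x)) ^ p j ≤
      BLconst nn L p * ∏ j, (ENNReal.ofReal (dt (H j))⁻¹) ^ p j := by
  set f : ∀ j, Euc (nn j) → ℝ := fun j z => rexp (-π * ‖H j z‖ ^ 2) with hf
  have hfE : ∀ j z, ENNReal.ofReal (f j z) = gE (H j z) := fun j z => by
    simp only [hf, gE, neg_mul]
  have hf0 : ∀ j x, 0 ≤ f j x := fun j x => (Real.exp_pos _).le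
  have hc : ∀ j, Continuous (f j) := fun j => by
    have := (H j).continuous
    simp only [hf]
    fun_prop
  have hl : ∀ j, ∫⁻ z, ENNReal.ofReal (f j z) = ENNReal.ofReal (dt (H j))⁻¹ := by
    intro j
    have := lintegral_gs (H j) 1 one_pos
    simpa [hfE] using this
  have hfi : ∀ j, Integrable (f j) := by
    intro j
    refine ⟨(hc j).aestronglyMeasurable, ?_⟩
    rw [hasFiniteIntegral_iff_ofReal (Eventually.of_forall (hf0 j)), hl]
    exact ENNReal.ofReal_lt_top
  have hIntg : ∀ j, ENNReal.ofReal (∫ z, f j z) = ENNReal.ofReal (dt (H j))⁻¹ := by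
    intro j
    rw [ofReal_integral_eq_lintegral_ofReal (hfi j) (Eventually.of_forall (hf0 j)), hl]
  have hpos : ∀ j, 0 < ∫ z, f j z := by
    intro j
    rw [← ENNReal.ofReal_pos, hIntg]
    exact ENNReal.ofReal_pos.2 (inv_pos.2 (dt_pos _))
  have := BLnum_le nn L p hp f hf0 hfi hpos
  unfold BLnum BLden at this
  simpa only [hIntg, hfE] using this

lemma BLconst_ne_zero {m n : ℕ} (nn : Fin m → ℕ) (L : ∀ j, Euc n →L[ℝ] Euc (nn j)) (p : Fin m → ℝ)
    (hp : ∀ j, 0 ≤ p j) : BLconst nn L p ≠ 0 := by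
  intro h
  have := BL_gauss nn L p hp (fun j => ContinuousLinearEquiv.refl ℝ _)
  rw [h, zero_mul, nonpos_iff_eq_zero, lintegral_eq_zero_iff] at this
  · obtain ⟨x, hx⟩ := this.exists
    simp only [Pi.zero_apply, Finset.prod_eq_zero_iff] at hx
    obtain ⟨j, _, hj⟩ := hx
    rw [ENNReal.rpow_eq_zero_iff] at hj
    simp [gE_ne_zero, gE_ne_top] at hj
  · refine Finset.measurable_prod _ fun j _ => Measurable.pow_const ?_ _
    exact measurable_gE.comp (L j).continuous.measurable

/-- An almost everywhere measurable function has a measurable majorant with the same integral. -/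
lemma exists_majorant {k : ℕ} (f : Euc k → ℝ≥0∞) (hf : AEMeasurable f) :
    ∃ g : Euc k → ℝ≥0∞, Measurable g ∧ (∀ x, f x ≤ g x) ∧ ∫⁻ x, g x = ∫⁻ x, f x := by
  classical
  set N := toMeasurable volume {x | ¬ f x = hf.mk f x} with hN
  have hN0 : volume N = 0 := by rw [hN, measure_toMeasurable]; exact hf.ae_eq_mk
  have hNm : MeasurableSet N := measurableSet_toMeasurable _ _
  refine ⟨N.piecewise (fun _ => ⊤) (hf.mk f), measurable_const.piecewise hNm hf.measurable_mk,
    fun x => ?_, lintegral_congr_ae ?_⟩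
  · by_cases hx : x ∈ N
    · simp [hx]
    · rw [Set.piecewise_eq_of_notMem _ _ _ hx]
      have : ¬ ¬ f x = hf.mk f x := fun h => hx (subset_toMeasurable _ _ h)
      exact (not_not.1 this).le
  · have : ∀ᵐ x, x ∉ N := measure_eq_zero_iff_ae_notMem.1 hN0
    filter_upwards [this, hf.ae_eq_mk] with x hx hx2
    rw [Set.piecewise_eq_of_notMem _ _ _ hx, hx2]

end NBL

/-- the nonlinear Brascamp–Lieb inequality for simple data. -/
theorem nonlinear_brascamp_lieb {m n : ℕ} (nn : Fin m → ℕ)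
    (L : ∀ j, Euc n →L[ℝ] Euc (nn j)) (p : Fin m → ℝ)
    (hsurj : ∀ j, Function.Surjective (L j))
    (hsimple : BLsimple nn L p)
    (ε : ℝ) (hε : 0 < ε)
    (x₀ : Euc n) (B : ∀ j, Euc n → Euc (nn j))
    (hB : ∀ j, ContDiffAt ℝ 2 (B j) x₀)
    (hdB : ∀ j, fderiv ℝ (B j) x₀ = L j) :
    ∃ U ∈ nhds x₀, ∀ f : ∀ j, Euc (nn j) → ℝ,
      (∀ j, ∀ x, 0 ≤ f j x) → (∀ j, Integrable (f j)) →
      ∫⁻ x in U, ∏ j, (ENNReal.ofReal (f j (B j x))) ^ (p j) ≤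
        ENNReal.ofReal (1 + ε) * BLconst nn L p *
          ∏ j, (ENNReal.ofReal (∫ y, f j y)) ^ (p j) := by
  obtain ⟨hp01, hdim, hIntg⟩ := hsimple
  have hp : ∀ j, 0 ≤ p j := fun j => (hp01 j).1
  have htop : BLconst nn L p ≠ ⊤ := ((interior_subset hIntg).2).ne
  have h0 := NBL.BLconst_ne_zero nn L p hp
  have hC₀ : 0 < (BLconst nn L p).toReal := ENNReal.toReal_pos h0 htop
  obtain ⟨U, hU, hmain⟩ := NBL.nonlinear_core (ι := {j // 0 < p j}) (nn := fun j => nn j.1)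
    (L := fun j => L j.1) (fun j => hsurj j.1) (fun j => p j.1) (fun j => j.2)
    (by rw [← NBL.sum_pos_part p hp (fun j => (nn j : ℝ))]; exact hdim) _ hC₀
    (fun H => by
      -- Gaussian inputs are extended by the standard Gaussian where the exponent vanishes
      have := NBL.BL_gauss nn L p hp
        (fun j => if h : 0 < p j then H ⟨j, h⟩ else ContinuousLinearEquiv.refl ℝ _)
      rw [ENNReal.ofReal_toReal htop]
      simp only [NBL.prod_pos_part p hp] at this
      have hd : ∀ j : {j // 0 < p j}, (if h : 0 < p j.1 then H ⟨j.1, h⟩ else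
          ContinuousLinearEquiv.refl ℝ (Euc (nn j.1))) = H j := fun j => dif_pos j.2
      simpa only [hd] using this) ε hε (fun j => B j.1) x₀ (fun j => hB j.1) (fun j => hdB j.1)
  refine ⟨U, hU, fun f hf hfi => ?_⟩
  choose g hgm hfg hgi using fun j => NBL.exists_majorant (fun z => ENNReal.ofReal (f j z))
    (hfi j).1.aemeasurable.ennreal_ofReal
  have hgi' : ∀ j, ∫⁻ z, g j z = ENNReal.ofReal (∫ y, f j y) := fun j => by
    rw [hgi, ofReal_integral_eq_lintegral_ofReal (hfi j) (Filter.Eventually.of_forall (hf j))]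
  have key := hmain (fun j => g j.1) (fun j => hgm j.1)
    (fun j => by rw [hgi']; exact ENNReal.ofReal_ne_top)
  rw [ENNReal.ofReal_mul (by positivity), ENNReal.ofReal_toReal htop] at key
  simp only [NBL.prod_pos_part p hp]
  simp only [hgi'] at key
  refine le_trans (lintegral_mono fun x => Finset.prod_le_prod' fun j _ => ?_) key
  exact ENNReal.rpow_le_rpow (hfg _ _) (hp _)
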